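/- Let 0 < α ≤ 1 and 0 < d < π, assume hypotheses (H_SE,α,d), and for each positive integer N let h = √(πd/(αN)). Let u ∈ C([a,b]) satisfy u(t) = g(t) + ∫_a^t k(t,s)u(s) ds for all t ∈ [a,b]. Then there exists a positive integer N₀ such that for every N ≥ N₀ the coefficient matrix I_n − V_n^SE is invertible, and there exists a constant C independent of N such that for all N ≥ N₀, max_{t∈[a,b]} |u(t) − v_N^SE(t)| ≤ C·√N·e^{−√(πdαN)}, where v_N^SE is Stenger's SE-Sinc-collocation solution. -/

import Mathlib

/-!
The substitution `t = ψ(x)` turns the equation into a Volterra equation on the real line whose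
kernel, including the Jacobian `ψ'`, continues holomorphically to the strip `|Im ζ| < d` and is
dominated there by a multiple of `σ'(Re w)`, where `σ` is the logistic function. Integrating along
horizontal rays, the corresponding Volterra operator is a contraction for the supremum norm weighted
by `exp (2 B σ(Re ζ))`, so its Neumann series defines a bounded holomorphic function `U` on the strip
that agrees with `u ∘ ψ` on the real axis (`exists_strip_solution`). The Hölder conditions on `g` and
`k` at the endpoints, together with a contour shift for the endpoint `b`, show that `U` minus the
linear interpolant of `u(a)` and `u(b)` decays like `exp (-α |Re ζ|)` (`SEData.exists_decay`).

For a function with such decay on the strip, Cauchy's formula on the strip and the partial fraction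
expansion of the cosecant express the error of the infinite Sinc interpolation series as an integral
over the two boundary lines. This gives errors of order `1 / sinh (π d / h)`, both for interpolation
(`StripDecay.norm_sub_tsum_sinc_le`) and, after an integration by parts against the oscillating
factor, for indefinite integration (`StripDecay.norm_integral_sub_tsum_le`). Cutting the series at
`|j| ≤ N` costs `exp (-α N h)` up to a factor `1/h` in the interpolation series. The choice of `h`
makes `π d / h = α N h = √(π d α N)`.

For stability, the weights `δ_m` are bounded for `m ≥ 0` and satisfy `|δ_m| ≤ 1/|m|` for `m < 0`. The
matrix `V_n` is therefore a strictly lower triangular matrix with column weights of bounded total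
mass plus an upper triangular matrix with row sums `O(h log N)`, which tends to `0`. A discrete
Grönwall inequality yields the invertibility of `I - V_n` for large `N` and a bound of the nodal
errors by the residual of the exact solution (`norm_le_of_almost_triangular`), hence nodal errors of
order `exp (-√(π d α N))`.

Finally `P_N` sees only the nodal values, at which the Nyström solution equals the solution vector
(`uNSEf_grid`). By Cauchy–Schwarz its Lebesgue constant is `O(√N)` (`exists_sum_abs_sincF_le`), and
combining this with the interpolation error of `u` (`SEData.norm_sub_PNSE_le`) gives the factor `√N`
in the final bound.
-/

namespace SincVolterra

noncomputable section

/-- The sine integral `Si(x) = ∫₀ˣ (sin τ)/τ dτ`. -/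
def Si (x : ℝ) : ℝ := ∫ τ in (0:ℝ)..x, Real.sin τ / τ

/-- The Sinc function `S(j,h)(x)`. -/
def sincF (j : ℤ) (h x : ℝ) : ℝ :=
  if x = (j : ℝ) * h then 1
  else Real.sin (Real.pi * (x - (j : ℝ) * h) / h) / (Real.pi * (x - (j : ℝ) * h) / h)

/-- `J(j,h)(x) = h (1/2 + (1/π) Si(π(x - jh)/h))`. -/
def Jfun (j : ℤ) (h x : ℝ) : ℝ :=
  h * (1/2 + (1/Real.pi) * Si (Real.pi * (x - (j : ℝ) * h) / h))

/-- The tanh (SE) transformation. -/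
def psiSE (a b x : ℝ) : ℝ := (b - a)/2 * Real.tanh (x/2) + (b + a)/2

/-- The inverse of the SE transformation. -/
def phiSE (a b t : ℝ) : ℝ := Real.log ((t - a)/(b - t))

/-- The double-exponential (DE) transformation. -/
def psiDE (a b x : ℝ) : ℝ := (b - a)/2 * Real.tanh (Real.pi/2 * Real.sinh x) + (b + a)/2

/-- The inverse of the DE transformation. -/
def phiDE (a b t : ℝ) : ℝ := Real.arsinh (1/Real.pi * Real.log ((t - a)/(b - t)))

/-- The SE transformation as a complex map. -/
def psiSEC (a b : ℝ) (z : ℂ) : ℂ :=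
  (((b : ℂ) - (a : ℂ))/2) * Complex.tanh (z/2) + ((b : ℂ) + (a : ℂ))/2

/-- The DE transformation as a complex map. -/
def psiDEC (a b : ℝ) (z : ℂ) : ℂ :=
  (((b : ℂ) - (a : ℂ))/2) * Complex.tanh (((Real.pi : ℂ))/2 * Complex.sinh z) + ((b : ℂ) + (a : ℂ))/2

/-- The strip `D_d = {ζ : |Im ζ| < d}`. -/
def Dstrip (d : ℝ) : Set ℂ := {z : ℂ | |z.im| < d}

/-- `D = ψ^SE(D_d)`. -/
def DSE (a b d : ℝ) : Set ℂ := psiSEC a b '' Dstrip d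

def omA (a b t : ℝ) : ℝ := (b - t)/(b - a)

def omB (a b t : ℝ) : ℝ := (t - a)/(b - a)

/-- The SE collocation points `t_j^SE = ψ^SE(jh)`. -/
def tSE (a b h : ℝ) (j : ℤ) : ℝ := psiSE a b ((j : ℝ) * h)

/-- The DE collocation points `t_j^DE = ψ^DE(jh)`. -/
def tDE (a b h : ℝ) (j : ℤ) : ℝ := psiDE a b ((j : ℝ) * h)

/-- `δ_m^{(-1)} = 1/2 + (1/π) Si(π m)`. -/
def deltaM (m : ℤ) : ℝ := 1/2 + (1/Real.pi) * Si (Real.pi * (m : ℝ))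

/-- `J(j,h)(φ^SE(t))`, extended continuously to `t = a` (value 0) and `t = b` (value h). -/
def JSEext (a b h : ℝ) (j : ℤ) (t : ℝ) : ℝ :=
  if t ≤ a then 0 else if b ≤ t then h else Jfun j h (phiSE a b t)

/-- `J(j,h)(φ^DE(t))`, extended continuously to `t = a` (value 0) and `t = b` (value h). -/
def JDEext (a b h : ℝ) (j : ℤ) (t : ℝ) : ℝ :=
  if t ≤ a then 0 else if b ≤ t then h else Jfun j h (phiDE a b t)

/-- The operator `V_N^SE`, with the continuous extension to `t = a, b` built in. -/
def VNSE (a b h : ℝ) (N : ℕ) (k : ℝ → ℝ → ℂ) (f : ℝ → ℂ) (t : ℝ) : ℂ :=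
  ∑ j ∈ Finset.Icc (-(N:ℤ)) (N:ℤ),
    k t (tSE a b h j) * f (tSE a b h j) * ((deriv (psiSE a b) ((j : ℝ) * h) : ℝ) : ℂ)
      * ((JSEext a b h j t : ℝ) : ℂ)

/-- The operator `V_N^DE`, with the continuous extension to `t = a, b` built in. -/
def VNDE (a b h : ℝ) (N : ℕ) (k : ℝ → ℝ → ℂ) (f : ℝ → ℂ) (t : ℝ) : ℂ :=
  ∑ j ∈ Finset.Icc (-(N:ℤ)) (N:ℤ),
    k t (tDE a b h j) * f (tDE a b h j) * ((deriv (psiDE a b) ((j : ℝ) * h) : ℝ) : ℂ)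
      * ((JDEext a b h j t : ℝ) : ℂ)

/-- The generalized SE-Sinc approximation operator `P_N^SE`. -/
def PNSE (a b h : ℝ) (N : ℕ) (f : ℝ → ℂ) (t : ℝ) : ℂ :=
  if t ≤ a then f (tSE a b h (-(N:ℤ)))
  else if b ≤ t then f (tSE a b h (N:ℤ))
  else f (tSE a b h (-(N:ℤ))) * ((omA a b t : ℝ) : ℂ) + f (tSE a b h (N:ℤ)) * ((omB a b t : ℝ) : ℂ)
    + ∑ j ∈ Finset.Icc (-(N:ℤ)) (N:ℤ),
        (f (tSE a b h j) - f (tSE a b h (-(N:ℤ))) * ((omA a b (tSE a b h j) : ℝ) : ℂ)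
          - f (tSE a b h (N:ℤ)) * ((omB a b (tSE a b h j) : ℝ) : ℂ))
          * ((sincF j h (phiSE a b t) : ℝ) : ℂ)

/-- The generalized DE-Sinc approximation operator `P_N^DE`. -/
def PNDE (a b h : ℝ) (N : ℕ) (f : ℝ → ℂ) (t : ℝ) : ℂ :=
  if t ≤ a then f (tDE a b h (-(N:ℤ)))
  else if b ≤ t then f (tDE a b h (N:ℤ))
  else f (tDE a b h (-(N:ℤ))) * ((omA a b t : ℝ) : ℂ) + f (tDE a b h (N:ℤ)) * ((omB a b t : ℝ) : ℂ)
    + ∑ j ∈ Finset.Icc (-(N:ℤ)) (N:ℤ),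
        (f (tDE a b h j) - f (tDE a b h (-(N:ℤ))) * ((omA a b (tDE a b h j) : ℝ) : ℂ)
          - f (tDE a b h (N:ℤ)) * ((omB a b (tDE a b h j) : ℝ) : ℂ))
          * ((sincF j h (phiDE a b t) : ℝ) : ℂ)

/-- `Δ_N = ω_a(t_{-N})ω_b(t_N) - ω_b(t_{-N})ω_a(t_N)`. -/
def DeltaN (a b h : ℝ) (N : ℕ) : ℝ :=
  omA a b (tSE a b h (-(N:ℤ))) * omB a b (tSE a b h (N:ℤ))
    - omB a b (tSE a b h (-(N:ℤ))) * omA a b (tSE a b h (N:ℤ))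

def betaN (a b h : ℝ) (N : ℕ) (f : ℝ → ℂ) : ℂ :=
  (f (tSE a b h (-(N:ℤ))) * ((omB a b (tSE a b h (N:ℤ)) : ℝ) : ℂ)
    - f (tSE a b h (N:ℤ)) * ((omB a b (tSE a b h (-(N:ℤ))) : ℝ) : ℂ)) / ((DeltaN a b h N : ℝ) : ℂ)

def gammaN (a b h : ℝ) (N : ℕ) (f : ℝ → ℂ) : ℂ :=
  (f (tSE a b h (N:ℤ)) * ((omA a b (tSE a b h (-(N:ℤ))) : ℝ) : ℂ)
    - f (tSE a b h (-(N:ℤ))) * ((omA a b (tSE a b h (N:ℤ)) : ℝ) : ℂ)) / ((DeltaN a b h N : ℝ) : ℂ)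

/-- The Rashidinia–Zarebnia interpolation operator `P_N^RZ`. -/
def PNRZ (a b h : ℝ) (N : ℕ) (f : ℝ → ℂ) (t : ℝ) : ℂ :=
  if t ≤ a then betaN a b h N f
  else if b ≤ t then gammaN a b h N f
  else betaN a b h N f * ((omA a b t : ℝ) : ℂ) + gammaN a b h N f * ((omB a b t : ℝ) : ℂ)
    + ∑ j ∈ Finset.Icc (-(N:ℤ)+1) ((N:ℤ)-1),
        (f (tSE a b h j) - betaN a b h N f * ((omA a b (tSE a b h j) : ℝ) : ℂ)
          - gammaN a b h N f * ((omB a b (tSE a b h j) : ℝ) : ℂ))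
          * ((sincF j h (phiSE a b t) : ℝ) : ℂ)

/-- Reindexing `Fin (2N+1)` as `{-N, …, N}`. -/
def zidx (N : ℕ) (i : Fin (2*N+1)) : ℤ := ((i : ℕ) : ℤ) - (N : ℤ)

/-- The matrix `V_n^SE`. -/
def VnSE (a b h : ℝ) (N : ℕ) (k : ℝ → ℝ → ℂ) : Matrix (Fin (2*N+1)) (Fin (2*N+1)) ℂ :=
  Matrix.of fun i j =>
    k (tSE a b h (zidx N i)) (tSE a b h (zidx N j))
      * ((deriv (psiSE a b) ((zidx N j : ℝ) * h) : ℝ) : ℂ) * ((h : ℝ) : ℂ)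
      * ((deltaM (zidx N i - zidx N j) : ℝ) : ℂ)

/-- The matrix `V_n^DE`. -/
def VnDE (a b h : ℝ) (N : ℕ) (k : ℝ → ℝ → ℂ) : Matrix (Fin (2*N+1)) (Fin (2*N+1)) ℂ :=
  Matrix.of fun i j =>
    k (tDE a b h (zidx N i)) (tDE a b h (zidx N j))
      * ((deriv (psiDE a b) ((zidx N j : ℝ) * h) : ℝ) : ℂ) * ((h : ℝ) : ℂ)
      * ((deltaM (zidx N i - zidx N j) : ℝ) : ℂ)

/-- The right-hand-side vector `g_n^SE`. -/
def gnSE (a b h : ℝ) (N : ℕ) (g : ℝ → ℂ) : Fin (2*N+1) → ℂ := fun i => g (tSE a b h (zidx N i))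

/-- The right-hand-side vector `g_n^DE`. -/
def gnDE (a b h : ℝ) (N : ℕ) (g : ℝ → ℂ) : Fin (2*N+1) → ℂ := fun i => g (tDE a b h (zidx N i))

/-- The matrix `E_n^RZ`. -/
def EnRZ (a b h : ℝ) (N : ℕ) : Matrix (Fin (2*N+1)) (Fin (2*N+1)) ℂ :=
  Matrix.of fun i j =>
    if (j : ℕ) = 0 then ((omA a b (tSE a b h (zidx N i)) : ℝ) : ℂ)
    else if (j : ℕ) = 2*N then ((omB a b (tSE a b h (zidx N i)) : ℝ) : ℂ)
    else if i = j then 1 else 0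

/-- The matrix `V_n^RZ`. -/
def VnRZ (a b h : ℝ) (N : ℕ) (k : ℝ → ℝ → ℂ) : Matrix (Fin (2*N+1)) (Fin (2*N+1)) ℂ :=
  Matrix.of fun i j =>
    if (j : ℕ) = 0 then VNSE a b h N k (fun t => ((omA a b t : ℝ) : ℂ)) (tSE a b h (zidx N i))
    else if (j : ℕ) = 2*N then VNSE a b h N k (fun t => ((omB a b t : ℝ) : ℂ)) (tSE a b h (zidx N i))
    else k (tSE a b h (zidx N i)) (tSE a b h (zidx N j))
      * ((deriv (psiSE a b) ((zidx N j : ℝ) * h) : ℝ) : ℂ) * ((h : ℝ) : ℂ)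
      * ((deltaM (zidx N i - zidx N j) : ℝ) : ℂ)

/-- The SE-Sinc-Nyström solution `u_N^SE` built from a solution vector `u` of the
linear system, with the continuous extension to the endpoints built in. -/
def uNSEf (a b h : ℝ) (N : ℕ) (k : ℝ → ℝ → ℂ) (g : ℝ → ℂ) (u : Fin (2*N+1) → ℂ) (t : ℝ) : ℂ :=
  g t + ∑ i : Fin (2*N+1),
    k t (tSE a b h (zidx N i)) * u i * ((deriv (psiSE a b) ((zidx N i : ℝ) * h) : ℝ) : ℂ)
      * ((JSEext a b h (zidx N i) t : ℝ) : ℂ)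

/-- The DE-Sinc-Nyström solution `u_N^DE` built from a solution vector `u` of the
linear system, with the continuous extension to the endpoints built in. -/
def uNDEf (a b h : ℝ) (N : ℕ) (k : ℝ → ℝ → ℂ) (g : ℝ → ℂ) (u : Fin (2*N+1) → ℂ) (t : ℝ) : ℂ :=
  g t + ∑ i : Fin (2*N+1),
    k t (tDE a b h (zidx N i)) * u i * ((deriv (psiDE a b) ((zidx N i : ℝ) * h) : ℝ) : ℂ)
      * ((JDEext a b h (zidx N i) t : ℝ) : ℂ)

/-- The Rashidinia–Zarebnia SE-Sinc-collocation solution `w_N^RZ` built from a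
coefficient vector `c`, with the continuous extension to the endpoints built in. -/
def wRZf (a b h : ℝ) (N : ℕ) (c : Fin (2*N+1) → ℂ) (t : ℝ) : ℂ :=
  if t ≤ a then c ⟨0, by omega⟩
  else if b ≤ t then c ⟨2*N, by omega⟩
  else c ⟨0, by omega⟩ * ((omA a b t : ℝ) : ℂ) + c ⟨2*N, by omega⟩ * ((omB a b t : ℝ) : ℂ)
    + ∑ j ∈ Finset.univ.filter (fun j : Fin (2*N+1) => (j : ℕ) ≠ 0 ∧ (j : ℕ) ≠ 2*N),
        c j * ((sincF (zidx N j) h (phiSE a b t) : ℝ) : ℂ)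

/-- The SE mesh size `h = √(πd/(αN))`. -/
def hstepSE (α d : ℝ) (N : ℕ) : ℝ := Real.sqrt (Real.pi * d / (α * N))

/-- The DE mesh size `h = log(2dN/α)/N`. -/
def hstepDE (α d : ℝ) (N : ℕ) : ℝ := Real.log (2*d*N/α) / N

section

/-! ### The sine integral -/

lemma Si_eq_integral_sinc (x : ℝ) : Si x = ∫ τ in (0:ℝ)..x, Real.sinc τ := by
  unfold Si
  refine intervalIntegral.integral_congr_ae ?_
  have : ∀ᵐ τ : ℝ, τ ≠ 0 := by
    simp [MeasureTheory.ae_iff, MeasureTheory.measure_singleton]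
  filter_upwards [this] with τ hτ _
  rw [Real.sinc_of_ne_zero hτ]

lemma Si_neg (x : ℝ) : Si (-x) = -Si x := by
  rw [Si_eq_integral_sinc, Si_eq_integral_sinc]
  have h := intervalIntegral.integral_comp_neg (a := 0) (b := x) Real.sinc
  simp only [Real.sinc_neg, neg_zero] at h
  rw [h, intervalIntegral.integral_symm]

lemma abs_Si_le_abs (x : ℝ) : |Si x| ≤ |x| := by
  rw [Si_eq_integral_sinc]
  have := intervalIntegral.norm_integral_le_of_norm_le_const (a := 0) (b := x) (C := 1)
    (f := Real.sinc) (fun y _ => Real.abs_sinc_le_one y)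
  simpa using this

lemma integral_sin_mul_exp (x s : ℝ) : ∫ τ in (0:ℝ)..x, Real.sin τ * Real.exp (-s * τ) =
    (1 + s ^ 2)⁻¹ - Real.exp (-s * x) * (Real.cos x + s * Real.sin x) * (1 + s ^ 2)⁻¹ := by
  have hne : (1 + s ^ 2) ≠ 0 := by positivity
  have hd : ∀ τ ∈ Set.uIcc 0 x, HasDerivAt
      (fun τ => -(Real.exp (-s * τ) * (Real.cos τ + s * Real.sin τ) * (1 + s ^ 2)⁻¹))
      (Real.sin τ * Real.exp (-s * τ)) τ := by
    intro τ _
    have h1 : HasDerivAt (fun τ => Real.exp (-s * τ)) (Real.exp (-s * τ) * (-s * 1)) τ :=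
      ((hasDerivAt_id τ).const_mul (-s)).exp
    have h2 : HasDerivAt (fun τ => Real.cos τ + s * Real.sin τ)
      (-Real.sin τ + s * Real.cos τ) τ :=
      (Real.hasDerivAt_cos τ).add ((Real.hasDerivAt_sin τ).const_mul s)
    refine ((h1.mul h2).mul_const (1 + s ^ 2)⁻¹).neg.congr_deriv ?_
    rw [← div_eq_mul_inv, neg_eq_iff_eq_neg, div_eq_iff hne]
    ring
  rw [intervalIntegral.integral_eq_sub_of_hasDerivAt hd
    (Continuous.intervalIntegrable (by fun_prop) _ _)]
  simp
  ring

lemma integral_exp_neg_mul_Ioi {τ : ℝ} (hτ : 0 < τ) :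
    ∫ s in Set.Ioi (0:ℝ), Real.exp (-s * τ) = 1 / τ := by
  have := integral_exp_mul_Ioi (a := -τ) (by simpa using hτ) 0
  simp only [mul_zero, Real.exp_zero, neg_div_neg_eq] at this
  rw [← this]
  congr 1
  funext s
  ring_nf

/-- Writing `1/τ = ∫₀^∞ e^{-sτ} ds` and exchanging the integrals gives the Dirichlet integral
together with its remainder. -/
lemma Si_eq_laplace {x : ℝ} (hx : 0 < x) : Si x = Real.pi / 2 -
    ∫ s in Set.Ioi (0:ℝ), Real.exp (-s * x) * (Real.cos x + s * Real.sin x) * (1 + s ^ 2)⁻¹ := by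
  have hinner : ∀ τ ∈ Set.Ioc 0 x, Real.sin τ / τ =
      ∫ s in Set.Ioi (0:ℝ), Real.sin τ * Real.exp (-s * τ) := by
    intro τ hτ
    rw [MeasureTheory.integral_const_mul]
    rw [integral_exp_neg_mul_Ioi hτ.1]
    ring
  have hintg : MeasureTheory.Integrable
      (Function.uncurry fun τ s : ℝ => Real.sin τ * Real.exp (-s * τ))
      ((MeasureTheory.volume.restrict (Set.Ioc 0 x)).prod
        (MeasureTheory.volume.restrict (Set.Ioi 0))) := by
    have hm : MeasureTheory.AEStronglyMeasurable
        (Function.uncurry fun τ s : ℝ => Real.sin τ * Real.exp (-s * τ))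
      ((MeasureTheory.volume.restrict (Set.Ioc 0 x)).prod
        (MeasureTheory.volume.restrict (Set.Ioi 0))) :=
      Continuous.aestronglyMeasurable (by unfold Function.uncurry; fun_prop)
    rw [MeasureTheory.integrable_prod_iff hm]
    constructor
    · refine (MeasureTheory.ae_restrict_iff' measurableSet_Ioc).2 (.of_forall fun τ hτ => ?_)
      have := (integrableOn_exp_mul_Ioi (a := -τ) (by simpa using hτ.1) 0).const_mul (Real.sin τ)
      refine this.congr (.of_forall fun s => ?_)
      simp [Function.uncurry, mul_comm]
    · have : MeasureTheory.IntegrableOn (fun τ : ℝ => |Real.sinc τ|) (Set.Ioc 0 x) :=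
        (Real.continuous_sinc.abs.integrableOn_Ioc)
      refine MeasureTheory.Integrable.congr this ?_
      refine (MeasureTheory.ae_restrict_iff' measurableSet_Ioc).2 (.of_forall fun τ hτ => ?_)
      have hτ0 : 0 < τ := hτ.1
      simp only [Function.uncurry, norm_mul, Real.norm_eq_abs, Real.abs_exp]
      rw [MeasureTheory.integral_const_mul, Real.sinc_of_ne_zero hτ0.ne', abs_div, abs_of_pos hτ0]
      rw [integral_exp_neg_mul_Ioi hτ0]
      ring
  have hswap := MeasureTheory.integral_integral_swap hintg
  unfold Si
  rw [intervalIntegral.integral_of_le hx.le, MeasureTheory.setIntegral_congr_fun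
    measurableSet_Ioc hinner, hswap]
  have h1 : ∀ s ∈ Set.Ioi (0:ℝ), (∫ τ in Set.Ioc 0 x, Real.sin τ * Real.exp (-s * τ)) =
    (1 + s ^ 2)⁻¹ - Real.exp (-s * x) * (Real.cos x + s * Real.sin x) * (1 + s ^ 2)⁻¹ := by
    intro s _
    rw [← intervalIntegral.integral_of_le hx.le, integral_sin_mul_exp]
  rw [MeasureTheory.setIntegral_congr_fun measurableSet_Ioi h1,
    MeasureTheory.integral_sub integrable_inv_one_add_sq.integrableOn, integral_Ioi_inv_one_add_sq]
  · simp
  have hi : MeasureTheory.IntegrableOn (fun s : ℝ => ∫ τ in Set.Ioc 0 x,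
      Real.sin τ * Real.exp (-s * τ)) (Set.Ioi 0) := hintg.integral_prod_right
  have := (integrable_inv_one_add_sq.integrableOn (s := Set.Ioi (0:ℝ))).sub
    (hi.congr_fun h1 measurableSet_Ioi)
  refine this.congr (.of_forall fun s => ?_)
  simp

lemma abs_Si_sub_le {x : ℝ} (hx : 0 < x) : |Si x - Real.pi / 2| ≤ 2 / x := by
  rw [Si_eq_laplace hx, sub_sub_cancel_left, abs_neg, ← Real.norm_eq_abs]
  have hI := integral_exp_mul_Ioi (a := -x) (by simpa using hx) 0
  have hb := MeasureTheory.norm_integral_le_of_norm_le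
    (μ := MeasureTheory.volume.restrict (Set.Ioi (0:ℝ)))
    (f := fun s : ℝ => Real.exp (-s * x) * (Real.cos x + s * Real.sin x) * (1 + s ^ 2)⁻¹)
    (g := fun s => 2 * Real.exp (-x * s))
    ((integrableOn_exp_mul_Ioi (a := -x) (by simpa using hx) 0).const_mul 2) ?_
  · refine hb.trans (le_of_eq ?_)
    rw [MeasureTheory.integral_const_mul, hI]
    simp
    ring
  · refine (MeasureTheory.ae_restrict_iff' measurableSet_Ioi).2 (.of_forall fun s hs => ?_)
    have hs0 : (0:ℝ) < s := hs
    have hpos : (0:ℝ) < 1 + s ^ 2 := by positivity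
    rw [norm_mul, norm_mul, Real.norm_eq_abs, Real.abs_exp, Real.norm_eq_abs, Real.norm_eq_abs,
      abs_of_pos (inv_pos.2 hpos), mul_assoc, show -s * x = -x * s by ring, mul_comm 2]
    refine mul_le_mul_of_nonneg_left ?_ (Real.exp_pos _).le
    rw [← div_eq_mul_inv, div_le_iff₀ hpos]
    have h1 := Real.abs_cos_le_one x
    have h2 := Real.abs_sin_le_one x
    calc |Real.cos x + s * Real.sin x| ≤ |Real.cos x| + s * |Real.sin x| := by
          refine (abs_add_le _ _).trans ?_
          rw [abs_mul, abs_of_pos hs0]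
      _ ≤ 1 + s * 1 := by gcongr
      _ ≤ 2 * (1 + s ^ 2) := by nlinarith [sq_nonneg (s - 1)]

lemma tendsto_Si : Filter.Tendsto Si Filter.atTop (nhds (Real.pi / 2)) := by
  rw [tendsto_iff_norm_sub_tendsto_zero]
  refine squeeze_zero' (.of_forall fun _ => norm_nonneg _) ?_
    ((tendsto_const_nhds (x := (2:ℝ))).div_atTop Filter.tendsto_id)
  filter_upwards [Filter.eventually_gt_atTop 0] with x hx
  exact abs_Si_sub_le hx

lemma abs_Si_le (x : ℝ) : |Si x| ≤ 4 := by
  have key : ∀ y : ℝ, 0 ≤ y → |Si y| ≤ 4 := by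
    intro y hy
    rcases le_or_gt y 1 with h | h
    · have := abs_Si_le_abs y
      rw [abs_of_nonneg hy] at this
      linarith
    · have h1 := abs_Si_sub_le (x := y) (by linarith)
      have h2 : 2 / y ≤ 2 := by
        rw [div_le_iff₀ (by linarith)]
        linarith
      have h3 := Real.pi_lt_four
      have h4 := Real.pi_pos
      rw [abs_le] at *
      constructor <;> linarith [h1.1, h1.2]
  rcases le_total 0 x with h | h
  · exact key x h
  · have := key (-x) (by linarith)
    rwa [Si_neg, abs_neg] at this

lemma abs_deltaM_le (m : ℤ) : |deltaM m| ≤ 2 := by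
  unfold deltaM
  have h1 := abs_Si_le (Real.pi * m)
  have h3 := Real.pi_gt_three
  have h2 : |1 / Real.pi * Si (Real.pi * m)| ≤ 4 / 3 := by
    rw [abs_mul, abs_of_pos (by positivity), one_div_mul_eq_div, div_le_div_iff₀ (by positivity)
      (by norm_num)]
    nlinarith
  rw [abs_le] at *
  constructor <;> linarith [h2.1, h2.2]

/-- The discrete Heaviside weights `δ_m` are small above the diagonal. -/
lemma abs_deltaM_neg_le {m : ℤ} (hm : m < 0) : |deltaM m| ≤ 1 / |(m : ℝ)| := by
  have hm' : (0:ℝ) < -(m : ℝ) := by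
    have : (m : ℝ) < 0 := by exact_mod_cast hm
    linarith
  have hpi := Real.pi_gt_three
  have hx : 0 < Real.pi * (-(m : ℝ)) := by positivity
  have h1 := abs_Si_sub_le hx
  have h2 : deltaM m = -(1 / Real.pi * (Si (Real.pi * (-(m : ℝ))) - Real.pi / 2)) := by
    unfold deltaM
    rw [show Real.pi * (m : ℝ) = -(Real.pi * (-(m : ℝ))) by ring, Si_neg]
    field_simp
    ring
  rw [h2, abs_neg, abs_mul, abs_of_pos (by positivity : 0 < 1 / Real.pi),
    abs_of_neg (by linarith : (m : ℝ) < 0)]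
  calc 1 / Real.pi * |Si (Real.pi * (-(m : ℝ))) - Real.pi / 2|
      ≤ 1 / Real.pi * (2 / (Real.pi * (-(m : ℝ)))) := by gcongr
    _ = (2 / Real.pi ^ 2) * (1 / (-(m : ℝ))) := by field_simp
    _ ≤ 1 * (1 / (-(m : ℝ))) := by
        gcongr
        rw [div_le_one (by positivity)]
        nlinarith
    _ = _ := one_mul _

lemma sincF_eq_sinc (j : ℤ) {h : ℝ} (hh : 0 < h) (x : ℝ) :
    sincF j h x = Real.sinc (Real.pi * (x - j * h) / h) := by
  unfold sincF
  by_cases hx : x = j * h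
  · simp [hx]
  · rw [if_neg hx, Real.sinc_of_ne_zero]
    have : x - j * h ≠ 0 := sub_ne_zero.2 hx
    have := Real.pi_pos.ne'
    positivity

lemma abs_sincF_le_one (j : ℤ) {h : ℝ} (hh : 0 < h) (x : ℝ) : |sincF j h x| ≤ 1 := by
  rw [sincF_eq_sinc j hh]
  exact Real.abs_sinc_le_one _

lemma continuous_sincF (j : ℤ) {h : ℝ} (hh : 0 < h) : Continuous (sincF j h) := by
  have : sincF j h = fun x => Real.sinc (Real.pi * (x - j * h) / h) := by
    funext x
    exact sincF_eq_sinc j hh x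
  rw [this]
  exact Real.continuous_sinc.comp (by fun_prop)

lemma integral_sincF (j : ℤ) {h : ℝ} (hh : 0 < h) (p q : ℝ) :
    ∫ x in p..q, sincF j h x = h / Real.pi *
      (Si (Real.pi * (q - j * h) / h) - Si (Real.pi * (p - j * h) / h)) := by
  have hpi := Real.pi_pos
  have h0 : ∀ x, sincF j h x = Real.sinc (Real.pi / h * x + -(Real.pi * j)) := by
    intro x
    rw [sincF_eq_sinc j hh]
    congr 1
    field_simp
    ring
  simp only [h0]
  rw [intervalIntegral.integral_comp_mul_add Real.sinc (by positivity : Real.pi / h ≠ 0),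
    Si_eq_integral_sinc, Si_eq_integral_sinc, intervalIntegral.integral_interval_sub_left
    (Real.continuous_sinc.intervalIntegrable _ _) (Real.continuous_sinc.intervalIntegrable _ _)]
  have e : ∀ y, Real.pi / h * y + -(Real.pi * j) = Real.pi * (y - j * h) / h := by
    intro y
    field_simp
    ring
  rw [e, e]
  simp

end

section

/-! ### Partial fractions of the cosecant and the sinc series of a Cauchy kernel -/

lemma summable_cauchy_diff {x z : ℂ} (hx : x ∈ Complex.integerComplement)
    (hz : z ∈ Complex.integerComplement) :
    Summable fun j : ℤ => 1 / (x - j) - 1 / (z - j) := by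
  have hb : ∀ w : ℂ, (fun j : ℤ => (w - j)⁻¹) =O[Filter.cofinite] fun n : ℤ => (n : ℝ)⁻¹ := by
    intro w
    have := (EisensteinSeries.linear_inv_isBigO_right 1 (-w)).norm_left
    rw [← Asymptotics.isBigO_norm_left]
    refine this.congr_left fun j => ?_
    rw [norm_inv, norm_inv, ← norm_neg]
    congr 2
    push_cast
    ring
  have h2 := ((hb x).mul (hb z)).const_mul_left (z - x)
  have hs : Summable fun n : ℤ => (n : ℝ)⁻¹ * (n : ℝ)⁻¹ := by
    have := (Real.summable_one_div_int_pow (p := 2)).2 (by norm_num)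
    refine this.congr fun n => ?_
    rw [one_div, pow_two, mul_inv]
  refine (summable_of_isBigO hs h2).congr fun j => ?_
  have e1 : x - j ≠ 0 := by
    simpa [sub_eq_add_neg] using Complex.integerComplement_add_ne_zero hx (-j)
  have e2 : z - j ≠ 0 := by
    simpa [sub_eq_add_neg] using Complex.integerComplement_add_ne_zero hz (-j)
  field_simp
  ring

lemma hasSum_cot_diff {x z : ℂ} (hx : x ∈ Complex.integerComplement)
    (hz : z ∈ Complex.integerComplement) :
    HasSum (fun j : ℤ => 1 / (x - j) - 1 / (z - j))
      (Real.pi * Complex.cot (Real.pi * x) - Real.pi * Complex.cot (Real.pi * z)) := by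
  have hs := summable_cauchy_diff hx hz
  have h1 := hs.hasSum.nat_add_neg
  have h2 := (hasSum_nat_add_iff' 1).2 h1
  have hterm : ∀ w ∈ Complex.integerComplement, HasSum
      (fun n : ℕ => 1 / (w - (n + 1)) + 1 / (w + (n + 1)))
      (Real.pi * Complex.cot (Real.pi * w) - 1 / w) := by
    intro w hw
    rw [cot_series_rep' hw]
    exact (summable_cotTerm hw).hasSum
  have h3 := (hterm x hx).sub (hterm z hz)
  have h4 := h2.unique (h3.congr_fun ?_)
  · have hS := hs.hasSum
    generalize (∑' j : ℤ, (1 / (x - j) - 1 / (z - j))) = S at h4 hS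
    have e : Real.pi * Complex.cot (Real.pi * x) - Real.pi * Complex.cot (Real.pi * z) = S := by
      simp at h4
      linear_combination -h4
    rw [e]
    exact hS
  · intro n
    push_cast
    ring

lemma cot_half_sub_cot {x : ℂ} (hx : x ∈ Complex.integerComplement) :
    Real.pi * Complex.cot (Real.pi * (x / 2)) - Real.pi * Complex.cot (Real.pi * x) =
      Real.pi / Complex.sin (Real.pi * x) := by
  have hs := sin_pi_mul_ne_zero hx
  obtain ⟨w, hw⟩ : ∃ w : ℂ, w = Real.pi * (x / 2) := ⟨_, rfl⟩
  have h2 : Real.pi * x = 2 * w := by rw [hw]; ring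
  rw [h2] at hs ⊢
  rw [← hw, Complex.cot, Complex.cot]
  rw [Complex.sin_two_mul] at hs ⊢
  have ha : Complex.sin w ≠ 0 := fun h => hs (by simp [h])
  have hb : Complex.cos w ≠ 0 := fun h => hs (by simp [h])
  rw [Complex.cos_two_mul]
  field_simp
  ring

/-- Difference of two cosecant expansions: the alternating sum is twice the sum over even `j`
minus the full sum, and both are cotangent expansions. -/
lemma hasSum_csc_diff {x z : ℂ} (hx : x ∈ Complex.integerComplement)
    (hz : z ∈ Complex.integerComplement) :
    HasSum (fun j : ℤ => (-1 : ℂ) ^ j * (1 / (x - j) - 1 / (z - j)))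
      (Real.pi / Complex.sin (Real.pi * x) - Real.pi / Complex.sin (Real.pi * z)) := by
  have half : ∀ w ∈ Complex.integerComplement, w / 2 ∈ Complex.integerComplement := by
    intro w hw
    rw [Complex.mem_integerComplement_iff] at hw ⊢
    rintro ⟨n, hn⟩
    refine hw ⟨2 * n, ?_⟩
    push_cast
    rw [hn]
    ring
  have hall := hasSum_cot_diff hx hz
  have heven := hasSum_cot_diff (half x hx) (half z hz)
  have heven' : HasSum (fun j : ℤ => if Even j then 2 * (1 / (x - j) - 1 / (z - j)) else 0)
      (Real.pi * Complex.cot (Real.pi * (x / 2)) - Real.pi * Complex.cot (Real.pi * (z / 2))) := by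
    have hinj : Function.Injective (fun i : ℤ => 2 * i) := fun p q h => by
      simpa using h
    rw [← hinj.hasSum_iff]
    · refine heven.congr_fun fun i => ?_
      have e1 : x / 2 - i ≠ 0 := by
        simpa [sub_eq_add_neg] using Complex.integerComplement_add_ne_zero (half x hx) (-i)
      have e2 : z / 2 - i ≠ 0 := by
        simpa [sub_eq_add_neg] using Complex.integerComplement_add_ne_zero (half z hz) (-i)
      have e3 : x - 2 * i = 2 * (x / 2 - i) := by ring
      have e4 : z - 2 * i = 2 * (z / 2 - i) := by ring
      simp only [Function.comp_apply, even_two, Even.mul_right, if_true, Int.cast_mul,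
        Int.cast_ofNat, e3, e4]
      field_simp
    · intro j hj
      rw [if_neg]
      intro hj'
      obtain ⟨r, hr⟩ := hj'
      exact hj ⟨r, by simp [hr]; ring⟩
  have e : Real.pi / Complex.sin (Real.pi * x) - Real.pi / Complex.sin (Real.pi * z) =
      (Real.pi * Complex.cot (Real.pi * (x / 2)) - Real.pi * Complex.cot (Real.pi * (z / 2))) -
      (Real.pi * Complex.cot (Real.pi * x) - Real.pi * Complex.cot (Real.pi * z)) := by
    rw [← cot_half_sub_cot hx, ← cot_half_sub_cot hz]
    ring
  rw [e]
  refine (heven'.sub hall).congr_fun fun j => ?_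
  · rcases Int.even_or_odd j with h | h
    · simp only [h.neg_one_zpow, h, if_true]
      ring
    · simp only [h.neg_one_zpow, Int.not_even_iff_odd.2 h, if_false]
      ring

lemma sincF_of_ne (j : ℤ) {h : ℝ} (hh : 0 < h) {y : ℝ} (hy : y / h - j ≠ 0) :
    (sincF j h y : ℂ) = (-1) ^ j * Complex.sin (Real.pi * ((y / h : ℝ) : ℂ)) /
      (Real.pi * (((y / h : ℝ) : ℂ) - j)) := by
  have hpi := Real.pi_pos.ne'
  have e : Real.pi * (y - j * h) / h = Real.pi * (y / h - j) := by
    field_simp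
  rw [sincF_eq_sinc j hh, e, Real.sinc_of_ne_zero (by positivity),
    show Real.pi * (y / h - j) = Real.pi * (y / h) - j * Real.pi by ring, Real.sin_sub_int_mul_pi]
  push_cast
  congr 1
  ring

lemma sincF_grid (i j : ℤ) {h : ℝ} (hh : 0 < h) : sincF j h (i * h) = if j = i then 1 else 0 := by
  rw [sincF_eq_sinc j hh]
  split_ifs with hij
  · simp [hij]
  · have e : Real.pi * (i * h - j * h) / h = (i - j : ℤ) * Real.pi := by
      push_cast
      field_simp
    rw [e, Real.sinc_of_ne_zero, Real.sin_int_mul_pi, zero_div]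
    have : ((i - j : ℤ) : ℝ) ≠ 0 := by
      exact_mod_cast sub_ne_zero.2 (Ne.symm hij)
    have := Real.pi_pos.ne'
    positivity

/-- The sinc interpolation series of the Cauchy kernel `y ↦ 1/(ζ - y)`, with its error. -/
lemma hasSum_sincF_kernel {h : ℝ} (hh : 0 < h) (y : ℝ) {ζ : ℂ} (hζ : ζ.im ≠ 0) :
    HasSum (fun j : ℤ => (sincF j h y : ℂ) / (ζ - j * h))
      (1 / (ζ - y) - Complex.sin (Real.pi * ((y / h : ℝ) : ℂ)) /
        ((ζ - y) * Complex.sin (Real.pi * (ζ / h)))) := by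
  have hh' : (h : ℂ) ≠ 0 := by exact_mod_cast hh.ne'
  have him : ∀ r : ℝ, ζ - r ≠ 0 := by
    intro r hr
    apply hζ
    have := congrArg Complex.im hr
    simpa using this
  by_cases hy : ∃ i : ℤ, y = i * h
  · obtain ⟨i, rfl⟩ := hy
    have h0 : Complex.sin (Real.pi * (((i * h / h : ℝ)) : ℂ)) = 0 := by
      rw [mul_div_cancel_right₀ _ hh.ne', mul_comm]
      push_cast
      exact Complex.sin_int_mul_pi i
    rw [h0]
    have := hasSum_single (f := fun j : ℤ => (sincF j h (i * h) : ℂ) / (ζ - j * h)) i ?_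
    · simpa [sincF_grid i i hh] using this
    · intro j hj
      simp [sincF_grid i j hh, hj]
  · have hx : ((y / h : ℝ) : ℂ) ∈ Complex.integerComplement := by
      rw [Complex.mem_integerComplement_iff]
      rintro ⟨n, hn⟩
      refine hy ⟨n, ?_⟩
      have : (n : ℝ) = y / h := by exact_mod_cast hn
      rw [this]
      field_simp
    have hz : ζ / h ∈ Complex.integerComplement := by
      rw [Complex.mem_integerComplement_iff]
      rintro ⟨n, hn⟩
      refine him (n * h) ?_
      push_cast
      rw [hn]
      field_simp
      ring
    have hs1 := sin_pi_mul_ne_zero hx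
    have hs2 := sin_pi_mul_ne_zero hz
    have hpi : (Real.pi : ℂ) ≠ 0 := by exact_mod_cast Real.pi_pos.ne'
    have hd : ζ - y ≠ 0 := him y
    have := (hasSum_csc_diff hx hz).mul_left
      (Complex.sin (Real.pi * ((y / h : ℝ) : ℂ)) / (Real.pi * (ζ - y)))
    have e : 1 / (ζ - y) - Complex.sin (Real.pi * ((y / h : ℝ) : ℂ)) /
        ((ζ - y) * Complex.sin (Real.pi * (ζ / h))) =
        Complex.sin (Real.pi * ((y / h : ℝ) : ℂ)) / (Real.pi * (ζ - y)) *
        (Real.pi / Complex.sin (Real.pi * ((y / h : ℝ) : ℂ)) -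
          Real.pi / Complex.sin (Real.pi * (ζ / h))) := by
      field_simp
    rw [e]
    refine this.congr_fun fun j => ?_
    · have e1 : y / h - j ≠ 0 := by
        intro h0
        refine hy ⟨j, ?_⟩
        have : y / h = j := by linarith
        rw [← this]
        field_simp
      have e1' : ((y / h : ℝ) : ℂ) - j ≠ 0 := by exact_mod_cast e1
      have e2 : ζ / h - j ≠ 0 := by
        simpa [sub_eq_add_neg] using Complex.integerComplement_add_ne_zero hz (-j)
      have e3 : ζ - j * h = h * (ζ / h - j) := by field_simp
      have e4 : ζ - y = h * ((ζ / h - j) - (((y / h : ℝ) : ℂ) - j)) := by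
        push_cast
        field_simp
        ring
      have e5 : (ζ / h - j) - (((y / h : ℝ) : ℂ) - j) ≠ 0 := fun h0 => hd (by rw [e4, h0, mul_zero])
      rw [sincF_of_ne j hh e1, e3, e4]
      generalize ((y / h : ℝ) : ℂ) - j = p at *
      generalize ζ / h - j = q at *
      field_simp

end

section

/-! ### Cauchy's theorem and Cauchy's formula on a strip -/

open MeasureTheory Filter Topology

lemma mem_Dstrip {d : ℝ} {z : ℂ} : z ∈ Dstrip d ↔ |z.im| < d := Iff.rfl

lemma isOpen_Dstrip (d : ℝ) : IsOpen (Dstrip d) :=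
  isOpen_lt (continuous_abs.comp Complex.continuous_im) continuous_const

lemma re_line (y v : ℝ) : ((y : ℂ) + (v : ℂ) * Complex.I).re = y := by simp

lemma im_line (y v : ℝ) : ((y : ℂ) + (v : ℂ) * Complex.I).im = v := by simp

lemma integrable_exp_neg_abs {c : ℝ} (hc : 0 < c) :
    Integrable fun y : ℝ => Real.exp (-c * |y|) := by
  have h1 : IntegrableOn (fun y : ℝ => Real.exp (-c * |y|)) (Set.Ioi 0) := by
    refine (integrableOn_exp_mul_Ioi (neg_lt_zero.2 hc) 0).congr_fun ?_ measurableSet_Ioi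
    intro y hy
    simp only [abs_of_pos (Set.mem_Ioi.1 hy)]
  have h2 : IntegrableOn (fun y : ℝ => Real.exp (-c * |y|)) (Set.Iic 0) := by
    refine (integrableOn_exp_mul_Iic hc 0).congr_fun ?_ measurableSet_Iic
    intro y hy
    simp only [abs_of_nonpos (Set.mem_Iic.1 hy)]
    ring_nf
  rw [← integrableOn_univ, ← Set.Iic_union_Ioi (a := (0 : ℝ))]
  exact h2.union h1

lemma integral_exp_neg_abs {c : ℝ} (hc : 0 < c) :
    ∫ y : ℝ, Real.exp (-c * |y|) = 2 / c := by
  have := integral_comp_abs (f := fun y => Real.exp (-c * y))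
  rw [this, integral_exp_mul_Ioi (neg_lt_zero.2 hc)]
  simp
  ring

/-- `F` is holomorphic on the strip of half-width `d` and `‖F ζ‖ ≤ A exp (-c |Re ζ|)` there. -/
structure StripDecay (d : ℝ) (F : ℂ → ℂ) (A c : ℝ) : Prop where
  diff : DifferentiableOn ℂ F (Dstrip d)
  bound : ∀ ζ ∈ Dstrip d, ‖F ζ‖ ≤ A * Real.exp (-c * |ζ.re|)

lemma continuous_line {d v : ℝ} (hv : |v| < d) {F : ℂ → ℂ} (hF : ContinuousOn F (Dstrip d)) :
    Continuous fun y : ℝ => F (y + v * Complex.I) := by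
  refine hF.comp_continuous (by fun_prop) fun y => ?_
  rw [mem_Dstrip, im_line]
  exact hv

lemma StripDecay.nonneg {d : ℝ} (hd : 0 < d) {F : ℂ → ℂ} {A c : ℝ} (hF : StripDecay d F A c) :
    0 ≤ A := by
  have := (norm_nonneg _).trans (hF.bound 0 (by simpa [mem_Dstrip] using hd))
  simpa using this

lemma StripDecay.bound_line {d : ℝ} {F : ℂ → ℂ} {A c : ℝ} (hF : StripDecay d F A c) {v : ℝ}
    (hv : |v| < d) (y : ℝ) : ‖F (y + v * Complex.I)‖ ≤ A * Real.exp (-c * |y|) := by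
  have := hF.bound (y + v * Complex.I) (by rw [mem_Dstrip, im_line]; exact hv)
  rwa [re_line] at this

lemma StripDecay.integrable_line {d : ℝ} {F : ℂ → ℂ} {A c : ℝ} (hF : StripDecay d F A c)
    (hc : 0 < c) {v : ℝ} (hv : |v| < d) : Integrable fun y : ℝ => F (y + v * Complex.I) :=
  ((integrable_exp_neg_abs hc).const_mul A).mono'
    (continuous_line hv hF.diff.continuousOn).aestronglyMeasurable
    (Eventually.of_forall fun y => hF.bound_line hv y)

/-- Shifting a horizontal contour: the two sides of a long rectangle contribute nothing in the
limit. -/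
lemma strip_shift {H : ℂ → ℂ} {v₁ v₂ : ℝ} (hv : v₁ ≤ v₂) {s : Set ℂ} (hs : s.Countable)
    (hc : ContinuousOn H {z : ℂ | v₁ ≤ z.im ∧ z.im ≤ v₂})
    (hd : ∀ z : ℂ, v₁ < z.im → z.im < v₂ → z ∉ s → DifferentiableAt ℂ H z)
    {η : ℝ → ℝ} (hη : Tendsto η atTop (𝓝 0))
    (hb : ∀ᶠ R in atTop, ∀ z : ℂ, v₁ ≤ z.im → z.im ≤ v₂ → |z.re| = R → ‖H z‖ ≤ η R) :
    Tendsto (fun R : ℝ => (∫ x in -R..R, H (x + v₁ * Complex.I)) -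
      ∫ x in -R..R, H (x + v₂ * Complex.I)) atTop (𝓝 0) := by
  have hlim : Tendsto (fun R => 2 * (η R * |v₂ - v₁|)) atTop (𝓝 0) := by
    have := (hη.mul_const |v₂ - v₁|).const_mul 2
    simpa using this
  refine squeeze_zero_norm' ?_ hlim
  filter_upwards [hb, eventually_ge_atTop 0] with R hR hR0
  have key := Complex.integral_boundary_rect_eq_zero_of_differentiable_on_off_countable H
    ⟨-R, v₁⟩ ⟨R, v₂⟩ s hs (hc.mono ?_) ?_
  · simp only at key
    have hside : ∀ r : ℝ, |r| = R →
        ‖∫ y in v₁..v₂, H (r + y * Complex.I)‖ ≤ η R * |v₂ - v₁| := by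
      intro r hr
      refine intervalIntegral.norm_integral_le_of_norm_le_const fun y hy => ?_
      rw [Set.uIoc_of_le hv] at hy
      refine hR _ ?_ ?_ ?_
      · rw [im_line]; exact hy.1.le
      · rw [im_line]; exact hy.2
      · rw [re_line]; exact hr
    have e : (∫ x in -R..R, H (x + v₁ * Complex.I)) - ∫ x in -R..R, H (x + v₂ * Complex.I) =
        Complex.I • (∫ y in v₁..v₂, H (((-R : ℝ) : ℂ) + y * Complex.I)) -
        Complex.I • ∫ y in v₁..v₂, H ((R : ℂ) + y * Complex.I) := by
      linear_combination key
    rw [e]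
    refine (norm_sub_le _ _).trans ?_
    rw [norm_smul, norm_smul, Complex.norm_I, one_mul, one_mul]
    have h1 := hside (-R) (by rw [abs_neg, abs_of_nonneg hR0])
    have h2 := hside R (abs_of_nonneg hR0)
    linarith
  · intro z hz
    rw [Complex.mem_reProdIm] at hz
    have := hz.2
    simp only at this
    rw [Set.uIcc_of_le hv] at this
    exact this
  · rintro z ⟨hz, hzs⟩
    rw [Complex.mem_reProdIm] at hz
    have := hz.2
    simp only at this
    rw [min_eq_left hv, max_eq_right hv] at this
    exact hd z this.1 this.2 hzs

lemma tendsto_exp_neg_mul_atTop {c : ℝ} (hc : 0 < c) (A : ℝ) :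
    Tendsto (fun R : ℝ => A * Real.exp (-c * R)) atTop (𝓝 0) := by
  have : Tendsto (fun R : ℝ => Real.exp (-c * R)) atTop (𝓝 0) := by
    refine Real.tendsto_exp_atBot.comp ?_
    exact tendsto_id.const_mul_atTop_of_neg (neg_lt_zero.2 hc)
  simpa using this.const_mul A

lemma StripDecay.integral_line_eq {d : ℝ} {F : ℂ → ℂ} {A c : ℝ} (hF : StripDecay d F A c)
    (hc : 0 < c) {v₁ v₂ : ℝ} (h1 : |v₁| < d) (h2 : |v₂| < d) (h12 : v₁ ≤ v₂) :
    ∫ y : ℝ, F (y + v₁ * Complex.I) = ∫ y : ℝ, F (y + v₂ * Complex.I) := by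
  have hsub : {z : ℂ | v₁ ≤ z.im ∧ z.im ≤ v₂} ⊆ Dstrip d := by
    rintro z ⟨ha, hb⟩
    rw [mem_Dstrip, abs_lt]
    exact ⟨(abs_lt.1 h1).1.trans_le ha, hb.trans_lt (abs_lt.1 h2).2⟩
  have hlim := strip_shift h12 (s := ∅) Set.countable_empty (hF.diff.continuousOn.mono hsub)
    (fun z ha hb _ => hF.diff.differentiableAt
      ((isOpen_Dstrip d).mem_nhds (hsub ⟨ha.le, hb.le⟩)))
    (tendsto_exp_neg_mul_atTop hc A)
    (Eventually.of_forall fun R z ha hb hR => by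
      rw [← hR]; exact hF.bound z (hsub ⟨ha, hb⟩))
  have hA := intervalIntegral_tendsto_integral (hF.integrable_line hc h1)
    tendsto_neg_atTop_atBot tendsto_id
  have hB := intervalIntegral_tendsto_integral (hF.integrable_line hc h2)
    tendsto_neg_atTop_atBot tendsto_id
  exact sub_eq_zero.1 (tendsto_nhds_unique (hA.sub hB) hlim)

lemma line_sub_ne {v : ℝ} (hv : v ≠ 0) (x y : ℝ) : (y : ℂ) + v * Complex.I - x ≠ 0 := by
  intro h
  have := congrArg Complex.im h
  simp at this
  exact hv this

lemma abs_le_norm_line_sub (v x y : ℝ) : |v| ≤ ‖(y : ℂ) + v * Complex.I - x‖ := by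
  have := Complex.abs_im_le_norm ((y : ℂ) + v * Complex.I - x)
  simpa using this

/-- The Cauchy kernel integrated over both boundary lines of a strip. -/
lemma tendsto_integral_cauchy {v : ℝ} (hv : 0 < v) (x : ℝ) :
    Tendsto (fun R : ℝ => (∫ y in -R..R, 1 / ((y : ℂ) + (-v : ℝ) * Complex.I - x)) -
      ∫ y in -R..R, 1 / ((y : ℂ) + v * Complex.I - x)) atTop
      (𝓝 (2 * Real.pi * Complex.I)) := by
  have hcont : ∀ w : ℝ, w ≠ 0 → Continuous fun y : ℝ => 1 / ((y : ℂ) + w * Complex.I - x) :=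
    fun w hw => continuous_const.div (by fun_prop) fun y => line_sub_ne hw x y
  have hi : Integrable fun y : ℝ => (1 + ((y - x) / v) ^ 2)⁻¹ :=
    (integrable_inv_one_add_sq.comp_div hv.ne').comp_sub_right x
  have hval : ∫ y : ℝ, (1 + ((y - x) / v) ^ 2)⁻¹ = v * Real.pi := by
    rw [integral_sub_right_eq_self (fun y : ℝ => (1 + (y / v) ^ 2)⁻¹) x,
      Measure.integral_comp_div (fun y : ℝ => (1 + y ^ 2)⁻¹) v, integral_univ_inv_one_add_sq,
      abs_of_pos hv, smul_eq_mul]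
  have hlim := intervalIntegral_tendsto_integral hi tendsto_neg_atTop_atBot tendsto_id
  rw [hval] at hlim
  have hlim2 := (((Complex.continuous_ofReal.tendsto _).comp hlim).const_mul
    (2 * Complex.I / v))
  have e : 2 * Complex.I / v * ((v * Real.pi : ℝ) : ℂ) = 2 * Real.pi * Complex.I := by
    have : (v : ℂ) ≠ 0 := by exact_mod_cast hv.ne'
    push_cast
    field_simp
  rw [e] at hlim2
  refine hlim2.congr fun R => ?_
  rw [← intervalIntegral.integral_sub
    ((hcont (-v) (by linarith)).intervalIntegrable _ _) ((hcont v hv.ne').intervalIntegrable _ _)]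
  simp only [Function.comp_apply, id_eq]
  rw [← intervalIntegral.integral_ofReal, ← intervalIntegral.integral_const_mul]
  refine intervalIntegral.integral_congr fun y _ => ?_
  have h1 := line_sub_ne (neg_ne_zero.2 hv.ne') x y
  have h2 := line_sub_ne hv.ne' x y
  have hv' : (v : ℂ) ≠ 0 := by exact_mod_cast hv.ne'
  have h3 : ((v : ℂ) ^ 2 + (y - x) ^ 2) =
      ((y : ℂ) + (-v : ℝ) * Complex.I - x) * ((y : ℂ) + v * Complex.I - x) := by
    push_cast
    linear_combination ((v : ℂ) ^ 2) * Complex.I_sq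
  have h4 : (1 + (((y : ℂ) - x) / v) ^ 2) = ((v : ℂ) ^ 2 + (y - x) ^ 2) / v ^ 2 := by
    field_simp
  push_cast
  push_cast at h1 h3
  rw [h4, h3]
  have h5 : (2 : ℂ) * Complex.I * v = ((y : ℂ) + v * Complex.I - x) - (y + -v * Complex.I - x) := by
    ring
  generalize (y : ℂ) + v * Complex.I - x = p at *
  generalize (y : ℂ) + -v * Complex.I - x = q at *
  have h6 : 1 / q - 1 / p = (p - q) / (q * p) := by field_simp
  rw [h6, ← h5, inv_div]
  field_simp

/-- Cauchy's formula on a strip. -/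
lemma StripDecay.cauchy {d : ℝ} {F : ℂ → ℂ} {A c : ℝ} (hF : StripDecay d F A c)
    (hc : 0 < c) {v : ℝ} (hv : 0 < v) (hvd : v < d) (x : ℝ) :
    2 * Real.pi * Complex.I * F x =
      (∫ y : ℝ, F (y + (-v : ℝ) * Complex.I) / ((y : ℂ) + (-v : ℝ) * Complex.I - x)) -
      ∫ y : ℝ, F (y + v * Complex.I) / ((y : ℂ) + v * Complex.I - x) := by
  have hd : 0 < d := hv.trans hvd
  have hA := hF.nonneg hd
  have hv1 : |(-v : ℝ)| < d := by rwa [abs_neg, abs_of_pos hv]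
  have hv2 : |v| < d := by rwa [abs_of_pos hv]
  have hx : (x : ℂ) ∈ Dstrip d := by simpa [mem_Dstrip] using hd
  have hsub : {z : ℂ | -v ≤ z.im ∧ z.im ≤ v} ⊆ Dstrip d := by
    rintro z ⟨ha, hb⟩
    rw [mem_Dstrip, abs_lt]
    constructor <;> linarith
  have hnx : Dstrip d ∈ 𝓝 (x : ℂ) := (isOpen_Dstrip d).mem_nhds hx
  have hlim := strip_shift (H := dslope F x) (v₁ := -v) (v₂ := v) (by linarith) (s := {(x : ℂ)})
    (Set.countable_singleton _)
    (((continuousOn_dslope hnx).2 ⟨hF.diff.continuousOn, hF.diff.differentiableAt hnx⟩).mono hsub)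
    (fun z ha hb hz => (differentiableAt_dslope_of_ne hz).2 (hF.diff.differentiableAt
      ((isOpen_Dstrip d).mem_nhds (hsub ⟨ha.le, hb.le⟩))))
    (η := fun R => 2 * A / (R - |x|)) ?_ ?_
  · have hcont : ∀ w : ℝ, w ≠ 0 → Continuous fun y : ℝ => 1 / ((y : ℂ) + w * Complex.I - x) :=
      fun w hw => continuous_const.div (by fun_prop) fun y => line_sub_ne hw x y
    have hintg : ∀ w : ℝ, w ≠ 0 → |w| < d →
        Integrable fun y : ℝ => F (y + w * Complex.I) / ((y : ℂ) + w * Complex.I - x) := by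
      intro w hw hwd
      have := (hF.integrable_line hc hwd).mul_bdd (f := fun y : ℝ => F (y + w * Complex.I))
        (g := fun y : ℝ => 1 / ((y : ℂ) + w * Complex.I - x)) (c := 1 / |w|)
        (hcont w hw).aestronglyMeasurable (Eventually.of_forall fun y => by
          rw [norm_div, norm_one]
          exact one_div_le_one_div_of_le (abs_pos.2 hw) (abs_le_norm_line_sub w x y))
      refine this.congr (Eventually.of_forall fun y => ?_)
      simp only [mul_one_div]
    have hsplit : ∀ w : ℝ, w ≠ 0 → |w| < d → ∀ R : ℝ,
        ∫ y in -R..R, dslope F x (y + w * Complex.I) =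
        (∫ y in -R..R, F (y + w * Complex.I) / ((y : ℂ) + w * Complex.I - x)) -
        F x * ∫ y in -R..R, 1 / ((y : ℂ) + w * Complex.I - x) := by
      intro w hw hwd R
      rw [← intervalIntegral.integral_const_mul, ← intervalIntegral.integral_sub
        ((hintg w hw hwd).intervalIntegrable)
        (((hcont w hw).intervalIntegrable _ _).const_mul _)]
      refine intervalIntegral.integral_congr fun y _ => ?_
      have hne := line_sub_ne hw x y
      rw [dslope_of_ne _ (sub_ne_zero.1 hne), slope_def_field]
      ring
    have hA := intervalIntegral_tendsto_integral (hintg (-v) (by linarith) hv1)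
      tendsto_neg_atTop_atBot tendsto_id
    have hB := intervalIntegral_tendsto_integral (hintg v hv.ne' hv2)
      tendsto_neg_atTop_atBot tendsto_id
    have hC := (tendsto_integral_cauchy hv x).const_mul (F x)
    have htot := (hA.sub hB).sub hC
    have := tendsto_nhds_unique (htot.congr fun R => ?_) hlim
    · linear_combination -this
    · rw [hsplit (-v) (by linarith) hv1, hsplit v hv.ne' hv2]
      simp only [id_eq]
      ring
  · have : Tendsto (fun R : ℝ => R - |x|) atTop atTop := tendsto_atTop_add_const_right _ _ tendsto_id
    exact this.const_div_atTop _
  · filter_upwards [eventually_gt_atTop |x|] with R hR z ha hb hz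
    have hFb : ∀ z ∈ Dstrip d, ‖F z‖ ≤ A := fun z hz => (hF.bound z hz).trans
      (mul_le_of_le_one_right hA (Real.exp_le_one_iff.2 (by
        have := abs_nonneg z.re
        nlinarith)))
    have hdist : R - |x| ≤ ‖z - x‖ := by
      have := Complex.abs_re_le_norm (z - x)
      have h2 := abs_sub_abs_le_abs_sub z.re x
      simp only [Complex.sub_re, Complex.ofReal_re] at this
      linarith
    have hpos : 0 < R - |x| := by linarith
    have hne : z ≠ x := by
      intro h
      rw [h, sub_self, norm_zero] at hdist
      linarith
    rw [dslope_of_ne _ hne, slope_def_field, norm_div]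
    have h1 : ‖F z - F x‖ ≤ 2 * A := by
      refine (norm_sub_le _ _).trans ?_
      have := hFb z (hsub ⟨ha, hb⟩)
      have := hFb x hx
      linarith
    gcongr

end

section

/-! ### The error of the sinc interpolation series -/

open MeasureTheory Filter Topology

lemma abs_sinh_im_le_norm_sin (z : ℂ) : |Real.sinh z.im| ≤ ‖Complex.sin z‖ := by
  have h1 : ‖Complex.exp (-z * Complex.I)‖ = Real.exp z.im := by
    rw [Complex.norm_exp]; simp
  have h2 : ‖Complex.exp (z * Complex.I)‖ = Real.exp (-z.im) := by
    rw [Complex.norm_exp]; simp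
  rw [Complex.sin, norm_div, norm_mul, Complex.norm_I, mul_one, Real.sinh_eq, abs_div]
  have := abs_norm_sub_norm_le (Complex.exp (-z * Complex.I)) (Complex.exp (z * Complex.I))
  rw [h1, h2] at this
  simp only [Complex.norm_ofNat, Nat.abs_ofNat]
  gcongr

lemma abs_sub_mul_abs_sincF_le (j : ℤ) {h : ℝ} (hh : 0 < h) (x : ℝ) :
    |x - j * h| * |sincF j h x| ≤ h := by
  by_cases hx : x = j * h
  · rw [hx]; simp [hh.le]
  · have h0 : 0 < |x - j * h| := abs_pos.2 (sub_ne_zero.2 hx)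
    rw [sincF, if_neg hx, abs_div, abs_div, abs_mul, abs_of_pos hh, abs_of_pos Real.pi_pos]
    have hs := Real.abs_sin_le_one (Real.pi * (x - j * h) / h)
    have hpi : 1 ≤ Real.pi := by linarith [Real.pi_gt_three]
    have e : |x - j * h| * (|Real.sin (Real.pi * (x - j * h) / h)| / (Real.pi * |x - j * h| / h)) =
        |Real.sin (Real.pi * (x - j * h) / h)| * h / Real.pi := by
      field_simp
    rw [e, div_le_iff₀ Real.pi_pos]
    nlinarith

lemma abs_sincF_le_div (j : ℤ) {h : ℝ} (hh : 0 < h) (x : ℝ) :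
    |sincF j h x| ≤ (1 + |x| + h) / (1 + |(j : ℝ)| * h) := by
  rw [le_div_iff₀ (by positivity)]
  have h1 := abs_sub_mul_abs_sincF_le j hh x
  have h2 := abs_sincF_le_one j hh x
  have h3 : |(j : ℝ)| * h ≤ |x| + |x - j * h| := by
    have := abs_sub_abs_le_abs_sub ((j : ℝ) * h) x
    rw [abs_mul, abs_of_pos hh, abs_sub_comm] at this
    linarith
  have h4 := abs_nonneg (sincF j h x)
  have h5 := abs_nonneg x
  nlinarith

lemma one_div_norm_line_sub_le {v : ℝ} (hv : v ≠ 0) (j : ℤ) {h : ℝ} (hh : 0 < h) (y : ℝ) :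
    1 / ‖(y : ℂ) + v * Complex.I - j * h‖ ≤ ((1 + |y|) / |v| + 1) / (1 + |(j : ℝ)| * h) := by
  have hv' := abs_pos.2 hv
  have h1 := abs_le_norm_line_sub v (j * h) y
  push_cast at h1
  have h2 := Complex.abs_re_le_norm ((y : ℂ) + v * Complex.I - j * h)
  simp at h2
  generalize hr : ‖(y : ℂ) + v * Complex.I - j * h‖ = r at *
  have hr0 : 0 < r := hv'.trans_le h1
  rw [div_le_div_iff₀ hr0 (by positivity)]
  have h3 : |(j : ℝ)| * h ≤ |y| + |y - j * h| := by
    have := abs_sub_abs_le_abs_sub ((j : ℝ) * h) y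
    rw [abs_mul, abs_of_pos hh, abs_sub_comm] at this
    linarith
  have h4 : 1 + |y| ≤ (1 + |y|) / |v| * r := by
    rw [div_mul_eq_mul_div, le_div_iff₀ hv']
    gcongr
  nlinarith

lemma summable_one_div_sq {h : ℝ} (hh : 0 < h) :
    Summable fun j : ℤ => 1 / (1 + |(j : ℝ)| * h) ^ 2 := by
  have hs := ((Real.summable_one_div_int_pow (p := 2)).2 (by norm_num)).mul_left (1 / h ^ 2)
  refine Summable.of_norm_bounded_eventually hs ?_
  have : ∀ᶠ j : ℤ in cofinite, j ≠ 0 := by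
    simpa using (Set.finite_singleton (0 : ℤ)).compl_mem_cofinite
  filter_upwards [this] with j hj
  have hj' : 0 < |(j : ℝ)| := abs_pos.2 (by exact_mod_cast hj)
  rw [Real.norm_of_nonneg (by positivity), ← sq_abs (j : ℝ), div_mul_div_comm, one_mul, ← mul_pow]
  refine one_div_le_one_div_of_le (by positivity) ?_
  gcongr
  nlinarith

lemma integrable_poly_mul_exp_neg_abs {c : ℝ} (hc : 0 < c) :
    Integrable fun y : ℝ => (1 + |y|) * Real.exp (-c * |y|) := by
  refine ((integrable_exp_neg_abs (half_pos hc)).const_mul (1 + 2 / c)).mono'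
    (by fun_prop) (Eventually.of_forall fun y => ?_)
  rw [Real.norm_of_nonneg (by positivity)]
  have e : Real.exp (-c * |y|) = Real.exp (-(c / 2) * |y|) * Real.exp (-(c / 2) * |y|) := by
    rw [← Real.exp_add]; ring_nf
  rw [e, ← mul_assoc]
  gcongr
  have h1 := Real.add_one_le_exp (c / 2 * |y|)
  have h2 : (1 + |y|) ≤ (1 + 2 / c) * Real.exp (c / 2 * |y|) := by
    have h3 : |y| = 2 / c * (c / 2 * |y|) := by field_simp
    have h4 : 0 < 2 / c := by positivity
    have h5 : 0 ≤ c / 2 * |y| := by positivity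
    calc 1 + |y| = 1 + 2 / c * (c / 2 * |y|) := by rw [← h3]
      _ ≤ (1 + 2 / c) * (c / 2 * |y| + 1) := by nlinarith
      _ ≤ _ := by gcongr
  calc (1 + |y|) * Real.exp (-(c / 2) * |y|)
      ≤ (1 + 2 / c) * Real.exp (c / 2 * |y|) * Real.exp (-(c / 2) * |y|) := by gcongr
    _ = 1 + 2 / c := by
      rw [mul_assoc, ← Real.exp_add]; simp

/-- The contribution of the line `Im ζ = v` to the sinc interpolation error at `x`. -/
def lineErr (F : ℂ → ℂ) (h v x : ℝ) : ℂ :=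
  ∫ y : ℝ, F (y + v * Complex.I) /
    (((y : ℂ) + v * Complex.I - x) * Complex.sin (Real.pi * (((y : ℂ) + v * Complex.I) / h)))

lemma im_pi_line_div {h : ℝ} (y v : ℝ) :
    ((Real.pi : ℂ) * (((y : ℂ) + v * Complex.I) / h)).im = Real.pi * v / h := by
  have e : (Real.pi : ℂ) * (((y : ℂ) + v * Complex.I) / h) =
      ((Real.pi * y / h : ℝ) : ℂ) + ((Real.pi * v / h : ℝ) : ℂ) * Complex.I := by
    push_cast; ring
  rw [e, im_line]

lemma sinh_le_norm_sin_line {h : ℝ} (y v : ℝ) :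
    |Real.sinh (Real.pi * v / h)| ≤ ‖Complex.sin (Real.pi * (((y : ℂ) + v * Complex.I) / h))‖ := by
  have := abs_sinh_im_le_norm_sin ((Real.pi : ℂ) * (((y : ℂ) + v * Complex.I) / h))
  rwa [im_pi_line_div] at this

lemma abs_sinh_pos {h : ℝ} (hh : 0 < h) {v : ℝ} (hv : v ≠ 0) :
    0 < |Real.sinh (Real.pi * v / h)| := by
  rw [abs_pos, Ne, Real.sinh_eq_zero]
  have := Real.pi_pos.ne'
  positivity

lemma sin_line_ne {h : ℝ} (hh : 0 < h) {v : ℝ} (hv : v ≠ 0) (y : ℝ) :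
    Complex.sin (Real.pi * (((y : ℂ) + v * Complex.I) / h)) ≠ 0 := by
  rw [← norm_pos_iff]
  exact (abs_sinh_pos hh hv).trans_le (sinh_le_norm_sin_line y v)

lemma continuous_lineErr_integrand {d : ℝ} {F : ℂ → ℂ} (hF : ContinuousOn F (Dstrip d))
    {h : ℝ} (hh : 0 < h) {v : ℝ} (hv : v ≠ 0) (hvd : |v| < d) :
    Continuous fun p : ℝ × ℝ => F (p.2 + v * Complex.I) /
      (((p.2 : ℂ) + v * Complex.I - p.1) *
        Complex.sin (Real.pi * (((p.2 : ℂ) + v * Complex.I) / h))) := by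
  refine Continuous.div ((continuous_line hvd hF).comp continuous_snd) (by fun_prop) fun p => ?_
  exact mul_ne_zero (line_sub_ne hv _ _) (sin_line_ne hh hv _)

lemma StripDecay.norm_lineErr_integrand {d : ℝ} {F : ℂ → ℂ} {A c : ℝ} (hF : StripDecay d F A c)
    {h : ℝ} (hh : 0 < h) {v : ℝ} (hv : v ≠ 0) (hvd : |v| < d) (x y : ℝ) :
    ‖F (y + v * Complex.I) / (((y : ℂ) + v * Complex.I - x) *
      Complex.sin (Real.pi * (((y : ℂ) + v * Complex.I) / h)))‖ ≤
      A / (|v| * |Real.sinh (Real.pi * v / h)|) * Real.exp (-c * |y|) := by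
  have h1 := abs_sinh_pos hh hv
  have h2 := abs_pos.2 hv
  have h3 := hF.bound_line hvd y
  rw [norm_div, norm_mul, div_mul_eq_mul_div]
  have h4 := sinh_le_norm_sin_line (h := h) y v
  have h5 := abs_le_norm_line_sub v x y
  have h6 := (norm_nonneg _).trans h3
  gcongr

lemma StripDecay.norm_lineErr_le {d : ℝ} {F : ℂ → ℂ} {A c : ℝ} (hF : StripDecay d F A c)
    (hc : 0 < c) {h : ℝ} (hh : 0 < h) {v : ℝ} (hv : v ≠ 0) (hvd : |v| < d) (x : ℝ) :
    ‖lineErr F h v x‖ ≤ A / (|v| * |Real.sinh (Real.pi * v / h)|) * (2 / c) := by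
  rw [← integral_exp_neg_abs hc, ← integral_const_mul]
  exact norm_integral_le_of_norm_le ((integrable_exp_neg_abs hc).const_mul _)
    (Eventually.of_forall fun y => hF.norm_lineErr_integrand hh hv hvd x y)

lemma StripDecay.integrable_cauchy {d : ℝ} {F : ℂ → ℂ} {A c : ℝ} (hF : StripDecay d F A c)
    (hc : 0 < c) {v : ℝ} (hv : v ≠ 0) (hvd : |v| < d) (x : ℝ) :
    Integrable fun y : ℝ => F (y + v * Complex.I) / ((y : ℂ) + v * Complex.I - x) := by
  refine ((integrable_exp_neg_abs hc).const_mul (A / |v|)).mono' ?_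
    (Eventually.of_forall fun y => ?_)
  · exact ((continuous_line hvd hF.diff.continuousOn).div (by fun_prop)
      fun y => line_sub_ne hv x y).aestronglyMeasurable
  · have h2 := abs_pos.2 hv
    have h3 := hF.bound_line hvd y
    have h5 := abs_le_norm_line_sub v x y
    have h6 := (norm_nonneg _).trans h3
    rw [norm_div, div_mul_eq_mul_div]
    gcongr

lemma StripDecay.integrable_lineErr {d : ℝ} {F : ℂ → ℂ} {A c : ℝ} (hF : StripDecay d F A c)
    (hc : 0 < c) {h : ℝ} (hh : 0 < h) {v : ℝ} (hv : v ≠ 0) (hvd : |v| < d) (x : ℝ) :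
    Integrable fun y : ℝ => F (y + v * Complex.I) / (((y : ℂ) + v * Complex.I - x) *
      Complex.sin (Real.pi * (((y : ℂ) + v * Complex.I) / h))) :=
  ((integrable_exp_neg_abs hc).const_mul _).mono'
    ((continuous_lineErr_integrand hF.diff.continuousOn hh hv hvd).comp
      (Continuous.prodMk_right x)).aestronglyMeasurable
    (Eventually.of_forall fun y => hF.norm_lineErr_integrand hh hv hvd x y)

/-- The expansion `hasSum_sincF_kernel` of the Cauchy kernel, integrated term by term against `F`
over the line `Im ζ = v`. -/
lemma StripDecay.hasSum_line {d : ℝ} {F : ℂ → ℂ} {A c : ℝ} (hF : StripDecay d F A c)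
    (hc : 0 < c) {h : ℝ} (hh : 0 < h) {v : ℝ} (hv : v ≠ 0) (hvd : |v| < d) (x : ℝ) :
    HasSum (fun j : ℤ => (sincF j h x : ℂ) *
        ∫ y : ℝ, F (y + v * Complex.I) / ((y : ℂ) + v * Complex.I - (j * h : ℝ)))
      ((∫ y : ℝ, F (y + v * Complex.I) / ((y : ℂ) + v * Complex.I - x)) -
        Complex.sin (Real.pi * ((x / h : ℝ) : ℂ)) * lineErr F h v x) := by
  have hA := hF.nonneg ((abs_nonneg v).trans_lt hvd)
  have hv' := abs_pos.2 hv
  set f : ℤ → ℝ → ℂ := fun j y =>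
    (sincF j h x : ℂ) * (F (y + v * Complex.I) / ((y : ℂ) + v * Complex.I - (j * h : ℝ))) with hf
  have hi : ∀ j, Integrable (f j) := fun j =>
    (hF.integrable_cauchy hc hv hvd (j * h)).const_mul _
  have hbound : ∀ j y, ‖f j y‖ ≤ (1 + |x| + h) / (1 + |(j : ℝ)| * h) ^ 2 *
      (A * (1 / |v| + 1)) * ((1 + |y|) * Real.exp (-c * |y|)) := by
    intro j y
    have h1 := abs_sincF_le_div j hh x
    have h2 := one_div_norm_line_sub_le hv j hh y
    have h3 := hF.bound_line hvd y
    have h4 : (1 + |y|) / |v| + 1 ≤ (1 / |v| + 1) * (1 + |y|) := by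
      have := abs_nonneg y
      rw [add_mul, one_div_mul_eq_div]
      linarith
    simp only [hf, norm_mul, norm_div, Complex.norm_real, Real.norm_eq_abs]
    have e : ((j * h : ℝ) : ℂ) = j * h := by push_cast; rfl
    rw [e, div_eq_mul_one_div]
    calc |sincF j h x| * (‖F (y + v * Complex.I)‖ * (1 / ‖(y : ℂ) + v * Complex.I - j * h‖))
        ≤ (1 + |x| + h) / (1 + |(j : ℝ)| * h) * ((A * Real.exp (-c * |y|)) *
          (((1 / |v| + 1) * (1 + |y|)) / (1 + |(j : ℝ)| * h))) := by
          have h5 : 1 / ‖(y : ℂ) + v * Complex.I - j * h‖ ≤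
            ((1 / |v| + 1) * (1 + |y|)) / (1 + |(j : ℝ)| * h) := h2.trans (by gcongr)
          gcongr
      _ = _ := by
          generalize 1 + |(j : ℝ)| * h = q
          rw [sq, ← div_div]
          ring
  have hs : Summable fun j => ∫ y, ‖f j y‖ := by
    have hs1 := (summable_one_div_sq hh).mul_left ((1 + |x| + h) * (A * (1 / |v| + 1)) *
      ∫ y : ℝ, (1 + |y|) * Real.exp (-c * |y|))
    refine Summable.of_nonneg_of_le (fun j => integral_nonneg fun y => norm_nonneg _)
      (fun j => ?_) hs1
    calc ∫ y, ‖f j y‖ ≤ ∫ y : ℝ, (1 + |x| + h) / (1 + |(j : ℝ)| * h) ^ 2 *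
      (A * (1 / |v| + 1)) * ((1 + |y|) * Real.exp (-c * |y|)) :=
          integral_mono (hi j).norm ((integrable_poly_mul_exp_neg_abs hc).const_mul _)
            (hbound j)
      _ = _ := by rw [integral_const_mul]; ring
  have key := hasSum_integral_of_summable_integral_norm hi hs
  have e1 : (∫ y, ∑' j, f j y) =
      (∫ y : ℝ, F (y + v * Complex.I) / ((y : ℂ) + v * Complex.I - x)) -
        Complex.sin (Real.pi * ((x / h : ℝ) : ℂ)) * lineErr F h v x := by
    rw [lineErr, ← integral_const_mul, ← integral_sub (hF.integrable_cauchy hc hv hvd x)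
      ((hF.integrable_lineErr hc hh hv hvd x).const_mul _)]
    refine integral_congr_ae (Eventually.of_forall fun y => ?_)
    have := (hasSum_sincF_kernel hh x (ζ := (y : ℂ) + v * Complex.I)
      (by rw [im_line]; exact hv)).mul_left (F (y + v * Complex.I))
    have h2 : HasSum (fun j => f j y) _ := this.congr_fun fun j => by
      simp only [hf]
      push_cast
      ring
    simp only
    rw [h2.tsum_eq]
    ring
  rw [e1] at key
  refine key.congr_fun fun j => ?_
  simp only [hf]
  rw [integral_const_mul]

/-- The error of the sinc interpolation series at `x`, as an integral over the boundary lines of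
a strip of half-width `v`. -/
def sincErr (F : ℂ → ℂ) (h v x : ℝ) : ℂ :=
  Complex.sin (Real.pi * ((x / h : ℝ) : ℂ)) / (2 * Real.pi * Complex.I) *
    (lineErr F h (-v) x - lineErr F h v x)

lemma StripDecay.hasSum_sinc {d : ℝ} {F : ℂ → ℂ} {A c : ℝ} (hF : StripDecay d F A c)
    (hc : 0 < c) {h : ℝ} (hh : 0 < h) {v : ℝ} (hv : 0 < v) (hvd : v < d) (x : ℝ) :
    HasSum (fun j : ℤ => F (j * h : ℝ) * (sincF j h x : ℂ)) (F x - sincErr F h v x) := by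
  have h1 := hF.hasSum_line hc hh (neg_ne_zero.2 hv.ne') (by rwa [abs_neg, abs_of_pos hv]) x
  have h2 := hF.hasSum_line hc hh hv.ne' (by rwa [abs_of_pos hv]) x
  have h3 := (h1.sub h2).mul_left (1 / (2 * Real.pi * Complex.I))
  have hpi : (2 * Real.pi * Complex.I : ℂ) ≠ 0 := Complex.two_pi_I_ne_zero
  have e : F x - sincErr F h v x = 1 / (2 * Real.pi * Complex.I) * ((∫ y : ℝ, F (y + (-v : ℝ) * Complex.I) / ((y : ℂ) + (-v : ℝ) * Complex.I - x)) -
        Complex.sin (Real.pi * ((x / h : ℝ) : ℂ)) * lineErr F h (-v) x -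
      ((∫ y : ℝ, F (y + v * Complex.I) / ((y : ℂ) + v * Complex.I - x)) -
        Complex.sin (Real.pi * ((x / h : ℝ) : ℂ)) * lineErr F h v x)) := by
    have := hF.cauchy hc hv hvd x
    rw [sincErr]
    generalize (∫ y : ℝ, F (y + (-v : ℝ) * Complex.I) / ((y : ℂ) + (-v : ℝ) * Complex.I - x)) = P
      at this ⊢
    generalize (∫ y : ℝ, F (y + v * Complex.I) / ((y : ℂ) + v * Complex.I - x)) = Q at this ⊢
    field_simp
    linear_combination this
  rw [e]
  refine h3.congr_fun fun j => ?_
  have := hF.cauchy hc hv hvd (j * h)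
  rw [← mul_sub, ← this]
  field_simp

lemma StripDecay.norm_sincErr_le {d : ℝ} {F : ℂ → ℂ} {A c : ℝ} (hF : StripDecay d F A c)
    (hc : 0 < c) {h : ℝ} (hh : 0 < h) {v : ℝ} (hv : 0 < v) (hvd : v < d) (x : ℝ) :
    ‖sincErr F h v x‖ ≤ 2 * A / (Real.pi * c * (v * Real.sinh (Real.pi * v / h))) := by
  have h1 := hF.norm_lineErr_le hc hh (neg_ne_zero.2 hv.ne') (by rwa [abs_neg, abs_of_pos hv]) x
  have h2 := hF.norm_lineErr_le hc hh hv.ne' (by rwa [abs_of_pos hv]) x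
  have hsp : 0 < Real.sinh (Real.pi * v / h) := Real.sinh_pos_iff.2 (by positivity)
  rw [mul_neg, neg_div, Real.sinh_neg, abs_neg, abs_neg, abs_of_pos hv, abs_of_pos hsp] at h1
  rw [abs_of_pos hv, abs_of_pos hsp] at h2
  have hs : ‖Complex.sin (Real.pi * ((x / h : ℝ) : ℂ))‖ ≤ 1 := by
    rw [← Complex.ofReal_mul, ← Complex.ofReal_sin, Complex.norm_real]
    exact Real.abs_sin_le_one _
  rw [sincErr, norm_mul, norm_div]
  have hn : ‖(2 * Real.pi * Complex.I : ℂ)‖ = 2 * Real.pi := by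
    simp [abs_of_pos Real.pi_pos]
  rw [hn]
  have hpi := Real.pi_pos
  calc _ ≤ 1 / (2 * Real.pi) * (A / (v * Real.sinh (Real.pi * v / h)) * (2 / c) +
        A / (v * Real.sinh (Real.pi * v / h)) * (2 / c)) := by
        gcongr
        exact (norm_sub_le _ _).trans (add_le_add h1 h2)
    _ = _ := by field_simp; ring

/-- Letting `v → d` in a bound that holds for every smaller half-width. -/
lemma le_of_forall_halfwidth {d h E B : ℝ} (hd : 0 < d) (hh : 0 < h)
    (H : ∀ v, 0 < v → v < d → E ≤ B / (v * Real.sinh (Real.pi * v / h))) :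
    E ≤ B / (d * Real.sinh (Real.pi * d / h)) := by
  have hsp : 0 < Real.sinh (Real.pi * d / h) := Real.sinh_pos_iff.2 (by have := Real.pi_pos; positivity)
  have hc : ContinuousAt (fun v : ℝ => B / (v * Real.sinh (Real.pi * v / h))) d := by
    refine ContinuousAt.div continuousAt_const ?_ (by positivity)
    have := Real.continuous_sinh
    fun_prop
  have ht : Tendsto (fun v : ℝ => B / (v * Real.sinh (Real.pi * v / h))) (𝓝[<] d)
      (𝓝 (B / (d * Real.sinh (Real.pi * d / h)))) := hc.tendsto.mono_left nhdsWithin_le_nhds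
  refine ge_of_tendsto ht ?_
  have h1 : ∀ᶠ v in 𝓝[<] d, 0 < v := nhdsWithin_le_nhds (lt_mem_nhds hd)
  filter_upwards [h1, self_mem_nhdsWithin] with v hv hvd
  exact H v hv hvd

/-- Sinc interpolation is exponentially accurate for functions decaying on the strip. -/
lemma StripDecay.norm_sub_tsum_sinc_le {d : ℝ} {F : ℂ → ℂ} {A c : ℝ} (hF : StripDecay d F A c)
    (hd : 0 < d) (hc : 0 < c) {h : ℝ} (hh : 0 < h) (x : ℝ) :
    ‖F x - ∑' j : ℤ, F (j * h : ℝ) * (sincF j h x : ℂ)‖ ≤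
      2 * A / (Real.pi * c) / (d * Real.sinh (Real.pi * d / h)) := by
  refine le_of_forall_halfwidth hd hh fun v hv hvd => ?_
  rw [(hF.hasSum_sinc hc hh hv hvd x).tsum_eq, sub_sub_cancel, div_div]
  exact hF.norm_sincErr_le hc hh hv hvd x

end

section

/-! ### The error of sinc indefinite integration -/

open MeasureTheory Filter Topology

/-- Integration by parts shows that the oscillating integral of `sin (π y / h) / (ζ - y)` is `O(h)`,
uniformly in the endpoints. -/
lemma norm_integral_sin_div_le {h : ℝ} (hh : 0 < h) {v : ℝ} (hv : v ≠ 0) (η : ℝ) {p x : ℝ}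
    (hpx : p ≤ x) :
    ‖∫ y in p..x, Complex.sin (Real.pi * ((y / h : ℝ) : ℂ)) / ((η : ℂ) + v * Complex.I - y)‖ ≤
      h / Real.pi * ((2 + Real.pi) / |v|) := by
  have hv' := abs_pos.2 hv
  have hpi := Real.pi_pos
  have hpi' : (Real.pi : ℂ) ≠ 0 := by exact_mod_cast hpi.ne'
  have hh' : (h : ℂ) ≠ 0 := by exact_mod_cast hh.ne'
  set ζ : ℂ := (η : ℂ) + v * Complex.I with hζ
  have hne : ∀ y : ℝ, ζ - y ≠ 0 := fun y => line_sub_ne hv y η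
  have hge : ∀ y : ℝ, |v| ≤ ‖ζ - y‖ := fun y => abs_le_norm_line_sub v y η
  have hu : ∀ y : ℝ, HasDerivAt (fun y : ℝ => (ζ - y)⁻¹) (((ζ - y) ^ 2)⁻¹) y := by
    intro y
    have h1 : HasDerivAt (fun y : ℝ => ζ - (y : ℂ)) (-1) y := by
      simpa using (Complex.ofRealCLM.hasDerivAt (x := y)).const_sub ζ
    have := h1.inv (hne y)
    refine this.congr_deriv ?_
    rw [neg_neg, one_div]
  have hw : ∀ y : ℝ, HasDerivAt
      (fun y : ℝ => ((-(h / Real.pi) * Real.cos (Real.pi * (y / h)) : ℝ) : ℂ))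
      (Complex.sin (Real.pi * ((y / h : ℝ) : ℂ))) y := by
    intro y
    have h1 : HasDerivAt (fun y : ℝ => Real.pi * (y / h)) (Real.pi * (1 / h)) y :=
      ((hasDerivAt_id y).div_const h).const_mul _
    have h2 := (h1.cos.const_mul (-(h / Real.pi))).ofReal_comp
    refine h2.congr_deriv ?_
    rw [← Complex.ofReal_mul, ← Complex.ofReal_sin]
    congr 1
    field_simp
  have hcu : Continuous fun y : ℝ => ((ζ - y) ^ 2)⁻¹ :=
    (by fun_prop : Continuous fun y : ℝ => (ζ - y) ^ 2).inv₀ fun y => pow_ne_zero _ (hne y)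
  have hparts := intervalIntegral.integral_mul_deriv_eq_deriv_mul (a := p) (b := x)
    (fun y _ => hu y) (fun y _ => hw y) (hcu.intervalIntegrable _ _)
    ((by fun_prop : Continuous fun y : ℝ => Complex.sin (Real.pi * ((y / h : ℝ) : ℂ))).intervalIntegrable _ _)
  have hcos : ∀ y : ℝ, ‖((-(h / Real.pi) * Real.cos (Real.pi * (y / h)) : ℝ) : ℂ)‖ ≤ h / Real.pi := by
    intro y
    rw [Complex.norm_real, norm_mul, norm_neg, Real.norm_of_nonneg (by positivity)]
    exact mul_le_of_le_one_right (by positivity) (Real.abs_cos_le_one _)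
  have hbd : ∀ y : ℝ, ‖(ζ - y)⁻¹‖ ≤ 1 / |v| := fun y => by
    rw [norm_inv, ← one_div]
    exact one_div_le_one_div_of_le hv' (hge y)
  have hi : Integrable fun y : ℝ => (1 + ((y - η) / |v|) ^ 2)⁻¹ :=
    (integrable_inv_one_add_sq.comp_div hv'.ne').comp_sub_right η
  have hval : ∫ y : ℝ, (1 + ((y - η) / |v|) ^ 2)⁻¹ = |v| * Real.pi := by
    rw [integral_sub_right_eq_self (fun y : ℝ => (1 + (y / |v|) ^ 2)⁻¹) η,
      Measure.integral_comp_div (fun y : ℝ => (1 + y ^ 2)⁻¹) |v|, integral_univ_inv_one_add_sq,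
      abs_abs, smul_eq_mul]
  have hsq : ∀ y : ℝ, ‖((ζ - y) ^ 2)⁻¹‖ = 1 / |v| ^ 2 * (1 + ((y - η) / |v|) ^ 2)⁻¹ := by
    intro y
    have : ‖ζ - y‖ ^ 2 = (y - η) ^ 2 + |v| ^ 2 := by
      rw [Complex.sq_norm, Complex.normSq_apply, hζ]
      simp
      ring_nf
    rw [norm_inv, norm_pow, this]
    field_simp
    ring
  have hintg : ‖∫ y in p..x, ((ζ - y) ^ 2)⁻¹ *
      ((-(h / Real.pi) * Real.cos (Real.pi * (y / h)) : ℝ) : ℂ)‖ ≤ h / Real.pi * (Real.pi / |v|) := by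
    have h1 : ∀ y : ℝ, ‖((ζ - y) ^ 2)⁻¹ * ((-(h / Real.pi) * Real.cos (Real.pi * (y / h)) : ℝ) : ℂ)‖
        ≤ (h / Real.pi * (1 / |v| ^ 2)) * (1 + ((y - η) / |v|) ^ 2)⁻¹ := by
      intro y
      rw [norm_mul, hsq]
      calc _ ≤ 1 / |v| ^ 2 * (1 + ((y - η) / |v|) ^ 2)⁻¹ * (h / Real.pi) := by
            gcongr
            exact hcos y
        _ = _ := by ring
    rw [intervalIntegral.integral_of_le hpx]
    refine (norm_integral_le_of_norm_le (hi.const_mul _).integrableOn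
      (Eventually.of_forall h1)).trans ?_
    refine (setIntegral_le_integral (hi.const_mul _) (Eventually.of_forall fun y => ?_)).trans ?_
    · simp only [Pi.zero_apply]
      positivity
    · rw [integral_const_mul, hval]
      apply le_of_eq
      field_simp
  have e : ∀ y : ℝ, Complex.sin (Real.pi * ((y / h : ℝ) : ℂ)) / (ζ - y) =
      (ζ - y)⁻¹ * Complex.sin (Real.pi * ((y / h : ℝ) : ℂ)) := fun y => by
    rw [div_eq_mul_inv, mul_comm]
  simp_rw [e]
  rw [hparts]
  have hend : ∀ y : ℝ, ‖(ζ - y)⁻¹ * ((-(h / Real.pi) * Real.cos (Real.pi * (y / h)) : ℝ) : ℂ)‖ ≤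
      1 / |v| * (h / Real.pi) := fun y => by
    rw [norm_mul]
    gcongr
    · exact hbd y
    · exact hcos y
  calc _ ≤ 1 / |v| * (h / Real.pi) + 1 / |v| * (h / Real.pi) + h / Real.pi * (Real.pi / |v|) :=
        (norm_sub_le _ _).trans (add_le_add ((norm_sub_le _ _).trans
          (add_le_add (hend x) (hend p))) hintg)
    _ = _ := by ring

lemma StripDecay.norm_integral_lineErr_le {d : ℝ} {F : ℂ → ℂ} {A c : ℝ} (hF : StripDecay d F A c)
    (hc : 0 < c) {h : ℝ} (hh : 0 < h) {v : ℝ} (hv : v ≠ 0) (hvd : |v| < d) {p x : ℝ}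
    (hpx : p ≤ x) :
    IntervalIntegrable (fun y : ℝ => Complex.sin (Real.pi * ((y / h : ℝ) : ℂ)) * lineErr F h v y)
      volume p x ∧
    ‖∫ y in p..x, Complex.sin (Real.pi * ((y / h : ℝ) : ℂ)) * lineErr F h v y‖ ≤
      2 * A * h * (2 + Real.pi) / (c * Real.pi) / (|v| * |Real.sinh (Real.pi * v / h)|) := by
  have hv' := abs_pos.2 hv
  have hpi := Real.pi_pos
  have hsp := abs_sinh_pos hh hv
  set f : ℝ → ℝ → ℂ := fun y η => Complex.sin (Real.pi * ((y / h : ℝ) : ℂ)) *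
    (F (η + v * Complex.I) / (((η : ℂ) + v * Complex.I - y) *
      Complex.sin (Real.pi * (((η : ℂ) + v * Complex.I) / h)))) with hf
  have hcont : Continuous (Function.uncurry f) :=
    (by fun_prop : Continuous fun q : ℝ × ℝ => Complex.sin (Real.pi * ((q.1 / h : ℝ) : ℂ))).mul
      (continuous_lineErr_integrand hF.diff.continuousOn hh hv hvd)
  have hi : Integrable (Function.uncurry f) ((volume.restrict (Set.Ioc p x)).prod volume) := by
    refine (((integrable_exp_neg_abs hc).const_mul
      (A / (|v| * |Real.sinh (Real.pi * v / h)|))).comp_snd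
      (volume.restrict (Set.Ioc p x))).mono' hcont.aestronglyMeasurable
      (Eventually.of_forall fun q => ?_)
    simp only [Function.uncurry, hf, norm_mul]
    refine (mul_le_of_le_one_left (norm_nonneg _) ?_).trans
      (hF.norm_lineErr_integrand hh hv hvd q.1 q.2)
    rw [← Complex.ofReal_mul, ← Complex.ofReal_sin, Complex.norm_real]
    exact Real.abs_sin_le_one _
  have hle : ∀ y : ℝ, ∫ η, f y η = Complex.sin (Real.pi * ((y / h : ℝ) : ℂ)) * lineErr F h v y := by
    intro y
    rw [lineErr, ← integral_const_mul]
  constructor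
  · rw [intervalIntegrable_iff_integrableOn_Ioc_of_le hpx]
    have := hi.integral_prod_left
    refine Integrable.congr this (Eventually.of_forall fun y => ?_)
    exact hle y
  · rw [intervalIntegral.integral_of_le hpx]
    simp_rw [← hle]
    rw [integral_integral_swap hi]
    have hb : ∀ η : ℝ, ‖∫ y in Set.Ioc p x, f y η‖ ≤
        A * (h / Real.pi * ((2 + Real.pi) / |v|)) / |Real.sinh (Real.pi * v / h)| *
          Real.exp (-c * |η|) := by
      intro η
      have e : ∀ y : ℝ, f y η = F (η + v * Complex.I) /
          Complex.sin (Real.pi * (((η : ℂ) + v * Complex.I) / h)) *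
          (Complex.sin (Real.pi * ((y / h : ℝ) : ℂ)) / ((η : ℂ) + v * Complex.I - y)) := by
        intro y
        have h1 := line_sub_ne hv y η
        have h2 := sin_line_ne hh hv η
        simp only [hf]
        generalize Complex.sin (Real.pi * (((η : ℂ) + v * Complex.I) / h)) = q at *
        field_simp
      simp_rw [e]
      rw [integral_const_mul, ← intervalIntegral.integral_of_le hpx, norm_mul, norm_div]
      have h1 := norm_integral_sin_div_le hh hv η hpx
      have h2 := hF.bound_line hvd η
      have h3 := sinh_le_norm_sin_line (h := h) η v
      have h4 := (norm_nonneg _).trans h2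
      calc _ ≤ (A * Real.exp (-c * |η|)) / |Real.sinh (Real.pi * v / h)| *
            (h / Real.pi * ((2 + Real.pi) / |v|)) := by gcongr
        _ = _ := by ring
    refine (norm_integral_le_of_norm_le ((integrable_exp_neg_abs hc).const_mul _)
      (Eventually.of_forall hb)).trans ?_
    rw [integral_const_mul, integral_exp_neg_abs hc]
    apply le_of_eq
    field_simp

lemma StripDecay.norm_integral_sincErr_le {d : ℝ} {F : ℂ → ℂ} {A c : ℝ} (hF : StripDecay d F A c)
    (hc : 0 < c) {h : ℝ} (hh : 0 < h) {v : ℝ} (hv : 0 < v) (hvd : v < d) {p x : ℝ}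
    (hpx : p ≤ x) :
    IntervalIntegrable (sincErr F h v) volume p x ∧
    ‖∫ y in p..x, sincErr F h v y‖ ≤
      2 * A * h * (2 + Real.pi) / (c * Real.pi ^ 2) / (v * Real.sinh (Real.pi * v / h)) := by
  obtain ⟨i1, h1⟩ := hF.norm_integral_lineErr_le hc hh (neg_ne_zero.2 hv.ne')
    (by rwa [abs_neg, abs_of_pos hv]) hpx
  obtain ⟨i2, h2⟩ := hF.norm_integral_lineErr_le hc hh hv.ne' (by rwa [abs_of_pos hv]) hpx
  have hpi := Real.pi_pos
  have hsp : 0 < Real.sinh (Real.pi * v / h) := Real.sinh_pos_iff.2 (by positivity)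
  rw [mul_neg, neg_div, Real.sinh_neg, abs_neg, abs_neg, abs_of_pos hv, abs_of_pos hsp] at h1
  rw [abs_of_pos hv, abs_of_pos hsp] at h2
  have e : sincErr F h v = fun y => 1 / (2 * Real.pi * Complex.I) *
      (Complex.sin (Real.pi * ((y / h : ℝ) : ℂ)) * lineErr F h (-v) y -
      Complex.sin (Real.pi * ((y / h : ℝ) : ℂ)) * lineErr F h v y) := by
    funext y
    rw [sincErr]
    ring
  rw [e]
  refine ⟨(i1.sub i2).const_mul _, ?_⟩
  rw [intervalIntegral.integral_const_mul, intervalIntegral.integral_sub i1 i2, norm_mul, norm_div]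
  have hn : ‖(2 * Real.pi * Complex.I : ℂ)‖ = 2 * Real.pi := by
    simp [abs_of_pos Real.pi_pos]
  rw [hn, norm_one]
  have h3 := (norm_sub_le _ _).trans (add_le_add h1 h2)
  refine (mul_le_mul_of_nonneg_left h3 (by positivity)).trans (le_of_eq ?_)
  field_simp
  ring

lemma hasSum_geom_tail {q : ℝ} (hq0 : 0 ≤ q) (hq1 : q < 1) (N : ℕ) :
    HasSum (fun j : ℤ => if j ∈ Finset.Icc (-(N : ℤ)) N then 0 else q ^ j.natAbs)
      (2 * (q ^ (N + 1) / (1 - q))) := by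
  have hg : HasSum (fun n : ℕ => q ^ (N + 1) * q ^ n) (q ^ (N + 1) / (1 - q)) := by
    rw [div_eq_mul_inv]
    exact (hasSum_geometric_of_lt_one hq0 hq1).mul_left _
  rw [two_mul]
  refine HasSum.of_nat_of_neg_add_one ?_ ?_
  · rw [← hasSum_nat_add_iff' (N + 1), Finset.sum_eq_zero, sub_zero]
    · refine hg.congr_fun fun n => ?_
      rw [if_neg (by simp; omega), ← pow_add]
      congr 1
      omega
    · intro i hi
      rw [Finset.mem_range] at hi
      rw [if_pos (by simp; omega)]
  · rw [← hasSum_nat_add_iff' N, Finset.sum_eq_zero, sub_zero]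
    · refine hg.congr_fun fun n => ?_
      rw [if_neg (by simp; omega), ← pow_add]
      congr 1
      omega
    · intro i hi
      rw [Finset.mem_range] at hi
      rw [if_pos (by simp; omega)]

lemma exp_neg_abs_int (j : ℤ) (t : ℝ) :
    Real.exp (-t * |(j : ℝ)|) = Real.exp (-t) ^ j.natAbs := by
  rw [← Real.exp_nat_mul, Nat.cast_natAbs, Int.cast_abs]
  ring_nf

lemma summable_exp_neg_abs_int {t : ℝ} (ht : 0 < t) :
    Summable fun j : ℤ => Real.exp (-t * |(j : ℝ)|) := by
  have h1 : Real.exp (-t) < 1 := Real.exp_lt_one_iff.2 (by linarith)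
  have hs := summable_geometric_of_lt_one (Real.exp_pos (-t)).le h1
  simp_rw [exp_neg_abs_int]
  refine Summable.of_nat_of_neg ?_ ?_ <;> simpa using hs

/-- Truncating an exponentially decaying bilateral series. -/
lemma norm_tsum_sub_sum_le {t A : ℝ} (ht : 0 < t) (hA : 0 ≤ A) {f : ℤ → ℂ}
    (hf : ∀ j, ‖f j‖ ≤ A * Real.exp (-t * |(j : ℝ)|)) (N : ℕ) :
    ‖∑' j, f j - ∑ j ∈ Finset.Icc (-(N : ℤ)) N, f j‖ ≤ 2 * A / t * Real.exp (-t * N) := by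
  set q := Real.exp (-t) with hq
  have hq0 : 0 < q := Real.exp_pos _
  have hq1 : q < 1 := Real.exp_lt_one_iff.2 (by linarith)
  have hs : Summable f := Summable.of_norm_bounded ((summable_exp_neg_abs_int ht).mul_left A) hf
  have hfin : HasSum (fun j => if j ∈ Finset.Icc (-(N : ℤ)) N then f j else 0)
      (∑ j ∈ Finset.Icc (-(N : ℤ)) N, f j) := by
    have := hasSum_sum_of_ne_finset_zero (L := SummationFilter.unconditional ℤ)
      (f := fun j => if j ∈ Finset.Icc (-(N : ℤ)) N then f j else 0)
      (s := Finset.Icc (-(N : ℤ)) N) (fun j hj => if_neg hj)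
    rwa [Finset.sum_congr rfl fun j hj => if_pos hj] at this
  have hsub := hs.hasSum.sub hfin
  rw [← hsub.tsum_eq]
  refine (tsum_of_norm_bounded ((hasSum_geom_tail hq0.le hq1 N).mul_left A) fun j => ?_).trans ?_
  · split_ifs with hj
    · simp
    · rw [sub_zero]
      refine (hf j).trans (le_of_eq ?_)
      rw [exp_neg_abs_int]
  · have h1 : q / (1 - q) ≤ 1 / t := by
      rw [div_le_div_iff₀ (by linarith) ht]
      have h2 := Real.add_one_le_exp t
      have h3 : Real.exp t * q = 1 := by rw [hq, ← Real.exp_add]; simp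
      nlinarith
    have h4 : Real.exp (-t * N) = q ^ N := by
      rw [hq, ← Real.exp_nat_mul]; ring_nf
    rw [h4]
    calc A * (2 * (q ^ (N + 1) / (1 - q))) = 2 * A * (q / (1 - q)) * q ^ N := by ring
      _ ≤ 2 * A * (1 / t) * q ^ N := by gcongr
      _ = _ := by ring

lemma StripDecay.norm_grid {d : ℝ} (hd : 0 < d) {F : ℂ → ℂ} {A c : ℝ} (hF : StripDecay d F A c)
    {h : ℝ} (hh : 0 < h) (j : ℤ) :
    ‖F (j * h : ℝ)‖ ≤ A * Real.exp (-(c * h) * |(j : ℝ)|) := by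
  have := hF.bound (j * h : ℝ) (by rw [mem_Dstrip, Complex.ofReal_im, abs_zero]; exact hd)
  rw [Complex.ofReal_re, abs_mul, abs_of_pos hh] at this
  refine this.trans (le_of_eq ?_)
  ring_nf

/-- Sinc indefinite integration is exponentially accurate on the strip. -/
lemma StripDecay.norm_integral_sub_tsum_le {d : ℝ} {F : ℂ → ℂ} {A c : ℝ} (hF : StripDecay d F A c)
    (hd : 0 < d) (hc : 0 < c) {h : ℝ} (hh : 0 < h) (x : ℝ) :
    ‖(∫ y in Set.Iic x, F (y : ℝ)) - ∑' j : ℤ, F (j * h : ℝ) * (Jfun j h x : ℂ)‖ ≤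
      2 * A * h * (2 + Real.pi) / (c * Real.pi ^ 2) / (d * Real.sinh (Real.pi * d / h)) := by
  have hA := hF.nonneg hd
  have hpi := Real.pi_pos
  have hsum := (summable_exp_neg_abs_int (mul_pos hc hh)).mul_left A
  have hFi : Integrable fun y : ℝ => F y := by
    simpa using hF.integrable_line hc (v := 0) (by simpa using hd)
  have hFc : Continuous fun y : ℝ => F y := by
    simpa using continuous_line (v := 0) (by simpa using hd) hF.diff.continuousOn
  have hser : ∀ p : ℝ, HasSum (fun j : ℤ => ∫ y in p..x, F (j * h : ℝ) * (sincF j h y : ℂ))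
      (∫ y in p..x, ∑' j : ℤ, F (j * h : ℝ) * (sincF j h y : ℂ)) := by
    intro p
    have hb : ∀ (j : ℤ) (y : ℝ), ‖F (j * h : ℝ) * (sincF j h y : ℂ)‖ ≤
        A * Real.exp (-(c * h) * |(j : ℝ)|) := by
      intro j y
      rw [norm_mul, Complex.norm_real]
      exact (mul_le_of_le_one_right (norm_nonneg _) (abs_sincF_le_one j hh y)).trans
        (hF.norm_grid hd hh j)
    refine intervalIntegral.hasSum_integral_of_dominated_convergence
      (fun j _ => A * Real.exp (-(c * h) * |(j : ℝ)|)) (fun j => ?_)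
      (fun j => Eventually.of_forall fun y _ => hb j y)
      (Eventually.of_forall fun y _ => hsum) intervalIntegrable_const
      (Eventually.of_forall fun y _ => (Summable.of_norm_bounded hsum fun j => hb j y).hasSum)
    exact (continuous_const.mul
      (Complex.continuous_ofReal.comp (continuous_sincF j hh))).aestronglyMeasurable
  refine le_of_forall_halfwidth hd hh fun v hv hvd => ?_
  have herr : ∀ y : ℝ, ∑' j : ℤ, F (j * h : ℝ) * (sincF j h y : ℂ) = F y - sincErr F h v y :=
    fun y => (hF.hasSum_sinc hc hh hv hvd y).tsum_eq
  have hterm : ∀ (j : ℤ) (p : ℝ), ∫ y in p..x, F (j * h : ℝ) * (sincF j h y : ℂ) =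
      F (j * h : ℝ) * ((h / Real.pi * (Si (Real.pi * (x - j * h) / h) -
        Si (Real.pi * (p - j * h) / h)) : ℝ) : ℂ) := by
    intro j p
    rw [intervalIntegral.integral_const_mul, intervalIntegral.integral_ofReal, integral_sincF j hh]
  have hfix : ∀ p ≤ x, ‖(∫ y in p..x, F y) - ∑' j : ℤ, F (j * h : ℝ) *
      ((h / Real.pi * (Si (Real.pi * (x - j * h) / h) - Si (Real.pi * (p - j * h) / h)) : ℝ) : ℂ)‖
      ≤ 2 * A * h * (2 + Real.pi) / (c * Real.pi ^ 2) / (v * Real.sinh (Real.pi * v / h)) := by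
    intro p hp
    obtain ⟨hi, hb⟩ := hF.norm_integral_sincErr_le hc hh hv hvd hp
    have h1 := (hser p).tsum_eq
    simp_rw [herr, hterm] at h1
    rw [intervalIntegral.integral_sub (hFc.intervalIntegrable _ _) hi] at h1
    rw [h1, sub_sub_cancel]
    exact hb
  have hlim1 : Tendsto (fun p : ℝ => ∫ y in p..x, F y) atBot (𝓝 (∫ y in Set.Iic x, F (y : ℝ))) :=
    intervalIntegral_tendsto_integral_Iic x hFi.integrableOn tendsto_id
  have hlim2 : Tendsto (fun p : ℝ => ∑' j : ℤ, F (j * h : ℝ) *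
      ((h / Real.pi * (Si (Real.pi * (x - j * h) / h) - Si (Real.pi * (p - j * h) / h)) : ℝ) : ℂ))
      atBot (𝓝 (∑' j : ℤ, F (j * h : ℝ) * (Jfun j h x : ℂ))) := by
    refine tendsto_tsum_of_dominated_convergence (hsum.mul_right (h / Real.pi * 8)) (fun j => ?_)
      (Eventually.of_forall fun p j => ?_)
    · refine Tendsto.const_mul _ ((Complex.continuous_ofReal.tendsto _).comp ?_)
      have hS : Tendsto Si atBot (𝓝 (-(Real.pi / 2))) := by
        have := (tendsto_Si.comp tendsto_neg_atBot_atTop).neg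
        refine this.congr fun y => ?_
        simp [Si_neg]
      have hA : Tendsto (fun p : ℝ => Real.pi * (p - j * h) / h) atBot atBot := by
        refine Tendsto.atBot_div_const hh ?_
        refine Tendsto.const_mul_atBot hpi ?_
        exact tendsto_atBot_add_const_right _ _ tendsto_id
      have := ((hS.comp hA).const_sub (Si (Real.pi * (x - j * h) / h))).const_mul (h / Real.pi)
      have e : Jfun j h x = h / Real.pi * (Si (Real.pi * (x - j * h) / h) - -(Real.pi / 2)) := by
        rw [Jfun]
        field_simp
        ring
      rw [e]
      exact this
    · rw [norm_mul]
      gcongr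
      · exact hF.norm_grid hd hh j
      · rw [Complex.norm_real, norm_mul, Real.norm_of_nonneg (by positivity : 0 ≤ h / Real.pi)]
        gcongr
        refine (norm_sub_le _ _).trans ?_
        have h1 := abs_Si_le (Real.pi * (x - j * h) / h)
        have h2 := abs_Si_le (Real.pi * (p - j * h) / h)
        rw [Real.norm_eq_abs, Real.norm_eq_abs]
        linarith
  refine le_of_tendsto (hlim1.sub hlim2).norm ?_
  filter_upwards [eventually_le_atBot x] with p hp
  exact hfix p hp

end

section

/-! ### Holomorphic dependence of integrals on a parameter -/

open MeasureTheory Filter Topology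

/-- Differentiation under the integral sign for holomorphic integrands: a locally uniform
integrable bound on the integrand suffices, the derivative being controlled by Cauchy's
estimate. -/
lemma differentiableAt_integral_of_bound {X : Type*} [MeasurableSpace X] {μ : Measure X}
    {f : ℂ → X → ℂ} {bound : X → ℝ} {ζ₀ : ℂ} {r : ℝ} (hr : 0 < r)
    (hmeas : ∀ ζ ∈ Metric.ball ζ₀ r, AEStronglyMeasurable (f ζ) μ)
    (hdiff : ∀ x, DifferentiableOn ℂ (fun ζ => f ζ x) (Metric.ball ζ₀ r))
    (hbd : ∀ x, ∀ ζ ∈ Metric.ball ζ₀ r, ‖f ζ x‖ ≤ bound x) (hintg : Integrable bound μ) :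
    DifferentiableAt ℂ (fun ζ => ∫ x, f ζ x ∂μ) ζ₀ := by
  have hda : ∀ x, ∀ ζ ∈ Metric.ball ζ₀ r, HasDerivAt (fun ζ => f ζ x)
      (deriv (fun ζ => f ζ x) ζ) ζ := fun x ζ hζ =>
    ((hdiff x).differentiableAt (Metric.isOpen_ball.mem_nhds hζ)).hasDerivAt
  have h0 : ζ₀ ∈ Metric.ball ζ₀ r := Metric.mem_ball_self hr
  refine (hasDerivAt_integral_of_dominated_loc_of_deriv_le (F := f)
    (F' := fun ζ x => deriv (fun ζ => f ζ x) ζ) (s := Metric.ball ζ₀ (r / 2))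
    (bound := fun x => bound x / (r / 4))
    (Metric.ball_mem_nhds ζ₀ (half_pos hr)) ?_ ?_ ?_ ?_ (hintg.div_const _) ?_).2.differentiableAt
  · filter_upwards [Metric.ball_mem_nhds ζ₀ hr] with ζ hζ using hmeas ζ hζ
  · exact hintg.mono' (hmeas _ h0) (ae_of_all _ fun x => hbd x _ h0)
  · set t : ℕ → ℂ := fun n => ((r / 2 / (n + 1) : ℝ) : ℂ) with ht
    have htpos : ∀ n : ℕ, (0 : ℝ) < r / 2 / (n + 1) := fun n => by
      have := n.cast_nonneg (α := ℝ)
      positivity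
    have htlim : Tendsto t atTop (𝓝[≠] 0) := by
      refine tendsto_nhdsWithin_iff.2 ⟨?_, ?_⟩
      · have h1 : Tendsto (fun n : ℕ => r / 2 * (1 / ((n : ℝ) + 1))) atTop (𝓝 (r / 2 * 0)) :=
          tendsto_one_div_add_atTop_nhds_zero_nat.const_mul _
        have h2 : Tendsto (fun n : ℕ => (r / 2 / ((n : ℝ) + 1))) atTop (𝓝 0) := by
          simpa [div_eq_mul_inv] using h1
        exact ((Complex.continuous_ofReal.tendsto' 0 0 Complex.ofReal_zero).comp h2)
      · exact Eventually.of_forall fun n => by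
          simp only [t, Set.mem_compl_iff, Set.mem_singleton_iff]
          exact_mod_cast (htpos n).ne'
    have htball : ∀ n, ζ₀ + t n ∈ Metric.ball ζ₀ r := by
      intro n
      rw [Metric.mem_ball, dist_eq_norm, add_sub_cancel_left, Complex.norm_real,
        Real.norm_of_nonneg (htpos n).le]
      have : r / 2 / (n + 1) ≤ r / 2 := div_le_self (by positivity) (by linarith [n.cast_nonneg (α := ℝ)])
      linarith
    refine aestronglyMeasurable_of_tendsto_ae atTop
      (f := fun n x => (t n)⁻¹ • (f (ζ₀ + t n) x - f ζ₀ x)) (fun n => ?_) (ae_of_all _ fun x => ?_)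
    · exact ((hmeas _ (htball n)).sub (hmeas _ h0)).const_smul (t n)⁻¹
    · exact (hda x _ h0).tendsto_slope_zero.comp htlim
  · refine ae_of_all _ fun x ζ hζ => ?_
    have hsub : Metric.closedBall ζ (r / 4) ⊆ Metric.ball ζ₀ r := by
      intro z hz
      rw [Metric.mem_closedBall] at hz
      rw [Metric.mem_ball] at hζ ⊢
      linarith [dist_triangle z ζ ζ₀]
    exact Complex.norm_deriv_le_of_forall_mem_sphere_norm_le (by positivity)
      ((hdiff x).diffContOnCl_ball hsub)
      fun z hz => hbd x z (hsub (Metric.sphere_subset_closedBall hz))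
  · exact ae_of_all _ fun x ζ hζ => hda x ζ (Metric.ball_subset_ball (by linarith) hζ)

/-- A bounded, separately holomorphic function of two variables is holomorphic along graphs of
holomorphic maps. Cauchy's formula in the first variable turns it into a parameter integral. -/
lemma differentiableOn_diag {Ω : Set ℂ} (hΩ : IsOpen Ω) {K : ℂ → ℂ → ℂ} {M : ℝ}
    (hK1 : ∀ w ∈ Ω, DifferentiableOn ℂ (fun z => K z w) Ω)
    (hK2 : ∀ z ∈ Ω, DifferentiableOn ℂ (fun w => K z w) Ω)
    (hM : ∀ z ∈ Ω, ∀ w ∈ Ω, ‖K z w‖ ≤ M) {τ : ℂ → ℂ} (hτ : DifferentiableOn ℂ τ Ω)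
    (hτm : Set.MapsTo τ Ω Ω) : DifferentiableOn ℂ (fun ζ => K ζ (τ ζ)) Ω := by
  intro ζ₀ h0
  obtain ⟨ρ, hρ, hsubρ⟩ := Metric.isOpen_iff.1 hΩ ζ₀ h0
  obtain ⟨r, hr, hrρ⟩ : ∃ r : ℝ, 0 < r ∧ 2 * r < ρ := ⟨ρ / 3, by positivity, by linarith⟩
  have hsub : Metric.closedBall ζ₀ (2 * r) ⊆ Ω :=
    (Metric.closedBall_subset_ball hrρ).trans hsubρ
  have hball : Metric.ball ζ₀ r ⊆ Ω := (Metric.ball_subset_closedBall.trans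
    (Metric.closedBall_subset_closedBall (by linarith))).trans hsub
  have hcirc : ∀ θ : ℝ, circleMap ζ₀ (2 * r) θ ∈ Ω := fun θ =>
    hsub (circleMap_mem_closedBall ζ₀ (by positivity) θ)
  have hfar : ∀ θ : ℝ, ∀ ζ ∈ Metric.ball ζ₀ r, r ≤ ‖circleMap ζ₀ (2 * r) θ - ζ‖ := by
    intro θ ζ hζ
    have h1 : dist (circleMap ζ₀ (2 * r) θ) ζ₀ = 2 * r :=
      circleMap_mem_sphere ζ₀ (by positivity) θ
    rw [Metric.mem_ball] at hζ
    rw [← dist_eq_norm]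
    linarith [dist_triangle (circleMap ζ₀ (2 * r) θ) ζ ζ₀]
  have hne : ∀ θ : ℝ, ∀ ζ ∈ Metric.ball ζ₀ r, circleMap ζ₀ (2 * r) θ - ζ ≠ 0 := fun θ ζ hζ =>
    norm_pos_iff.1 (hr.trans_le (hfar θ ζ hζ))
  have hM0 : 0 ≤ M := (norm_nonneg _).trans (hM ζ₀ h0 ζ₀ h0)
  have key : DifferentiableAt ℂ (fun ζ => ∫ θ in Set.Ioc 0 (2 * Real.pi),
      deriv (circleMap ζ₀ (2 * r)) θ *
        ((circleMap ζ₀ (2 * r) θ - ζ)⁻¹ * K (circleMap ζ₀ (2 * r) θ) (τ ζ))) ζ₀ := by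
    refine differentiableAt_integral_of_bound (bound := fun _ => 2 * r * (r⁻¹ * M)) hr ?_ ?_ ?_ ?_
    · intro ζ hζ
      refine Continuous.aestronglyMeasurable ?_
      refine Continuous.mul ?_ (Continuous.mul ?_ ?_)
      · have hdc : deriv (circleMap ζ₀ (2 * r)) = fun θ => circleMap 0 (2 * r) θ * Complex.I :=
          funext fun θ => deriv_circleMap ζ₀ (2 * r) θ
        rw [hdc]
        exact (continuous_circleMap 0 (2 * r)).mul continuous_const
      · exact ((continuous_circleMap ζ₀ (2 * r)).sub continuous_const).inv₀ fun θ => hne θ ζ hζ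
      · exact (hK1 _ (hτm (hball hζ))).continuousOn.comp_continuous
          (continuous_circleMap ζ₀ (2 * r)) hcirc
    · intro θ
      refine DifferentiableOn.mul (differentiableOn_const _) (DifferentiableOn.mul ?_ ?_)
      · exact ((differentiableOn_const _).sub differentiableOn_id).inv fun ζ hζ => hne θ ζ hζ
      · exact (hK2 _ (hcirc θ)).comp (hτ.mono hball) fun ζ hζ => hτm (hball hζ)
    · intro θ ζ hζ
      rw [norm_mul, norm_mul, norm_inv, deriv_circleMap, norm_mul, norm_circleMap_zero,
        Complex.norm_I, mul_one, abs_of_pos (by positivity)]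
      have h1 : ‖circleMap ζ₀ (2 * r) θ - ζ‖⁻¹ ≤ r⁻¹ := inv_anti₀ hr (hfar θ ζ hζ)
      have h2 := hM _ (hcirc θ) _ (hτm (hball hζ))
      gcongr
    · exact integrable_const _
  have heq : (fun ζ => K ζ (τ ζ)) =ᶠ[𝓝 ζ₀] fun ζ => (2 * Real.pi * Complex.I)⁻¹ *
      ∫ θ in Set.Ioc 0 (2 * Real.pi), deriv (circleMap ζ₀ (2 * r)) θ *
        ((circleMap ζ₀ (2 * r) θ - ζ)⁻¹ * K (circleMap ζ₀ (2 * r) θ) (τ ζ)) := by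
    filter_upwards [Metric.ball_mem_nhds ζ₀ hr] with ζ hζ
    have h1 := ((hK1 _ (hτm (hball hζ))).diffContOnCl_ball
      hsub).two_pi_i_inv_smul_circleIntegral_sub_inv_smul
      (Metric.ball_subset_ball (by linarith) hζ : ζ ∈ Metric.ball ζ₀ (2 * r))
    rw [← h1, circleIntegral, intervalIntegral.integral_of_le Real.two_pi_pos.le]
    simp only [smul_eq_mul]
  exact ((key.const_mul _).congr_of_eventuallyEq heq).differentiableWithinAt

end

section

/-! ### Volterra equations in a strip -/

open MeasureTheory Filter Topology

/-- The derivative of the logistic function. -/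
def sgd (x : ℝ) : ℝ := Real.sigmoid x * (1 - Real.sigmoid x)

lemma sgd_nonneg (x : ℝ) : 0 ≤ sgd x :=
  mul_nonneg (Real.sigmoid_nonneg x) (sub_nonneg.2 (Real.sigmoid_le_one x))

lemma continuous_sgd : Continuous sgd :=
  continuous_sigmoid.mul (continuous_const.sub continuous_sigmoid)

lemma sgd_le_exp (x : ℝ) : sgd x ≤ Real.exp (-|x|) := by
  have h0 := Real.sigmoid_nonneg x
  have h1 := Real.sigmoid_le_one x
  rcases le_total 0 x with hx | hx
  · have h2 := Real.sigmoid_mul_rexp_neg x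
    rw [Real.sigmoid_neg] at h2
    rw [sgd, ← h2, abs_of_nonneg hx, ← mul_assoc]
    exact mul_le_of_le_one_left (Real.exp_pos _).le (by nlinarith)
  · have h2 := Real.sigmoid_mul_rexp_neg (-x)
    rw [neg_neg, Real.sigmoid_neg] at h2
    rw [sgd, abs_of_nonpos hx, neg_neg]
    nth_rewrite 1 [← h2]
    have : (1 - Real.sigmoid x) * Real.exp x * (1 - Real.sigmoid x) =
      ((1 - Real.sigmoid x) * (1 - Real.sigmoid x)) * Real.exp x := by ring
    rw [this]
    exact mul_le_of_le_one_left (Real.exp_pos _).le (by nlinarith)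

lemma sgd_le_one (x : ℝ) : sgd x ≤ 1 :=
  (sgd_le_exp x).trans (Real.exp_le_one_iff.2 (neg_nonpos.2 (abs_nonneg x)))

/-- The weight `exp (2 B σ(x))`, with respect to which a Volterra operator whose kernel is
dominated by `B σ'` is a contraction with factor `1/2`. -/
def wt (B x : ℝ) : ℝ := Real.exp (2 * B * Real.sigmoid x)

lemma continuous_wt (B : ℝ) : Continuous (wt B) :=
  Real.continuous_exp.comp (continuous_const.mul continuous_sigmoid)

lemma one_le_wt {B : ℝ} (hB : 0 ≤ B) (x : ℝ) : 1 ≤ wt B x :=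
  Real.one_le_exp (by have := Real.sigmoid_nonneg x; positivity)

lemma wt_le {B : ℝ} (hB : 0 ≤ B) (x : ℝ) : wt B x ≤ Real.exp (2 * B) :=
  Real.exp_le_exp.2 (mul_le_of_le_one_right (by positivity) (Real.sigmoid_le_one x))

lemma integrable_exp_neg_abs_add {c : ℝ} (hc : 0 < c) (x : ℝ) :
    Integrable fun s : ℝ => Real.exp (-c * |x + s|) :=
  (integrable_exp_neg_abs hc).comp_add_left x

lemma integrable_sgd_mul_wt {B : ℝ} (hB : 0 ≤ B) (x : ℝ) :
    Integrable fun s : ℝ => B * sgd (x + s) * wt B (x + s) := by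
  refine ((integrable_exp_neg_abs_add one_pos x).const_mul (B * Real.exp (2 * B))).mono' ?_ ?_
  · refine Continuous.aestronglyMeasurable ?_
    exact (continuous_const.mul (continuous_sgd.comp (continuous_const.add continuous_id))).mul
      ((continuous_wt B).comp (continuous_const.add continuous_id))
  · refine ae_of_all _ fun s => ?_
    have h1 := sgd_le_exp (x + s)
    have h2 := wt_le hB (x + s)
    have h3 := sgd_nonneg (x + s)
    have h4 : 0 ≤ wt B (x + s) := (Real.exp_pos _).le
    rw [Real.norm_of_nonneg (by positivity), neg_one_mul]
    calc B * sgd (x + s) * wt B (x + s)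
        ≤ B * Real.exp (-|x + s|) * Real.exp (2 * B) := by gcongr
      _ = _ := by ring

lemma integral_sgd_mul_wt_le {B : ℝ} (hB : 0 ≤ B) (x : ℝ) :
    ∫ s in Set.Iic (0 : ℝ), B * sgd (x + s) * wt B (x + s) ≤ wt B x / 2 := by
  have hder : ∀ s ∈ Set.Iic (0 : ℝ), HasDerivAt (fun s => wt B (x + s) / 2)
      (B * sgd (x + s) * wt B (x + s)) s := by
    intro s _
    have h1 : HasDerivAt (fun s => Real.sigmoid (x + s)) (sgd (x + s)) s := by
      have := (Real.hasDerivAt_sigmoid (x + s)).comp_const_add x s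
      exact this
    have h2 := ((h1.const_mul (2 * B)).exp).div_const 2
    refine h2.congr_deriv ?_
    simp only [wt]; ring
  have hlim : Tendsto (fun s => wt B (x + s) / 2) atBot (𝓝 (1 / 2)) := by
    have h1 : Tendsto (fun s => Real.sigmoid (x + s)) atBot (𝓝 0) :=
      Real.tendsto_sigmoid_atBot.comp (tendsto_atBot_add_const_left _ x tendsto_id)
    have h2 := ((Real.continuous_exp.tendsto _).comp (h1.const_mul (2 * B))).div_const 2
    simpa [wt] using h2
  rw [integral_Iic_of_hasDerivAt_of_tendsto' hder (integrable_sgd_mul_wt hB x).integrableOn hlim]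
  simp only [add_zero]
  linarith

/-- A kernel on a strip, separately holomorphic and dominated by `B σ'(Re w)`. -/
structure StripKernel (d B : ℝ) (K : ℂ → ℂ → ℂ) : Prop where
  diff1 : ∀ w ∈ Dstrip d, DifferentiableOn ℂ (fun z => K z w) (Dstrip d)
  diff2 : ∀ z ∈ Dstrip d, DifferentiableOn ℂ (fun w => K z w) (Dstrip d)
  bound : ∀ z ∈ Dstrip d, ∀ w ∈ Dstrip d, ‖K z w‖ ≤ B * sgd w.re

/-- The Volterra operator `(T f)(ζ) = ∫_{-∞}^0 K(ζ, ζ+s) f(ζ+s) ds`, integration running along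
the horizontal ray to the left of `ζ`. -/
def volT (K : ℂ → ℂ → ℂ) (f : ℂ → ℂ) (ζ : ℂ) : ℂ :=
  ∫ s in Set.Iic (0 : ℝ), K ζ (ζ + s) * f (ζ + s)

lemma add_real_mem_Dstrip {d : ℝ} {ζ : ℂ} (hζ : ζ ∈ Dstrip d) (s : ℝ) : ζ + s ∈ Dstrip d := by
  rw [mem_Dstrip] at hζ ⊢
  simpa using hζ

lemma ofReal_mem_Dstrip {d : ℝ} (hd : 0 < d) (x : ℝ) : (x : ℂ) ∈ Dstrip d := by
  rw [mem_Dstrip]; simpa using hd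

lemma re_add_real (ζ : ℂ) (s : ℝ) : (ζ + s).re = ζ.re + s := by simp

lemma StripKernel.nonneg {d B : ℝ} {K : ℂ → ℂ → ℂ} (hd : 0 < d) (hK : StripKernel d B K) :
    0 ≤ B := by
  have h0 := ofReal_mem_Dstrip hd 0
  have h1 := (norm_nonneg _).trans (hK.bound _ h0 _ h0)
  have h2 : 0 < sgd ((0 : ℝ) : ℂ).re := by
    simp only [Complex.ofReal_re, sgd]
    rw [Real.sigmoid_zero]; norm_num
  exact nonneg_of_mul_nonneg_left h1 h2

/-- The Volterra operator is a contraction with factor `1/2` in the weighted supremum norm. -/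
lemma StripKernel.norm_volT_le {d B : ℝ} {K : ℂ → ℂ → ℂ} (hd : 0 < d) (hK : StripKernel d B K)
    {f : ℂ → ℂ} {M : ℝ} {ζ : ℂ} (hζ : ζ ∈ Dstrip d)
    (hf : ∀ s : ℝ, s ≤ 0 → ‖f (ζ + s)‖ ≤ M * wt B (ζ.re + s)) :
    ‖volT K f ζ‖ ≤ M / 2 * wt B ζ.re := by
  have hB := hK.nonneg hd
  have hM : 0 ≤ M := by
    have h1 := (norm_nonneg _).trans (hf 0 le_rfl)
    exact nonneg_of_mul_nonneg_left h1 (Real.exp_pos _)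
  have h1 : ‖volT K f ζ‖ ≤ ∫ s in Set.Iic (0 : ℝ), M * (B * sgd (ζ.re + s) * wt B (ζ.re + s)) := by
    refine norm_integral_le_of_norm_le ((integrable_sgd_mul_wt hB _).const_mul M).integrableOn ?_
    refine (ae_restrict_iff' measurableSet_Iic).2 (ae_of_all _ fun s hs => ?_)
    have h2 := hK.bound ζ hζ _ (add_real_mem_Dstrip hζ s)
    rw [re_add_real] at h2
    rw [norm_mul]
    calc _ ≤ (B * sgd (ζ.re + s)) * (M * wt B (ζ.re + s)) :=
          mul_le_mul h2 (hf s hs) (norm_nonneg _) ((norm_nonneg _).trans h2)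
      _ = _ := by ring
  refine h1.trans ?_
  rw [integral_const_mul]
  calc _ ≤ M * (wt B ζ.re / 2) := mul_le_mul_of_nonneg_left (integral_sgd_mul_wt_le hB _) hM
    _ = _ := by ring

lemma continuous_horizontal {d : ℝ} {f : ℂ → ℂ} (hf : ContinuousOn f (Dstrip d)) {ζ : ℂ}
    (hζ : ζ ∈ Dstrip d) : Continuous fun s : ℝ => f (ζ + s) :=
  hf.comp_continuous (continuous_const.add Complex.continuous_ofReal) (add_real_mem_Dstrip hζ)

lemma StripKernel.norm_integrand_le {d B : ℝ} {K : ℂ → ℂ → ℂ} (hd : 0 < d)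
    (hK : StripKernel d B K) {f : ℂ → ℂ} {M : ℝ} {ζ : ℂ} (hζ : ζ ∈ Dstrip d) {s : ℝ}
    (hf : ‖f (ζ + s)‖ ≤ M) :
    ‖K ζ (ζ + s) * f (ζ + s)‖ ≤ B * M * Real.exp (-1 * |ζ.re + s|) := by
  have hB := hK.nonneg hd
  have h2 := hK.bound ζ hζ _ (add_real_mem_Dstrip hζ s)
  rw [re_add_real] at h2
  have h3 := sgd_le_exp (ζ.re + s)
  rw [norm_mul, neg_one_mul]
  calc _ ≤ (B * Real.exp (-|ζ.re + s|)) * M := by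
        refine mul_le_mul (h2.trans (by gcongr)) hf (norm_nonneg _) (by positivity)
    _ = _ := by ring

/-- The operator `volT` maps bounded holomorphic functions to holomorphic functions. -/
lemma StripKernel.differentiableOn_volT {d B : ℝ} {K : ℂ → ℂ → ℂ} (hd : 0 < d)
    (hK : StripKernel d B K) {f : ℂ → ℂ} (hf : DifferentiableOn ℂ f (Dstrip d)) {M : ℝ}
    (hM : ∀ ζ ∈ Dstrip d, ‖f ζ‖ ≤ M) : DifferentiableOn ℂ (volT K f) (Dstrip d) := by
  have hB := hK.nonneg hd
  intro ζ₀ h0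
  have hM0 : 0 ≤ M := (norm_nonneg _).trans (hM _ h0)
  obtain ⟨ρ, hρ, hsubρ⟩ := Metric.isOpen_iff.1 (isOpen_Dstrip d) ζ₀ h0
  have hsub : Metric.ball ζ₀ (min ρ 1) ⊆ Dstrip d :=
    (Metric.ball_subset_ball (min_le_left _ _)).trans hsubρ
  refine DifferentiableAt.differentiableWithinAt ?_
  refine differentiableAt_integral_of_bound (r := min ρ 1) (lt_min hρ one_pos)
    (bound := fun s => B * M * Real.exp 1 * Real.exp (-1 * |ζ₀.re + s|)) ?_ ?_ ?_ ?_
  · intro ζ hζ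
    refine Continuous.aestronglyMeasurable ?_
    exact (continuous_horizontal (hK.diff2 ζ (hsub hζ)).continuousOn (hsub hζ)).mul
      (continuous_horizontal hf.continuousOn (hsub hζ))
  · intro s
    have hτ : DifferentiableOn ℂ (fun ζ : ℂ => ζ + s) (Dstrip d) :=
      differentiableOn_id.add_const _
    have hτm : Set.MapsTo (fun ζ : ℂ => ζ + s) (Dstrip d) (Dstrip d) :=
      fun ζ hζ => add_real_mem_Dstrip hζ s
    refine DifferentiableOn.mono (DifferentiableOn.mul ?_ ?_) hsub
    · refine differentiableOn_diag (isOpen_Dstrip d) hK.diff1 hK.diff2 (M := B) ?_ hτ hτm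
      exact fun z hz w hw => (hK.bound z hz w hw).trans
        (mul_le_of_le_one_right hB (sgd_le_one _))
    · exact hf.comp hτ hτm
  · intro s ζ hζ
    refine (hK.norm_integrand_le hd (hsub hζ) (hM _ (add_real_mem_Dstrip (hsub hζ) s))).trans ?_
    have h1 : |ζ.re - ζ₀.re| ≤ 1 := by
      rw [Metric.mem_ball, dist_eq_norm] at hζ
      rw [← Complex.sub_re]
      exact (Complex.abs_re_le_norm _).trans (hζ.le.trans (min_le_right _ _))
    have h2 : Real.exp (-1 * |ζ.re + s|) ≤ Real.exp 1 * Real.exp (-1 * |ζ₀.re + s|) := by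
      rw [← Real.exp_add]
      refine Real.exp_le_exp.2 ?_
      have h3 : ζ₀.re + s = (ζ.re + s) - (ζ.re - ζ₀.re) := by ring
      have h4 := abs_sub (ζ.re + s) (ζ.re - ζ₀.re)
      rw [← h3] at h4
      linarith
    calc _ ≤ B * M * (Real.exp 1 * Real.exp (-1 * |ζ₀.re + s|)) := by gcongr
      _ = _ := by ring
  · exact ((integrable_exp_neg_abs_add one_pos _).const_mul _).integrableOn

/-- The Neumann series of the Volterra equation converges in the strip, and its sum coincides on
the real axis with any bounded continuous solution given there. -/
lemma exists_strip_solution {d B : ℝ} {K : ℂ → ℂ → ℂ} (hd : 0 < d) (hK : StripKernel d B K)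
    {G : ℂ → ℂ} (hG : DifferentiableOn ℂ G (Dstrip d)) {M : ℝ}
    (hM : ∀ ζ ∈ Dstrip d, ‖G ζ‖ ≤ M) {u₀ : ℝ → ℂ} (hu₀ : Continuous u₀) {M₀ : ℝ}
    (hM₀ : ∀ x, ‖u₀ x‖ ≤ M₀)
    (heq : ∀ x : ℝ, u₀ x = G x + ∫ s in Set.Iic (0 : ℝ), K x ((x + s : ℝ) : ℂ) * u₀ (x + s)) :
    ∃ U : ℂ → ℂ, DifferentiableOn ℂ U (Dstrip d) ∧ (∃ MU, ∀ ζ ∈ Dstrip d, ‖U ζ‖ ≤ MU) ∧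
      (∀ ζ ∈ Dstrip d, U ζ = G ζ + volT K U ζ) ∧ ∀ x : ℝ, U x = u₀ x := by
  have hB := hK.nonneg hd
  have h0 := ofReal_mem_Dstrip hd 0
  have hMn : 0 ≤ M := (norm_nonneg _).trans (hM _ h0)
  set f : ℕ → ℂ → ℂ := fun n => (volT K)^[n] G with hf
  have hf0 : f 0 = G := rfl
  have hfs : ∀ n, f (n + 1) = volT K (f n) := fun n => Function.iterate_succ_apply' _ _ _
  have hfb : ∀ n, ∀ ζ ∈ Dstrip d, ‖f n ζ‖ ≤ M * (1 / 2) ^ n * wt B ζ.re := by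
    intro n
    induction n with
    | zero =>
      intro ζ hζ
      rw [hf0, pow_zero, mul_one]
      exact (hM ζ hζ).trans (le_mul_of_one_le_right hMn (one_le_wt hB _))
    | succ n ih =>
      intro ζ hζ
      rw [hfs]
      refine (hK.norm_volT_le hd hζ (M := M * (1 / 2) ^ n) fun s _ => ?_).trans_eq (by ring)
      have := ih _ (add_real_mem_Dstrip hζ s)
      rwa [re_add_real] at this
  set C : ℝ := M * Real.exp (2 * B) with hC
  have hfb' : ∀ n, ∀ ζ ∈ Dstrip d, ‖f n ζ‖ ≤ C * (1 / 2) ^ n := by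
    intro n ζ hζ
    refine (hfb n ζ hζ).trans ?_
    calc _ ≤ M * (1 / 2) ^ n * Real.exp (2 * B) := by gcongr; exact wt_le hB _
      _ = _ := by ring
  have hC0 : 0 ≤ C := by positivity
  have hfd : ∀ n, DifferentiableOn ℂ (f n) (Dstrip d) := by
    intro n
    induction n with
    | zero => exact hG
    | succ n ih => rw [hfs]; exact hK.differentiableOn_volT hd ih (hfb' n)
  have hgeo : Summable fun n : ℕ => C * (1 / 2 : ℝ) ^ n := summable_geometric_two.mul_left C
  have hsum : ∀ ζ ∈ Dstrip d, Summable fun n => f n ζ := fun ζ hζ =>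
    Summable.of_norm_bounded hgeo fun n => hfb' n ζ hζ
  set U : ℂ → ℂ := fun ζ => ∑' n, f n ζ with hU
  have hUd : DifferentiableOn ℂ U (Dstrip d) :=
    Complex.differentiableOn_tsum_of_summable_norm hgeo hfd (isOpen_Dstrip d) hfb'
  have hUb : ∀ ζ ∈ Dstrip d, ‖U ζ‖ ≤ C * 2 := by
    intro ζ hζ
    have := tsum_of_norm_bounded (hgeo.hasSum) fun n => hfb' n ζ hζ
    rwa [tsum_mul_left, tsum_geometric_two] at this
  have hUeq : ∀ ζ ∈ Dstrip d, U ζ = G ζ + volT K U ζ := by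
    intro ζ hζ
    have h1 : HasSum (fun n => f (n + 1) ζ) (volT K U ζ) := by
      simp only [hfs]
      refine hasSum_integral_of_dominated_convergence
        (bound := fun n s => B * (C * (1 / 2) ^ n) * Real.exp (-1 * |ζ.re + s|)) ?_ ?_ ?_ ?_ ?_
      · intro n
        exact ((continuous_horizontal (hK.diff2 ζ hζ).continuousOn hζ).mul
          (continuous_horizontal (hfd n).continuousOn hζ)).aestronglyMeasurable
      · exact fun n => ae_of_all _ fun s =>
          hK.norm_integrand_le hd hζ (hfb' n _ (add_real_mem_Dstrip hζ s))
      · exact ae_of_all _ fun s => (hgeo.mul_left B).mul_right _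
      · simp only [tsum_mul_right]
        exact ((integrable_exp_neg_abs_add one_pos _).const_mul _).integrableOn
      · exact ae_of_all _ fun s => (hsum _ (add_real_mem_Dstrip hζ s)).hasSum.mul_left _
    have h2 := (hsum ζ hζ).tsum_eq_zero_add
    rw [h1.tsum_eq] at h2
    exact h2
  refine ⟨U, hUd, ⟨_, hUb⟩, hUeq, ?_⟩
  -- the difference of the two solutions on the real axis is a fixed point of the contraction
  set D : ℂ → ℂ := fun ζ => U ζ - u₀ ζ.re with hD
  have hDeq : ∀ x : ℝ, D x = volT K D x := by
    intro x
    have hx := ofReal_mem_Dstrip hd x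
    have hKc := continuous_horizontal (hK.diff2 x hx).continuousOn hx
    have hi1 : IntegrableOn (fun s : ℝ => K x (x + s) * U (x + s)) (Set.Iic 0) := by
      refine Integrable.mono' ((integrable_exp_neg_abs_add one_pos x).const_mul
        (B * (C * 2))).integrableOn (hKc.mul (continuous_horizontal hUd.continuousOn
        hx)).aestronglyMeasurable (ae_of_all _ fun s => ?_)
      simpa using hK.norm_integrand_le hd hx (hUb _ (add_real_mem_Dstrip hx s))
    have hi2 : IntegrableOn (fun s : ℝ => K x (x + s) * u₀ (x + s)) (Set.Iic 0) := by
      refine Integrable.mono' ((integrable_exp_neg_abs_add one_pos x).const_mul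
        (B * M₀)).integrableOn (hKc.mul (hu₀.comp (continuous_const.add
        continuous_id))).aestronglyMeasurable (ae_of_all _ fun s => ?_)
      have := hK.norm_integrand_le hd hx (f := fun ζ => u₀ ζ.re) (s := s) (hM₀ _)
      simpa using this
    have h3 : volT K D x = (∫ s in Set.Iic (0 : ℝ), K x (x + s) * U (x + s)) -
        ∫ s in Set.Iic (0 : ℝ), K x (x + s) * u₀ (x + s) := by
      rw [← integral_sub hi1 hi2, volT]
      refine integral_congr_ae (ae_of_all _ fun s => ?_)
      simp [hD, mul_sub]
    have h4 := heq x
    simp only [Complex.ofReal_add] at h4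
    have h5 := hUeq x hx
    rw [h3]
    simp only [hD, Complex.ofReal_re]
    rw [h4, h5, volT]
    ring
  have hDb : ∀ n : ℕ, ∀ x : ℝ, ‖D x‖ ≤ (C * 2 + M₀) * (1 / 2) ^ n * wt B x := by
    have hM₀' : 0 ≤ M₀ := (norm_nonneg _).trans (hM₀ 0)
    intro n
    induction n with
    | zero =>
      intro x
      rw [pow_zero, mul_one]
      have h1 : ‖D x‖ ≤ C * 2 + M₀ := (norm_sub_le _ _).trans
        (add_le_add (hUb _ (ofReal_mem_Dstrip hd x)) (hM₀ _))
      exact h1.trans (le_mul_of_one_le_right (by positivity) (one_le_wt hB _))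
    | succ n ih =>
      intro x
      rw [hDeq]
      refine (hK.norm_volT_le hd (ofReal_mem_Dstrip hd x) (M := (C * 2 + M₀) * (1 / 2) ^ n)
        fun s _ => ?_).trans_eq (by rw [Complex.ofReal_re]; ring)
      rw [← Complex.ofReal_add, Complex.ofReal_re]
      exact ih _
  intro x
  have h1 : Tendsto (fun n : ℕ => (C * 2 + M₀) * (1 / 2) ^ n * wt B x) atTop (𝓝 0) := by
    have := ((tendsto_pow_atTop_nhds_zero_of_lt_one (r := (1 / 2 : ℝ)) (by norm_num)
      (by norm_num)).const_mul (C * 2 + M₀)).mul_const (wt B x)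
    simpa using this
  have h2 : ‖D x‖ ≤ 0 := ge_of_tendsto' h1 fun n => hDb n x
  have h3 : D x = 0 := norm_le_zero_iff.1 h2
  simpa [hD, sub_eq_zero] using h3

end

section

/-! ### The tanh transformation on the real line and in the strip -/

open MeasureTheory Filter Topology

lemma psiSE_eq (a b x : ℝ) : psiSE a b x = a + (b - a) * Real.sigmoid x := by
  have h1 : Real.exp (x / 2) ≠ 0 := (Real.exp_pos _).ne'
  have h2 : Real.exp (-x) = Real.exp (-(x / 2)) / Real.exp (x / 2) := by
    rw [← Real.exp_sub]; congr 1; ring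
  have h3 : Real.exp (x / 2) + Real.exp (-(x / 2)) ≠ 0 := by positivity
  rw [psiSE, Real.tanh_eq_sinh_div_cosh, Real.sinh_eq, Real.cosh_eq, Real.sigmoid_def, h2]
  field_simp
  ring

lemma psiSEC_ofReal (a b x : ℝ) : psiSEC a b x = (psiSE a b x : ℝ) := by
  simp only [psiSEC, psiSE]
  push_cast
  ring

lemma hasDerivAt_psiSE (a b x : ℝ) : HasDerivAt (psiSE a b) ((b - a) * sgd x) x := by
  have h1 : psiSE a b = fun x => a + (b - a) * Real.sigmoid x := funext (psiSE_eq a b)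
  rw [h1]
  exact ((Real.hasDerivAt_sigmoid x).const_mul (b - a)).const_add a

lemma deriv_psiSE (a b x : ℝ) : deriv (psiSE a b) x = (b - a) * sgd x :=
  (hasDerivAt_psiSE a b x).deriv

lemma continuous_psiSE (a b : ℝ) : Continuous (psiSE a b) :=
  continuous_iff_continuousAt.2 fun x => (hasDerivAt_psiSE a b x).continuousAt

lemma psiSE_mem_Ioo {a b : ℝ} (hab : a < b) (x : ℝ) : psiSE a b x ∈ Set.Ioo a b := by
  rw [psiSE_eq]
  have h0 := Real.sigmoid_pos x
  have h1 := Real.sigmoid_lt_one x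
  have h2 : 0 < b - a := sub_pos.2 hab
  constructor <;> nlinarith

lemma phiSE_psiSE {a b : ℝ} (hab : a < b) (x : ℝ) : phiSE a b (psiSE a b x) = x := by
  have h2 : b - a ≠ 0 := (sub_pos.2 hab).ne'
  have h3 : (1 + Real.exp (-x)) ≠ 0 := by positivity
  have h4 : Real.exp (-x) ≠ 0 := (Real.exp_pos _).ne'
  have h5 : (psiSE a b x - a) / (b - psiSE a b x) = Real.exp x := by
    have e1 : psiSE a b x - a = (b - a) * (1 + Real.exp (-x))⁻¹ := by
      rw [psiSE_eq, Real.sigmoid_def]; ring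
    have e2 : b - psiSE a b x = (b - a) * (Real.exp (-x) * (1 + Real.exp (-x))⁻¹) := by
      rw [psiSE_eq, Real.sigmoid_def]; field_simp; ring
    rw [e1, e2, mul_div_mul_left _ _ h2, div_eq_iff (by positivity), ← mul_assoc, ← Real.exp_add,
      add_neg_cancel, Real.exp_zero, one_mul]
  rw [phiSE, h5, Real.log_exp]

lemma exists_psiSE_eq {a b : ℝ} (hab : a < b) {t : ℝ} (ht : t ∈ Set.Ioo a b) :
    ∃ x, psiSE a b x = t := by
  have h2 : 0 < b - a := sub_pos.2 hab
  have h1 : (t - a) / (b - a) ∈ Set.range Real.sigmoid := by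
    rw [Real.range_sigmoid]
    exact ⟨div_pos (sub_pos.2 ht.1) h2, (div_lt_one h2).2 (by linarith [ht.2])⟩
  obtain ⟨x, hx⟩ := h1
  refine ⟨x, ?_⟩
  rw [psiSE_eq, hx]
  field_simp
  ring

lemma psiSE_phiSE {a b : ℝ} (hab : a < b) {t : ℝ} (ht : t ∈ Set.Ioo a b) :
    psiSE a b (phiSE a b t) = t := by
  obtain ⟨x, rfl⟩ := exists_psiSE_eq hab ht
  rw [phiSE_psiSE hab]

lemma tendsto_psiSE_atBot (a b : ℝ) : Tendsto (psiSE a b) atBot (𝓝 a) := by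
  have h1 : psiSE a b = fun x => a + (b - a) * Real.sigmoid x := funext (psiSE_eq a b)
  rw [h1]
  simpa using (Real.tendsto_sigmoid_atBot.const_mul (b - a)).const_add a

lemma tendsto_psiSE_atTop (a b : ℝ) : Tendsto (psiSE a b) atTop (𝓝 b) := by
  have h1 : psiSE a b = fun x => a + (b - a) * Real.sigmoid x := funext (psiSE_eq a b)
  rw [h1]
  simpa using (Real.tendsto_sigmoid_atTop.const_mul (b - a)).const_add a

lemma strictMono_psiSE {a b : ℝ} (hab : a < b) : StrictMono (psiSE a b) := by
  intro x y hxy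
  rw [psiSE_eq, psiSE_eq]
  have := mul_lt_mul_of_pos_left (Real.sigmoid_strictMono hxy) (sub_pos.2 hab)
  linarith

/-- In the strip of half-width `d < π` the complex logistic denominator is comparable to the real
one. -/
lemma cos_mul_le_norm_one_add_exp {d : ℝ} (hd : 0 < d) (hdpi : d < Real.pi) {ζ : ℂ}
    (hζ : ζ ∈ Dstrip d) :
    Real.cos (d / 2) * (1 + Real.exp (-ζ.re)) ≤ ‖1 + Complex.exp (-ζ)‖ := by
  rw [mem_Dstrip] at hζ
  have hq : 0 < Real.cos (d / 2) := Real.cos_pos_of_mem_Ioo ⟨by linarith, by linarith⟩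
  have hcos : Real.cos (d / 2) ≤ Real.cos (ζ.im / 2) := by
    rw [← Real.cos_abs (ζ.im / 2)]
    refine Real.cos_le_cos_of_nonneg_of_le_pi (abs_nonneg _) (by linarith) ?_
    rw [abs_div, abs_two]; linarith
  refine le_of_sq_le_sq ?_ (norm_nonneg _)
  have hre : (1 + Complex.exp (-ζ)).re = 1 + Real.exp (-ζ.re) * Real.cos ζ.im := by
    simp [Complex.exp_re]
  have him : (1 + Complex.exp (-ζ)).im = -(Real.exp (-ζ.re) * Real.sin ζ.im) := by
    simp [Complex.exp_im]
  have hc2 : Real.cos ζ.im = 2 * Real.cos (ζ.im / 2) ^ 2 - 1 := by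
    rw [← Real.cos_two_mul]; congr 1; ring
  have hs2 := Real.sin_sq_add_cos_sq ζ.im
  rw [← Complex.normSq_eq_norm_sq, Complex.normSq_apply, hre, him]
  set E := Real.exp (-ζ.re)
  have hE : 0 < E := Real.exp_pos _
  have h1 : (1 + E * Real.cos ζ.im) * (1 + E * Real.cos ζ.im) +
      -(E * Real.sin ζ.im) * -(E * Real.sin ζ.im) =
      (1 - E) ^ 2 + 4 * E * Real.cos (ζ.im / 2) ^ 2 := by
    have : (1 + E * Real.cos ζ.im) * (1 + E * Real.cos ζ.im) +
      -(E * Real.sin ζ.im) * -(E * Real.sin ζ.im) = 1 + 2 * E * Real.cos ζ.im +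
        E ^ 2 * (Real.sin ζ.im ^ 2 + Real.cos ζ.im ^ 2) := by ring
    rw [this, hs2, hc2]; ring
  rw [h1]
  have hle1 : Real.cos (d / 2) ^ 2 ≤ Real.cos (ζ.im / 2) ^ 2 := by gcongr
  have hle2 : Real.cos (d / 2) ^ 2 ≤ 1 := by
    have := Real.cos_le_one (d / 2); nlinarith
  calc (Real.cos (d / 2) * (1 + E)) ^ 2
      = Real.cos (d / 2) ^ 2 * (1 - E) ^ 2 + 4 * E * Real.cos (d / 2) ^ 2 := by ring
    _ ≤ 1 * (1 - E) ^ 2 + 4 * E * Real.cos (ζ.im / 2) ^ 2 := by gcongr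
    _ = _ := by ring

lemma cos_half_pos {d : ℝ} (hd : 0 < d) (hdpi : d < Real.pi) : 0 < Real.cos (d / 2) :=
  Real.cos_pos_of_mem_Ioo ⟨by linarith, by linarith⟩

lemma one_add_exp_ne {d : ℝ} (hd : 0 < d) (hdpi : d < Real.pi) {ζ : ℂ} (hζ : ζ ∈ Dstrip d) :
    1 + Complex.exp (-ζ) ≠ 0 := by
  have h1 := cos_mul_le_norm_one_add_exp hd hdpi hζ
  have h2 : 0 < Real.cos (d / 2) * (1 + Real.exp (-ζ.re)) :=
    mul_pos (cos_half_pos hd hdpi) (by positivity)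
  exact norm_pos_iff.1 (h2.trans_le h1)

lemma psiSEC_eq {d : ℝ} (hd : 0 < d) (hdpi : d < Real.pi) (a b : ℝ) {ζ : ℂ} (hζ : ζ ∈ Dstrip d) :
    psiSEC a b ζ = a + (b - a) / (1 + Complex.exp (-ζ)) := by
  have h1 : Complex.exp (ζ / 2) ≠ 0 := Complex.exp_ne_zero _
  have h2 : Complex.exp (-ζ) = Complex.exp (-(ζ / 2)) / Complex.exp (ζ / 2) := by
    rw [← Complex.exp_sub]; congr 1; ring
  have h0 := one_add_exp_ne hd hdpi hζ
  have h3 : Complex.exp (ζ / 2) + Complex.exp (-(ζ / 2)) ≠ 0 := by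
    intro h
    apply h0
    rw [h2]
    field_simp
    rw [mul_zero]; exact h
  rw [psiSEC, Complex.tanh_eq_sinh_div_cosh, Complex.sinh, Complex.cosh, h2]
  field_simp
  ring

/-- The derivative `ψ'` of the complex tanh transformation. -/
def dpsi (a b : ℝ) (ζ : ℂ) : ℂ :=
  (b - a) * Complex.exp (-ζ) / (1 + Complex.exp (-ζ)) ^ 2

lemma sgd_eq (x : ℝ) : sgd x = Real.exp (-x) / (1 + Real.exp (-x)) ^ 2 := by
  have h : 1 + Real.exp (-x) ≠ 0 := by positivity
  rw [sgd, Real.sigmoid_def]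
  field_simp
  ring

lemma dpsi_ofReal (a b x : ℝ) : dpsi a b x = ((b - a) * sgd x : ℝ) := by
  rw [sgd_eq, dpsi]
  push_cast
  ring

lemma differentiableOn_psiSEC {d : ℝ} (hd : 0 < d) (hdpi : d < Real.pi) (a b : ℝ) :
    DifferentiableOn ℂ (psiSEC a b) (Dstrip d) := by
  have h1 : DifferentiableOn ℂ (fun ζ : ℂ => (a : ℂ) + (b - a) / (1 + Complex.exp (-ζ)))
      (Dstrip d) := by
    refine (differentiableOn_const _).add ((differentiableOn_const _).div ?_ ?_)
    · fun_prop
    · exact fun ζ hζ => one_add_exp_ne hd hdpi hζ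
  exact h1.congr fun ζ hζ => psiSEC_eq hd hdpi a b hζ

lemma differentiableOn_dpsi {d : ℝ} (hd : 0 < d) (hdpi : d < Real.pi) (a b : ℝ) :
    DifferentiableOn ℂ (dpsi a b) (Dstrip d) := by
  refine DifferentiableOn.div (by fun_prop) (by fun_prop) ?_
  exact fun ζ hζ => pow_ne_zero _ (one_add_exp_ne hd hdpi hζ)

lemma norm_dpsi_le {a b d : ℝ} (hab : a < b) (hd : 0 < d) (hdpi : d < Real.pi) {ζ : ℂ}
    (hζ : ζ ∈ Dstrip d) : ‖dpsi a b ζ‖ ≤ (b - a) / Real.cos (d / 2) ^ 2 * sgd ζ.re := by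
  have h1 := cos_mul_le_norm_one_add_exp hd hdpi hζ
  have hq := cos_half_pos hd hdpi
  have h2 : 0 < b - a := sub_pos.2 hab
  rw [dpsi, norm_div, norm_mul, norm_pow, Complex.norm_exp, sgd_eq, ← Complex.ofReal_sub,
    Complex.norm_real, Real.norm_of_nonneg h2.le, Complex.neg_re]
  calc _ ≤ (b - a) * Real.exp (-ζ.re) / (Real.cos (d / 2) * (1 + Real.exp (-ζ.re))) ^ 2 := by
        gcongr
    _ = _ := by field_simp

lemma norm_psiSEC_sub_le {a b d : ℝ} (hab : a < b) (hd : 0 < d) (hdpi : d < Real.pi) {ζ : ℂ}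
    (hζ : ζ ∈ Dstrip d) : ‖psiSEC a b ζ - a‖ ≤ (b - a) / Real.cos (d / 2) * Real.sigmoid ζ.re := by
  have h1 := cos_mul_le_norm_one_add_exp hd hdpi hζ
  have hq := cos_half_pos hd hdpi
  have h2 : 0 < b - a := sub_pos.2 hab
  rw [psiSEC_eq hd hdpi a b hζ, add_sub_cancel_left, norm_div, ← Complex.ofReal_sub,
    Complex.norm_real, Real.norm_of_nonneg h2.le, Real.sigmoid_def]
  calc _ ≤ (b - a) / (Real.cos (d / 2) * (1 + Real.exp (-ζ.re))) := by gcongr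
    _ = _ := by field_simp

lemma norm_sub_psiSEC_le {a b d : ℝ} (hab : a < b) (hd : 0 < d) (hdpi : d < Real.pi) {ζ : ℂ}
    (hζ : ζ ∈ Dstrip d) :
    ‖(b : ℂ) - psiSEC a b ζ‖ ≤ (b - a) / Real.cos (d / 2) * Real.sigmoid (-ζ.re) := by
  have h1 := cos_mul_le_norm_one_add_exp hd hdpi hζ
  have hq := cos_half_pos hd hdpi
  have h2 : 0 < b - a := sub_pos.2 hab
  have h3 : (b : ℂ) - psiSEC a b ζ = (b - a) * Complex.exp (-ζ) / (1 + Complex.exp (-ζ)) := by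
    have := one_add_exp_ne hd hdpi hζ
    rw [psiSEC_eq hd hdpi a b hζ]
    field_simp
    ring
  rw [h3, norm_div, norm_mul, ← Complex.ofReal_sub,
    Complex.norm_real, Real.norm_of_nonneg h2.le, Complex.norm_exp, Complex.neg_re,
    ← Real.sigmoid_mul_rexp_neg, Real.sigmoid_def]
  calc _ ≤ (b - a) * Real.exp (-ζ.re) / (Real.cos (d / 2) * (1 + Real.exp (-ζ.re))) := by gcongr
    _ = _ := by field_simp

lemma sigmoid_le_exp (x : ℝ) : Real.sigmoid x ≤ Real.exp x := by
  have := Real.sigmoid_mul_rexp_neg (-x)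
  rw [neg_neg] at this
  rw [← this]
  exact mul_le_of_le_one_left (Real.exp_pos _).le (Real.sigmoid_le_one _)

lemma psiSEC_mem_DSE {a b d : ℝ} {ζ : ℂ} (hζ : ζ ∈ Dstrip d) : psiSEC a b ζ ∈ DSE a b d :=
  ⟨ζ, hζ, rfl⟩

lemma ofReal_psiSE_mem_DSE {d : ℝ} (hd : 0 < d) (a b x : ℝ) :
    ((psiSE a b x : ℝ) : ℂ) ∈ DSE a b d :=
  ⟨x, ofReal_mem_Dstrip hd x, psiSEC_ofReal a b x⟩

end

section

/-! ### Analytic continuation and endpoint decay of the solution -/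

open MeasureTheory Filter Topology

/-- The working form of the hypotheses on `k`, `g`, `u`: the kernel is jointly bounded on `D × D`
(a consequence of the Hölder condition at `a`), and all bounds carry explicit nonnegative
constants. -/
structure SEData (a b α d : ℝ) (k : ℂ → ℂ → ℂ) (g : ℂ → ℂ) (u : ℝ → ℂ) (L M : ℝ) : Prop where
  hab : a < b
  hα : 0 < α
  hα1 : α ≤ 1
  hd : 0 < d
  hdpi : d < Real.pi
  hL : 0 ≤ L
  hM : 0 ≤ M
  g_an : DifferentiableOn ℂ g (DSE a b d)
  g_bd : ∀ z ∈ DSE a b d, ‖g z‖ ≤ M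
  k_an1 : ∀ w ∈ DSE a b d, DifferentiableOn ℂ (fun z => k z w) (DSE a b d)
  k_an2 : ∀ z ∈ DSE a b d, DifferentiableOn ℂ (fun w => k z w) (DSE a b d)
  k_bd : ∀ z ∈ DSE a b d, ∀ w ∈ DSE a b d, ‖k z w‖ ≤ M
  kb_an : DifferentiableOn ℂ (fun w => k b w) (DSE a b d)
  kb_bd : ∀ w ∈ DSE a b d, ‖k b w‖ ≤ M
  g_a : ∀ z ∈ DSE a b d, ‖g z - g a‖ ≤ L * ‖z - a‖ ^ α
  g_b : ∀ z ∈ DSE a b d, ‖g b - g z‖ ≤ L * ‖b - z‖ ^ α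
  k_b : ∀ z ∈ DSE a b d, ∀ w ∈ DSE a b d, ‖k b w - k z w‖ ≤ L * ‖b - z‖ ^ α
  u_cont : ContinuousOn u (Set.Icc a b)
  u_eq : ∀ t ∈ Set.Icc a b, u t = g t + ∫ s in a..t, k t s * u s

lemma integrable_sgd_add (x : ℝ) : Integrable fun s : ℝ => sgd (x + s) := by
  refine (integrable_exp_neg_abs_add one_pos x).mono'
    (continuous_sgd.comp (continuous_const.add continuous_id)).aestronglyMeasurable
    (ae_of_all _ fun s => ?_)
  rw [Real.norm_of_nonneg (sgd_nonneg _), neg_one_mul]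
  exact sgd_le_exp _

lemma hasDerivAt_sigmoid_add (x s : ℝ) :
    HasDerivAt (fun s => Real.sigmoid (x + s)) (sgd (x + s)) s :=
  (Real.hasDerivAt_sigmoid (x + s)).comp_const_add x s

lemma integral_sgd_Iic (x : ℝ) : ∫ s in Set.Iic (0 : ℝ), sgd (x + s) = Real.sigmoid x := by
  rw [integral_Iic_of_hasDerivAt_of_tendsto' (fun s _ => hasDerivAt_sigmoid_add x s)
    (integrable_sgd_add x).integrableOn
    (Real.tendsto_sigmoid_atBot.comp (tendsto_atBot_add_const_left _ x tendsto_id))]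
  simp

lemma integral_sgd_Ioi (x : ℝ) : ∫ s in Set.Ioi (0 : ℝ), sgd (x + s) = Real.sigmoid (-x) := by
  rw [integral_Ioi_of_hasDerivAt_of_tendsto' (fun s _ => hasDerivAt_sigmoid_add x s)
    (integrable_sgd_add x).integrableOn
    (Real.tendsto_sigmoid_atTop.comp (tendsto_atTop_add_const_left _ x tendsto_id)),
    Real.sigmoid_neg]
  simp

lemma sigmoid_le_rpow {α : ℝ} (hα1 : α ≤ 1) (x : ℝ) : Real.sigmoid x ≤ Real.sigmoid x ^ α := by
  have := Real.rpow_le_rpow_of_exponent_ge (Real.sigmoid_pos x) (Real.sigmoid_le_one x) hα1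
  rwa [Real.rpow_one] at this

lemma sigmoid_rpow_le_exp {α : ℝ} (hα : 0 ≤ α) (x : ℝ) :
    Real.sigmoid x ^ α ≤ Real.exp (α * x) := by
  refine (Real.rpow_le_rpow (Real.sigmoid_nonneg x) (sigmoid_le_exp x) hα).trans_eq ?_
  rw [← Real.exp_mul, mul_comm]

lemma image_psiSE_Iic {a b : ℝ} (hab : a < b) (x : ℝ) :
    (fun s => psiSE a b (x + s)) '' Set.Iic 0 = Set.Ioc a (psiSE a b x) := by
  ext t
  constructor
  · rintro ⟨s, hs, rfl⟩
    exact ⟨(psiSE_mem_Ioo hab _).1, (strictMono_psiSE hab).monotone (by linarith [Set.mem_Iic.1 hs])⟩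
  · rintro ⟨h1, h2⟩
    obtain ⟨y, rfl⟩ := exists_psiSE_eq hab ⟨h1, h2.trans_lt (psiSE_mem_Ioo hab x).2⟩
    refine ⟨y - x, ?_, ?_⟩
    · have := (strictMono_psiSE hab).le_iff_le.1 h2
      simpa using this
    · simp

/-- Change of variables `s = ψ(y)` in the Volterra integral. -/
lemma integral_psiSE_Iic {a b : ℝ} (hab : a < b) (F : ℝ → ℂ) (x : ℝ) :
    ∫ s in a..psiSE a b x, F s =
      ∫ s in Set.Iic (0 : ℝ), (((b - a) * sgd (x + s) : ℝ) : ℂ) * F (psiSE a b (x + s)) := by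
  rw [intervalIntegral.integral_of_le (psiSE_mem_Ioo hab x).1.le, ← image_psiSE_Iic hab x]
  rw [integral_image_eq_integral_abs_deriv_smul measurableSet_Iic
    (f' := fun s => (b - a) * sgd (x + s))]
  · refine integral_congr_ae (ae_of_all _ fun s => ?_)
    simp only
    rw [abs_of_nonneg (mul_nonneg (sub_pos.2 hab).le (sgd_nonneg _)), Complex.real_smul]
  · exact fun s _ => ((hasDerivAt_psiSE a b (x + s)).comp_const_add x s).hasDerivWithinAt
  · exact fun s _ t _ hst => add_left_cancel ((strictMono_psiSE hab).injective hst)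

lemma integral_psiSE_univ {a b : ℝ} (hab : a < b) (F : ℝ → ℂ) :
    ∫ s in a..b, F s = ∫ y : ℝ, (((b - a) * sgd y : ℝ) : ℂ) * F (psiSE a b y) := by
  have himg : psiSE a b '' Set.univ = Set.Ioo a b := by
    ext t
    constructor
    · rintro ⟨y, _, rfl⟩; exact psiSE_mem_Ioo hab y
    · intro ht
      obtain ⟨y, rfl⟩ := exists_psiSE_eq hab ht
      exact ⟨y, trivial, rfl⟩
  rw [intervalIntegral.integral_of_le hab.le, integral_Ioc_eq_integral_Ioo, ← himg]
  rw [integral_image_eq_integral_abs_deriv_smul MeasurableSet.univ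
    (f' := fun s => (b - a) * sgd s)]
  · rw [Measure.restrict_univ]
    refine integral_congr_ae (ae_of_all _ fun s => ?_)
    simp only
    rw [abs_of_nonneg (mul_nonneg (sub_pos.2 hab).le (sgd_nonneg _)), Complex.real_smul]
  · exact fun s _ => (hasDerivAt_psiSE a b s).hasDerivWithinAt
  · exact fun s _ t _ hst => (strictMono_psiSE hab).injective hst

/-- The Volterra kernel pulled back to the strip, including the Jacobian. -/
def Kstrip (a b : ℝ) (k : ℂ → ℂ → ℂ) (ζ ω : ℂ) : ℂ :=
  k (psiSEC a b ζ) (psiSEC a b ω) * dpsi a b ω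

variable {a b α d : ℝ} {k : ℂ → ℂ → ℂ} {g : ℂ → ℂ} {u : ℝ → ℂ} {L M : ℝ}

lemma SEData.norm_mul_dpsi_le (H : SEData a b α d k g u L M) {κ : ℂ → ℂ}
    (hκ : ∀ w ∈ DSE a b d, ‖κ w‖ ≤ M) {ω : ℂ} (hω : ω ∈ Dstrip d) :
    ‖κ (psiSEC a b ω) * dpsi a b ω‖ ≤ M * ((b - a) / Real.cos (d / 2) ^ 2) * sgd ω.re := by
  rw [norm_mul, mul_assoc]
  exact mul_le_mul (hκ _ (psiSEC_mem_DSE hω)) (norm_dpsi_le H.hab H.hd H.hdpi hω)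
    (norm_nonneg _) H.hM

lemma SEData.differentiableOn_mul_dpsi (H : SEData a b α d k g u L M) {κ : ℂ → ℂ}
    (hκ : DifferentiableOn ℂ κ (DSE a b d)) :
    DifferentiableOn ℂ (fun ω => κ (psiSEC a b ω) * dpsi a b ω) (Dstrip d) :=
  (hκ.comp (differentiableOn_psiSEC H.hd H.hdpi a b) fun _ hω => psiSEC_mem_DSE hω).mul
    (differentiableOn_dpsi H.hd H.hdpi a b)

lemma SEData.stripKernel (H : SEData a b α d k g u L M) :
    StripKernel d (M * ((b - a) / Real.cos (d / 2) ^ 2)) (Kstrip a b k) where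
  diff1 _ hw := ((H.k_an1 _ (psiSEC_mem_DSE hw)).comp (differentiableOn_psiSEC H.hd H.hdpi a b)
    fun _ hω => psiSEC_mem_DSE hω).mul (differentiableOn_const _)
  diff2 _ hz := H.differentiableOn_mul_dpsi (H.k_an2 _ (psiSEC_mem_DSE hz))
  bound _ hz _ hw := H.norm_mul_dpsi_le (H.k_bd _ (psiSEC_mem_DSE hz)) hw

/-- The Volterra equation in the variable `x`, where `t = ψ(x)`. -/
lemma SEData.u_psi (H : SEData a b α d k g u L M) (x : ℝ) :
    u (psiSE a b x) = g (psiSEC a b x) + ∫ s in Set.Iic (0 : ℝ),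
      Kstrip a b k x ((x + s : ℝ) : ℂ) * u (psiSE a b (x + s)) := by
  have h1 := H.u_eq _ (Set.Ioo_subset_Icc_self (psiSE_mem_Ioo H.hab x))
  rw [integral_psiSE_Iic H.hab] at h1
  rw [h1, psiSEC_ofReal]
  congr 1
  refine integral_congr_ae (ae_of_all _ fun s => ?_)
  simp only [Kstrip]
  rw [psiSEC_ofReal, psiSEC_ofReal, dpsi_ofReal]
  ring

lemma SEData.u_a (H : SEData a b α d k g u L M) : u a = g a := by
  have h1 := H.u_eq a ⟨le_rfl, H.hab.le⟩
  simpa using h1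

lemma SEData.u_b (H : SEData a b α d k g u L M) :
    u b = g b + ∫ y : ℝ, k b (psiSEC a b y) * dpsi a b y * u (psiSE a b y) := by
  have h1 := H.u_eq b ⟨H.hab.le, le_rfl⟩
  rw [integral_psiSE_univ H.hab] at h1
  rw [h1]
  congr 1
  refine integral_congr_ae (ae_of_all _ fun s => ?_)
  simp only
  rw [psiSEC_ofReal, dpsi_ofReal]
  ring

/-- The solution `u ∘ ψ` continues to a bounded holomorphic solution of the pulled-back Volterra
equation in the strip. -/
lemma SEData.exists_extension (H : SEData a b α d k g u L M) :
    ∃ U : ℂ → ℂ, DifferentiableOn ℂ U (Dstrip d) ∧ (∃ MU, ∀ ζ ∈ Dstrip d, ‖U ζ‖ ≤ MU) ∧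
      (∀ ζ ∈ Dstrip d, U ζ = g (psiSEC a b ζ) + volT (Kstrip a b k) U ζ) ∧
      ∀ x : ℝ, U x = u (psiSE a b x) := by
  obtain ⟨C, hC⟩ := (isCompact_Icc (a := a) (b := b)).exists_bound_of_continuousOn H.u_cont
  refine exists_strip_solution H.hd H.stripKernel (G := fun ζ => g (psiSEC a b ζ)) (M := M)
    (M₀ := C) (u₀ := fun x => u (psiSE a b x)) ?_ ?_ ?_ ?_ ?_
  · exact H.g_an.comp (differentiableOn_psiSEC H.hd H.hdpi a b) fun _ hω => psiSEC_mem_DSE hω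
  · exact fun ζ hζ => H.g_bd _ (psiSEC_mem_DSE hζ)
  · exact H.u_cont.comp_continuous (continuous_psiSE a b)
      fun x => Set.Ioo_subset_Icc_self (psiSE_mem_Ioo H.hab x)
  · exact fun x => hC _ (Set.Ioo_subset_Icc_self (psiSE_mem_Ioo H.hab x))
  · exact H.u_psi

end

section

open MeasureTheory Filter Topology

variable {a b α d : ℝ} {k : ℂ → ℂ → ℂ} {g : ℂ → ℂ} {u : ℝ → ℂ} {L M : ℝ}

/-- Near `a` the Volterra integral is bounded by the mass of `σ'` to the left of `ζ`. -/
lemma SEData.norm_sub_a_le (H : SEData a b α d k g u L M) {U : ℂ → ℂ} {MU : ℝ}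
    (hMU : ∀ ζ ∈ Dstrip d, ‖U ζ‖ ≤ MU)
    (hUeq : ∀ ζ ∈ Dstrip d, U ζ = g (psiSEC a b ζ) + volT (Kstrip a b k) U ζ) :
    ∃ C, 0 ≤ C ∧ ∀ ζ ∈ Dstrip d, ‖U ζ - u a‖ ≤ C * Real.sigmoid ζ.re ^ α := by
  have hq := cos_half_pos H.hd H.hdpi
  have hba : 0 < b - a := sub_pos.2 H.hab
  have hMU0 : 0 ≤ MU := (norm_nonneg _).trans (hMU _ (ofReal_mem_Dstrip H.hd 0))
  have hL := H.hL
  have hM := H.hM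
  set B := M * ((b - a) / Real.cos (d / 2) ^ 2) with hB
  have hB0 : 0 ≤ B := by positivity
  refine ⟨L * ((b - a) / Real.cos (d / 2)) ^ α + B * MU, by positivity, fun ζ hζ => ?_⟩
  have hs := Real.sigmoid_nonneg ζ.re
  have h1 : ‖g (psiSEC a b ζ) - g a‖ ≤
      L * ((b - a) / Real.cos (d / 2)) ^ α * Real.sigmoid ζ.re ^ α := by
    refine (H.g_a _ (psiSEC_mem_DSE hζ)).trans ?_
    rw [mul_assoc, ← Real.mul_rpow (by positivity) hs]
    exact mul_le_mul_of_nonneg_left (Real.rpow_le_rpow (norm_nonneg _)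
      (norm_psiSEC_sub_le H.hab H.hd H.hdpi hζ) H.hα.le) hL
  have h2 : ‖volT (Kstrip a b k) U ζ‖ ≤ B * MU * Real.sigmoid ζ.re ^ α := by
    have h3 : ‖volT (Kstrip a b k) U ζ‖ ≤ ∫ s in Set.Iic (0 : ℝ), B * MU * sgd (ζ.re + s) := by
      refine norm_integral_le_of_norm_le ((integrable_sgd_add _).const_mul _).integrableOn
        (ae_of_all _ fun s => ?_)
      have hs' := add_real_mem_Dstrip hζ s
      have h4 := H.stripKernel.bound ζ hζ _ hs'
      rw [re_add_real] at h4
      rw [norm_mul]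
      calc _ ≤ B * sgd (ζ.re + s) * MU :=
            mul_le_mul h4 (hMU _ hs') (norm_nonneg _) ((norm_nonneg _).trans h4)
        _ = _ := by ring
    rw [integral_const_mul, integral_sgd_Iic] at h3
    exact h3.trans (mul_le_mul_of_nonneg_left (sigmoid_le_rpow H.hα1 _) (by positivity))
  have h5 : U ζ - u a = (g (psiSEC a b ζ) - g a) + volT (Kstrip a b k) U ζ := by
    rw [hUeq ζ hζ, H.u_a]; ring
  rw [h5, add_mul]
  exact (norm_add_le _ _).trans (add_le_add h1 h2)

/-- The integrand of the transformed Volterra integral decays like `exp (-|Re ω|)`. -/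
lemma SEData.stripDecay_integrand (H : SEData a b α d k g u L M) {U : ℂ → ℂ} {MU : ℝ}
    (hUd : DifferentiableOn ℂ U (Dstrip d)) (hMU : ∀ ζ ∈ Dstrip d, ‖U ζ‖ ≤ MU) {κ : ℂ → ℂ}
    (hκ : DifferentiableOn ℂ κ (DSE a b d)) (hκM : ∀ w ∈ DSE a b d, ‖κ w‖ ≤ M) :
    StripDecay d (fun ω => κ (psiSEC a b ω) * dpsi a b ω * U ω)
      (M * ((b - a) / Real.cos (d / 2) ^ 2) * MU) 1 where
  diff := (H.differentiableOn_mul_dpsi hκ).mul hUd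
  bound ω hω := by
    have hq := cos_half_pos H.hd H.hdpi
    have hba : 0 < b - a := sub_pos.2 H.hab
    have hMU0 : 0 ≤ MU := (norm_nonneg _).trans (hMU _ (ofReal_mem_Dstrip H.hd 0))
    have hM := H.hM
    have h1 := H.norm_mul_dpsi_le hκM hω
    have h2 := sgd_le_exp ω.re
    rw [norm_mul, neg_one_mul]
    calc _ ≤ (M * ((b - a) / Real.cos (d / 2) ^ 2) * Real.exp (-|ω.re|)) * MU :=
          mul_le_mul (h1.trans (by gcongr)) (hMU _ hω) (norm_nonneg _) (by positivity)
      _ = _ := by ring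

/-- Near `b` the full integral `∫_ℝ` may be moved to the horizontal line through `ζ`, which
leaves only the tail to the right of `ζ`. -/
lemma SEData.norm_sub_b_le (H : SEData a b α d k g u L M) {U : ℂ → ℂ} {MU : ℝ}
    (hUd : DifferentiableOn ℂ U (Dstrip d)) (hMU : ∀ ζ ∈ Dstrip d, ‖U ζ‖ ≤ MU)
    (hUeq : ∀ ζ ∈ Dstrip d, U ζ = g (psiSEC a b ζ) + volT (Kstrip a b k) U ζ)
    (hUu : ∀ x : ℝ, U x = u (psiSE a b x)) :
    ∃ C, 0 ≤ C ∧ ∀ ζ ∈ Dstrip d, ‖U ζ - u b‖ ≤ C * Real.sigmoid (-ζ.re) ^ α := by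
  have hq := cos_half_pos H.hd H.hdpi
  have hba : 0 < b - a := sub_pos.2 H.hab
  have hMU0 : 0 ≤ MU := (norm_nonneg _).trans (hMU _ (ofReal_mem_Dstrip H.hd 0))
  have hL := H.hL
  have hM := H.hM
  set J := (b - a) / Real.cos (d / 2) ^ 2 with hJ
  set B := M * J with hB
  have hJ0 : 0 ≤ J := by positivity
  have hB0 : 0 ≤ B := by positivity
  set Lq := L * ((b - a) / Real.cos (d / 2)) ^ α with hLq
  have hLq0 : 0 ≤ Lq := by positivity
  refine ⟨Lq + Lq * J * MU + B * MU, by positivity, fun ζ hζ => ?_⟩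
  have hs := Real.sigmoid_nonneg (-ζ.re)
  set S := Real.sigmoid (-ζ.re) ^ α with hS
  have hS0 : 0 ≤ S := Real.rpow_nonneg hs _
  have hdist : L * ‖(b : ℂ) - psiSEC a b ζ‖ ^ α ≤ Lq * S := by
    rw [hLq, hS, mul_assoc, ← Real.mul_rpow (by positivity) hs]
    exact mul_le_mul_of_nonneg_left (Real.rpow_le_rpow (norm_nonneg _)
      (norm_sub_psiSEC_le H.hab H.hd H.hdpi hζ) H.hα.le) hL
  have h1 : ‖g (psiSEC a b ζ) - g b‖ ≤ Lq * S := by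
    rw [norm_sub_rev]
    exact (H.g_b _ (psiSEC_mem_DSE hζ)).trans hdist
  set F : ℂ → ℂ := fun ω => k b (psiSEC a b ω) * dpsi a b ω * U ω with hF
  have hFd : StripDecay d F (B * MU) 1 := H.stripDecay_integrand hUd hMU H.kb_an H.kb_bd
  have hFcont : Continuous fun s : ℝ => F (ζ + s) :=
    continuous_horizontal hFd.diff.continuousOn hζ
  have hFb : ∀ s : ℝ, ‖F (ζ + s)‖ ≤ B * MU * sgd (ζ.re + s) := by
    intro s
    have hs' := add_real_mem_Dstrip hζ s
    have h4 := H.norm_mul_dpsi_le H.kb_bd hs'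
    rw [re_add_real] at h4
    simp only [hF]
    rw [norm_mul]
    calc _ ≤ B * sgd (ζ.re + s) * MU :=
          mul_le_mul h4 (hMU _ hs') (norm_nonneg _) ((norm_nonneg _).trans h4)
      _ = _ := by ring
  have hFint : Integrable fun s : ℝ => F (ζ + s) :=
    ((integrable_sgd_add ζ.re).const_mul (B * MU)).mono' hFcont.aestronglyMeasurable
      (ae_of_all _ hFb)
  -- replacing `k(ψ ζ, ·)` by `k(b, ·)` costs one use of the Hölder condition at `b`
  have h2 : ‖volT (Kstrip a b k) U ζ - ∫ s in Set.Iic (0 : ℝ), F (ζ + s)‖ ≤ Lq * J * MU * S := by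
    have hKint : IntegrableOn (fun s : ℝ => Kstrip a b k ζ (ζ + s) * U (ζ + s)) (Set.Iic 0) := by
      refine Integrable.mono' ((integrable_exp_neg_abs_add one_pos ζ.re).const_mul
        (B * MU)).integrableOn ((continuous_horizontal (H.stripKernel.diff2 ζ hζ).continuousOn
        hζ).mul (continuous_horizontal hUd.continuousOn hζ)).aestronglyMeasurable
        (ae_of_all _ fun s => ?_)
      exact H.stripKernel.norm_integrand_le H.hd hζ (hMU _ (add_real_mem_Dstrip hζ s))
    rw [volT, ← integral_sub hKint hFint.integrableOn]
    have h3 : ‖∫ s in Set.Iic (0 : ℝ), (Kstrip a b k ζ (ζ + s) * U (ζ + s) - F (ζ + s))‖ ≤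
        ∫ s in Set.Iic (0 : ℝ), Lq * S * J * MU * sgd (ζ.re + s) := by
      refine norm_integral_le_of_norm_le ((integrable_sgd_add _).const_mul _).integrableOn
        (ae_of_all _ fun s => ?_)
      have hs' := add_real_mem_Dstrip hζ s
      have h4 : Kstrip a b k ζ (ζ + s) * U (ζ + s) - F (ζ + s) =
          -((k b (psiSEC a b (ζ + s)) - k (psiSEC a b ζ) (psiSEC a b (ζ + s))) *
            dpsi a b (ζ + s) * U (ζ + s)) := by
        simp only [hF, Kstrip]; ring
      have h5 := norm_dpsi_le H.hab H.hd H.hdpi hs'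
      rw [re_add_real] at h5
      have h6 := (H.k_b _ (psiSEC_mem_DSE hζ) _ (psiSEC_mem_DSE hs')).trans hdist
      have h7 := sgd_nonneg (ζ.re + s)
      rw [h4, norm_neg, norm_mul, norm_mul]
      calc _ ≤ Lq * S * (J * sgd (ζ.re + s)) * MU := by
            gcongr
            exact hMU _ hs'
        _ = _ := by ring
    rw [integral_const_mul, integral_sgd_Iic] at h3
    refine h3.trans ((mul_le_of_le_one_right (by positivity)
      (Real.sigmoid_le_one _)).trans_eq (by ring))
  have h3 : ‖(∫ s in Set.Iic (0 : ℝ), F (ζ + s)) - ∫ y : ℝ, F y‖ ≤ B * MU * S := by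
    have e1 : ∫ y : ℝ, F y = ∫ s : ℝ, F (ζ + s) := by
      have hz : |(0 : ℝ)| < d := by simpa using H.hd
      have hv : |ζ.im| < d := mem_Dstrip.1 hζ
      have e2 : ∫ y : ℝ, F (y + (0 : ℝ) * Complex.I) = ∫ y : ℝ, F (y + ζ.im * Complex.I) := by
        rcases le_total 0 ζ.im with h | h
        · exact hFd.integral_line_eq one_pos hz hv h
        · exact (hFd.integral_line_eq one_pos hv hz h).symm
      have e3 : ∫ s : ℝ, F (ζ + s) = ∫ y : ℝ, F (y + ζ.im * Complex.I) := by
        rw [← integral_add_left_eq_self (fun y : ℝ => F (y + ζ.im * Complex.I)) ζ.re]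
        refine integral_congr_ae (ae_of_all _ fun s => ?_)
        simp only
        congr 1
        conv_lhs => rw [← Complex.re_add_im ζ]
        push_cast
        ring
      rw [e3, ← e2]
      simp
    have e2 : (∫ s in Set.Iic (0 : ℝ), F (ζ + s)) - ∫ y : ℝ, F y =
        -∫ s in Set.Ioi (0 : ℝ), F (ζ + s) := by
      rw [e1, ← integral_add_compl measurableSet_Iic hFint, Set.compl_Iic]
      ring
    rw [e2, norm_neg]
    have e3 : ‖∫ s in Set.Ioi (0 : ℝ), F (ζ + s)‖ ≤
        ∫ s in Set.Ioi (0 : ℝ), B * MU * sgd (ζ.re + s) :=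
      norm_integral_le_of_norm_le ((integrable_sgd_add _).const_mul _).integrableOn
        (ae_of_all _ hFb)
    rw [integral_const_mul, integral_sgd_Ioi] at e3
    exact e3.trans (mul_le_mul_of_nonneg_left (sigmoid_le_rpow H.hα1 _) (by positivity))
  have h4 : u b = g b + ∫ y : ℝ, F y := by
    rw [H.u_b]
    congr 1
    refine integral_congr_ae (ae_of_all _ fun s => ?_)
    simp only [hF, hUu]
  have h5 : U ζ - u b = (g (psiSEC a b ζ) - g b) +
      (volT (Kstrip a b k) U ζ - ∫ s in Set.Iic (0 : ℝ), F (ζ + s)) +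
      ((∫ s in Set.Iic (0 : ℝ), F (ζ + s)) - ∫ y : ℝ, F y) := by
    rw [hUeq ζ hζ, h4]; ring
  rw [h5]
  refine (norm_add₃_le).trans ?_
  calc _ ≤ Lq * S + Lq * J * MU * S + B * MU * S := by gcongr
    _ = _ := by ring

lemma StripDecay.mono_const {d A A' c : ℝ} {F : ℂ → ℂ} (hF : StripDecay d F A c) (h : A ≤ A') :
    StripDecay d F A' c where
  diff := hF.diff
  bound ζ hζ := (hF.bound ζ hζ).trans (mul_le_mul_of_nonneg_right h (Real.exp_pos _).le)

/-- What the error analysis needs to know about the solution `u`: it extends to a function `U` of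
the strip which, after subtraction of the linear interpolant of the endpoint values, decays like
`exp (-α |Re ζ|)`; the integrand of the pulled-back Volterra integral decays like `exp (-|Re ω|)`,
and on the real line `u` approaches its endpoint values at the rate `exp (-α |x|)`. -/
lemma SEData.exists_decay (H : SEData a b α d k g u L M) :
    ∃ (U : ℂ → ℂ) (A : ℝ), 0 ≤ A ∧ (∀ x : ℝ, U x = u (psiSE a b x)) ∧
      StripDecay d (fun ζ => U ζ - u a * ((b - psiSEC a b ζ) / (b - a))
        - u b * ((psiSEC a b ζ - a) / (b - a))) A α ∧
      (∀ z ∈ DSE a b d,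
        StripDecay d (fun ω => k z (psiSEC a b ω) * dpsi a b ω * U ω) A 1) ∧
      ∀ x : ℝ, ‖u (psiSE a b x) - u a‖ ≤ A * Real.exp (α * x) ∧
        ‖u (psiSE a b x) - u b‖ ≤ A * Real.exp (-(α * x)) := by
  have hq := cos_half_pos H.hd H.hdpi
  have hba : 0 < b - a := sub_pos.2 H.hab
  obtain ⟨U, hUd, ⟨MU, hMU⟩, hUeq, hUu⟩ := H.exists_extension
  obtain ⟨C1, hC1, hUa⟩ := H.norm_sub_a_le hMU hUeq
  obtain ⟨C2, hC2, hUb⟩ := H.norm_sub_b_le hUd hMU hUeq hUu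
  have hMU0 : 0 ≤ MU := (norm_nonneg _).trans (hMU _ (ofReal_mem_Dstrip H.hd 0))
  have hM := H.hM
  set q := Real.cos (d / 2) with hqdef
  set A := M * ((b - a) / q ^ 2) * MU + (C1 / q + C2 / q) + C1 + C2 with hA
  have hp1 : 0 ≤ M * ((b - a) / q ^ 2) * MU := by positivity
  have hp2 : 0 ≤ C1 / q + C2 / q := by positivity
  refine ⟨U, A, by positivity, hUu, ?_, ?_, ?_⟩
  · have hdec : StripDecay d (fun ζ => U ζ - u a * ((b - psiSEC a b ζ) / (b - a))
        - u b * ((psiSEC a b ζ - a) / (b - a))) (C1 / q + C2 / q) α := by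
      refine ⟨?_, ?_⟩
      · have hψ := differentiableOn_psiSEC H.hd H.hdpi a b
        refine (hUd.sub ?_).sub ?_
        · exact (((differentiableOn_const _).sub hψ).div_const _).const_mul _
        · exact ((hψ.sub (differentiableOn_const _)).div_const _).const_mul _
      · intro ζ hζ
        have hbac : ((b : ℂ) - a) ≠ 0 := by
          rw [← Complex.ofReal_sub]; exact_mod_cast hba.ne'
        have e1 : U ζ - u a * ((b - psiSEC a b ζ) / (b - a))
            - u b * ((psiSEC a b ζ - a) / (b - a)) =
            (U ζ - u a) * ((b - psiSEC a b ζ) / (b - a)) +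
            (U ζ - u b) * ((psiSEC a b ζ - a) / (b - a)) := by
          field_simp
          ring
        have hn : ‖(b : ℂ) - a‖ = b - a := by
          rw [← Complex.ofReal_sub, Complex.norm_real, Real.norm_of_nonneg hba.le]
        have hσ1 := Real.sigmoid_nonneg ζ.re
        have hσ2 := Real.sigmoid_nonneg (-ζ.re)
        have hwa : ‖((b : ℂ) - psiSEC a b ζ) / (b - a)‖ ≤ Real.sigmoid (-ζ.re) ^ α / q := by
          rw [norm_div, hn, div_le_iff₀ hba]
          refine (norm_sub_psiSEC_le H.hab H.hd H.hdpi hζ).trans ?_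
          calc _ ≤ (b - a) / q * Real.sigmoid (-ζ.re) ^ α := by
                gcongr; exact sigmoid_le_rpow H.hα1 _
            _ = _ := by ring
        have hwb : ‖(psiSEC a b ζ - a) / ((b : ℂ) - a)‖ ≤ Real.sigmoid ζ.re ^ α / q := by
          rw [norm_div, hn, div_le_iff₀ hba]
          refine (norm_psiSEC_sub_le H.hab H.hd H.hdpi hζ).trans ?_
          calc _ ≤ (b - a) / q * Real.sigmoid ζ.re ^ α := by
                gcongr; exact sigmoid_le_rpow H.hα1 _
            _ = _ := by ring
        have hprod : Real.sigmoid ζ.re ^ α * Real.sigmoid (-ζ.re) ^ α ≤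
            Real.exp (-α * |ζ.re|) := by
          rw [← Real.mul_rpow hσ1 hσ2, Real.sigmoid_neg]
          refine (Real.rpow_le_rpow (sgd_nonneg _) (sgd_le_exp ζ.re) H.hα.le).trans_eq ?_
          rw [← Real.exp_mul]; congr 1; ring
        rw [e1]
        refine (norm_add_le _ _).trans ?_
        rw [norm_mul, norm_mul]
        calc _ ≤ (C1 * Real.sigmoid ζ.re ^ α) * (Real.sigmoid (-ζ.re) ^ α / q) +
              (C2 * Real.sigmoid (-ζ.re) ^ α) * (Real.sigmoid ζ.re ^ α / q) := by
                gcongr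
                · exact hUa ζ hζ
                · exact hUb ζ hζ
          _ = (C1 / q + C2 / q) * (Real.sigmoid ζ.re ^ α * Real.sigmoid (-ζ.re) ^ α) := by ring
          _ ≤ _ := by gcongr
    exact hdec.mono_const (by linarith)
  · exact fun z hz => (H.stripDecay_integrand hUd hMU (H.k_an2 z hz) (H.k_bd z hz)).mono_const
      (by linarith)
  · intro x
    have hx := ofReal_mem_Dstrip H.hd x
    have h1 := hUa x hx
    have h2 := hUb x hx
    rw [hUu, Complex.ofReal_re] at h1 h2
    have h3 := sigmoid_rpow_le_exp H.hα.le x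
    have h4 := sigmoid_rpow_le_exp H.hα.le (-x)
    rw [mul_neg] at h4
    constructor
    · refine h1.trans (mul_le_mul (by linarith) h3 (Real.rpow_nonneg (Real.sigmoid_nonneg _) _)
        (by positivity))
    · refine h2.trans (mul_le_mul (by linarith) h4 (Real.rpow_nonneg (Real.sigmoid_nonneg _) _)
        (by positivity))

end

section

/-! ### Stability of the discrete Volterra systems -/

open MeasureTheory Filter Topology

/-- A discrete Grönwall inequality. -/
lemma discrete_gronwall {n : ℕ} {e w : Fin n → ℝ} {R : ℝ} (hw : ∀ j, 0 ≤ w j)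
    (he : ∀ i, e i ≤ R + ∑ j ∈ Finset.univ.filter (fun j => j < i), w j * e j) (m : ℕ)
    (hR : 0 ≤ R) :
    R + ∑ j ∈ Finset.univ.filter (fun j : Fin n => (j : ℕ) < m), w j * e j
      ≤ R * Real.exp (∑ j ∈ Finset.univ.filter (fun j : Fin n => (j : ℕ) < m), w j) := by
  induction m with
  | zero => simp
  | succ m ih =>
    by_cases hm : m < n
    · have hset : Finset.univ.filter (fun j : Fin n => (j : ℕ) < m + 1)
          = insert ⟨m, hm⟩ (Finset.univ.filter (fun j : Fin n => (j : ℕ) < m)) := by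
        ext j
        simp only [Finset.mem_filter, Finset.mem_univ, true_and, Finset.mem_insert, Fin.ext_iff]
        omega
      have hnot : (⟨m, hm⟩ : Fin n) ∉ Finset.univ.filter (fun j : Fin n => (j : ℕ) < m) := by simp
      rw [hset, Finset.sum_insert hnot, Finset.sum_insert hnot]
      have h1 := he ⟨m, hm⟩
      simp only [Fin.lt_def] at h1
      set S := ∑ j ∈ Finset.univ.filter (fun j : Fin n => (j : ℕ) < m), w j * e j
      set T := ∑ j ∈ Finset.univ.filter (fun j : Fin n => (j : ℕ) < m), w j
      have h2 : w ⟨m, hm⟩ * e ⟨m, hm⟩ ≤ w ⟨m, hm⟩ * (R * Real.exp T) :=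
        mul_le_mul_of_nonneg_left (h1.trans ih) (hw _)
      have h3 : w ⟨m, hm⟩ + 1 ≤ Real.exp (w ⟨m, hm⟩) := Real.add_one_le_exp _
      have h4 : 0 ≤ R * Real.exp T := by positivity
      calc R + (w ⟨m, hm⟩ * e ⟨m, hm⟩ + S) ≤ R * Real.exp T * (w ⟨m, hm⟩ + 1) := by linarith
        _ ≤ R * Real.exp T * Real.exp (w ⟨m, hm⟩) := mul_le_mul_of_nonneg_left h3 h4
        _ = R * Real.exp (w ⟨m, hm⟩ + T) := by rw [Real.exp_add]; ring
    · have hset : Finset.univ.filter (fun j : Fin n => (j : ℕ) < m + 1)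
          = Finset.univ.filter (fun j : Fin n => (j : ℕ) < m) := by
        ext j
        have := j.2
        simp only [Finset.mem_filter, Finset.mem_univ, true_and]
        omega
      rw [hset]
      exact ih

/-- Stability of `I - V` for a matrix that is Volterra up to a small upper-triangular part: the
strictly lower part is handled by the discrete Grönwall inequality, and the rest is absorbed. -/
lemma norm_le_of_almost_triangular {n : ℕ} {V : Matrix (Fin n) (Fin n) ℂ} {w : Fin n → ℝ}
    {ε W R : ℝ} (hw : ∀ j, 0 ≤ w j) (hV : ∀ i j, j < i → ‖V i j‖ ≤ w j)
    (hε : ∀ i, ∑ j ∈ Finset.univ.filter (fun j => i ≤ j), ‖V i j‖ ≤ ε)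
    (hW : ∑ j, w j ≤ W) (hsmall : ε * Real.exp W ≤ 1 / 2) {e r : Fin n → ℂ}
    (her : Matrix.mulVec (1 - V) e = r) (hr : ∀ i, ‖r i‖ ≤ R) (i : Fin n) :
    ‖e i‖ ≤ 2 * Real.exp W * R := by
  have : Nonempty (Fin n) := ⟨i⟩
  obtain ⟨p, hp⟩ := Finite.exists_max fun i => ‖e i‖
  have hε0 : 0 ≤ ε := (Finset.sum_nonneg fun j _ => norm_nonneg _).trans (hε i)
  have hR0 : 0 ≤ R := (norm_nonneg _).trans (hr i)
  have key : ∀ i, ‖e i‖ ≤ (R + ε * ‖e p‖)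
      + ∑ j ∈ Finset.univ.filter (fun j => j < i), w j * ‖e j‖ := by
    intro i
    have h1 : e i = r i + ∑ j, V i j * e j := by
      rw [← her, Matrix.sub_mulVec, Matrix.one_mulVec, Pi.sub_apply]
      simp [Matrix.mulVec, dotProduct]
    have h2 : ∑ j, ‖V i j‖ * ‖e j‖
        = ∑ j ∈ Finset.univ.filter (fun j => i ≤ j), ‖V i j‖ * ‖e j‖
          + ∑ j ∈ Finset.univ.filter (fun j => j < i), ‖V i j‖ * ‖e j‖ := by
      rw [← Finset.sum_filter_add_sum_filter_not Finset.univ (fun j => i ≤ j)]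
      simp only [not_le]
    calc ‖e i‖ ≤ ‖r i‖ + ∑ j, ‖V i j‖ * ‖e j‖ := by
          rw [h1]
          refine (norm_add_le _ _).trans (add_le_add le_rfl ((norm_sum_le _ _).trans ?_))
          exact Finset.sum_le_sum fun j _ => norm_mul_le _ _
      _ ≤ R + (ε * ‖e p‖ + ∑ j ∈ Finset.univ.filter (fun j => j < i), w j * ‖e j‖) := by
          rw [h2]
          refine add_le_add (hr i) (add_le_add ?_ ?_)
          · calc _ ≤ ∑ j ∈ Finset.univ.filter (fun j => i ≤ j), ‖V i j‖ * ‖e p‖ :=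
                  Finset.sum_le_sum fun j _ => mul_le_mul_of_nonneg_left (hp j) (norm_nonneg _)
              _ ≤ ε * ‖e p‖ := by
                  rw [← Finset.sum_mul]
                  exact mul_le_mul_of_nonneg_right (hε i) (norm_nonneg _)
          · refine Finset.sum_le_sum fun j hj => ?_
            exact mul_le_mul_of_nonneg_right (hV i j (Finset.mem_filter.1 hj).2) (norm_nonneg _)
      _ = _ := by ring
  have hR' : 0 ≤ R + ε * ‖e p‖ := by positivity
  have h3 := discrete_gronwall hw key p hR'
  have h4 : ∑ j ∈ Finset.univ.filter (fun j : Fin n => (j : ℕ) < p), w j ≤ W :=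
    (Finset.sum_le_sum_of_subset_of_nonneg (Finset.filter_subset _ _) fun j _ _ => hw j).trans hW
  have h5 : ‖e p‖ ≤ (R + ε * ‖e p‖) * Real.exp W :=
    ((key p).trans h3).trans (mul_le_mul_of_nonneg_left (Real.exp_le_exp.2 h4) hR')
  have h6 : ε * Real.exp W * ‖e p‖ ≤ 1 / 2 * ‖e p‖ :=
    mul_le_mul_of_nonneg_right hsmall (norm_nonneg _)
  have h7 := hp i
  nlinarith

lemma isUnit_of_almost_triangular {n : ℕ} {V : Matrix (Fin n) (Fin n) ℂ} {w : Fin n → ℝ}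
    {ε W : ℝ} (hw : ∀ j, 0 ≤ w j) (hV : ∀ i j, j < i → ‖V i j‖ ≤ w j)
    (hε : ∀ i, ∑ j ∈ Finset.univ.filter (fun j => i ≤ j), ‖V i j‖ ≤ ε)
    (hW : ∑ j, w j ≤ W) (hsmall : ε * Real.exp W ≤ 1 / 2) : IsUnit (1 - V) := by
  rw [← Matrix.mulVec_injective_iff_isUnit]
  intro x y hxy
  have h0 : Matrix.mulVec (1 - V) (x - y) = 0 := by
    rw [Matrix.mulVec_sub]; exact sub_eq_zero.2 hxy
  ext i
  have := norm_le_of_almost_triangular (R := 0) hw hV hε hW hsmall h0 (by simp) i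
  rw [mul_zero] at this
  exact sub_eq_zero.1 (norm_le_zero_iff.1 this)

lemma sum_fin_zidx {β : Type*} [AddCommMonoid β] (N : ℕ) (f : ℤ → β) :
    ∑ i : Fin (2 * N + 1), f (zidx N i) = ∑ j ∈ Finset.Icc (-(N : ℤ)) N, f j := by
  refine Finset.sum_bij (fun i _ => zidx N i) ?_ ?_ ?_ ?_
  · intro i _
    have := i.2
    simp only [zidx, Finset.mem_Icc]
    omega
  · intro i _ j _ hij
    simp only [zidx] at hij
    exact Fin.ext (by omega)
  · intro j hj
    rw [Finset.mem_Icc] at hj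
    exact ⟨⟨(j + N).toNat, by omega⟩, Finset.mem_univ _, by simp only [zidx]; omega⟩
  · intro i _
    rfl

lemma sum_exp_neg_abs_le {t : ℝ} (ht : 0 < t) (N : ℕ) :
    ∑ j ∈ Finset.Icc (-(N : ℤ)) N, Real.exp (-t * |(j : ℝ)|) ≤ 1 + 2 / t := by
  have hs := summable_exp_neg_abs_int ht
  have h1 := hs.sum_le_tsum (Finset.Icc (-(N : ℤ)) N) fun j _ => (Real.exp_pos _).le
  have h2 := norm_tsum_sub_sum_le (f := fun j : ℤ => ((Real.exp (-t * |(j : ℝ)|) : ℝ) : ℂ))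
    ht zero_le_one (fun j => by
      rw [Complex.norm_real, Real.norm_of_nonneg (Real.exp_pos _).le, one_mul]) 0
  rw [← Complex.ofReal_tsum] at h2
  simp only [Nat.cast_zero, neg_zero, Finset.Icc_self, Finset.sum_singleton, Int.cast_zero,
    abs_zero, mul_zero, Real.exp_zero, mul_one] at h2
  rw [← Complex.ofReal_sub, Complex.norm_real] at h2
  have h3 := (le_abs_self _).trans h2
  linarith

lemma harmonic_tail_le (N : ℕ) (i : Fin (2 * N + 1)) :
    ∑ j ∈ Finset.univ.filter (fun j => i ≤ j), (1 : ℝ) / ((zidx N j - zidx N i : ℤ) + 1 : ℝ)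
      ≤ 1 + Real.log (2 * N + 1 : ℕ) := by
  refine le_trans ?_ (harmonic_le_one_add_log (2 * N + 1))
  have hH : ((harmonic (2 * N + 1) : ℚ) : ℝ)
      = ∑ m ∈ Finset.range (2 * N + 1), ((m : ℝ) + 1)⁻¹ := by
    rw [harmonic]; push_cast; rfl
  rw [hH]
  have : ∀ j ∈ Finset.univ.filter (fun j => i ≤ j),
      (1 : ℝ) / ((zidx N j - zidx N i : ℤ) + 1 : ℝ)
        = (fun m : ℕ => ((m : ℝ) + 1)⁻¹) ((j : ℕ) - (i : ℕ)) := by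
    intro j hj
    have hj' : (i : ℕ) ≤ j := Fin.le_def.1 (Finset.mem_filter.1 hj).2
    have : (((zidx N j - zidx N i : ℤ)) : ℝ) = (((j : ℕ) - (i : ℕ) : ℕ) : ℝ) := by
      rw [Nat.cast_sub hj']; simp only [zidx]; push_cast; ring
    simp only [this, one_div]
  rw [Finset.sum_congr rfl this]
  rw [← Finset.sum_image (f := fun m : ℕ => ((m : ℝ) + 1)⁻¹)
    (g := fun j : Fin (2 * N + 1) => (j : ℕ) - (i : ℕ))]
  · refine Finset.sum_le_sum_of_subset_of_nonneg ?_ fun m _ _ => by positivity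
    intro m hm
    obtain ⟨j, _, rfl⟩ := Finset.mem_image.1 hm
    have := j.2
    simp only [Finset.mem_range]
    omega
  · intro x hx y hy hxy
    have hx' : (i : ℕ) ≤ x := Fin.le_def.1 (Finset.mem_filter.1 hx).2
    have hy' : (i : ℕ) ≤ y := Fin.le_def.1 (Finset.mem_filter.1 hy).2
    simp only at hxy
    exact Fin.ext (by omega)

lemma abs_deltaM_le_div {m : ℤ} (hm : 0 ≤ m) : |deltaM (-m)| ≤ 2 * (1 / ((m : ℝ) + 1)) := by
  rcases hm.eq_or_lt with rfl | hm
  · simpa using abs_deltaM_le 0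
  · have h := abs_deltaM_neg_le (m := -m) (by omega)
    have hm1 : (1 : ℝ) ≤ m := by exact_mod_cast hm
    rw [Int.cast_neg, abs_neg, abs_of_pos (a := (m : ℝ)) (by linarith)] at h
    refine h.trans ?_
    rw [mul_one_div, div_le_div_iff₀] <;> nlinarith

variable {a b α d : ℝ} {k : ℂ → ℂ → ℂ} {g : ℂ → ℂ} {u : ℝ → ℂ} {L M : ℝ}

lemma SEData.norm_VnSE_le (H : SEData a b α d k g u L M) {h : ℝ} (hh : 0 < h) (N : ℕ)
    (i j : Fin (2 * N + 1)) :
    ‖VnSE a b h N (fun t s => k (t : ℂ) (s : ℂ)) i j‖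
      ≤ M * ((b - a) * sgd ((zidx N j : ℝ) * h)) * h * |deltaM (zidx N i - zidx N j)| := by
  have hba : 0 < b - a := sub_pos.2 H.hab
  simp only [VnSE, Matrix.of_apply, norm_mul, Complex.norm_real, Real.norm_eq_abs]
  rw [deriv_psiSE, abs_of_pos hh, abs_of_nonneg (mul_nonneg hba.le (sgd_nonneg _))]
  have := H.k_bd _ (ofReal_psiSE_mem_DSE H.hd a b ((zidx N i : ℝ) * h)) _
    (ofReal_psiSE_mem_DSE H.hd a b ((zidx N j : ℝ) * h))
  have h0 := sgd_nonneg ((zidx N j : ℝ) * h)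
  have := H.hM
  simp only [tSE]
  gcongr

/-- The matrix `V_n` is Volterra up to an upper triangular part (diagonal included) whose row sums
are `O(h log N)`, because `δ_{-m}` decays like `1/m`. -/
lemma SEData.VnSE_almost_triangular (H : SEData a b α d k g u L M) {h : ℝ} (hh : 0 < h)
    (hh1 : h ≤ 1) (N : ℕ) :
    ∃ w : Fin (2 * N + 1) → ℝ, (∀ j, 0 ≤ w j) ∧
      (∀ i j, j < i → ‖VnSE a b h N (fun t s => k (t : ℂ) (s : ℂ)) i j‖ ≤ w j) ∧
      (∀ i, ∑ j ∈ Finset.univ.filter (fun j => i ≤ j),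
        ‖VnSE a b h N (fun t s => k (t : ℂ) (s : ℂ)) i j‖
          ≤ 2 * M * (b - a) * (h * (1 + Real.log (2 * N + 1 : ℕ)))) ∧
      ∑ j, w j ≤ 6 * M * (b - a) := by
  have hba : 0 < b - a := sub_pos.2 H.hab
  have hM := H.hM
  have hcoef : ∀ j : Fin (2 * N + 1), 0 ≤ M * ((b - a) * sgd ((zidx N j : ℝ) * h)) * h := fun j =>
    mul_nonneg (mul_nonneg hM (mul_nonneg hba.le (sgd_nonneg _))) hh.le
  refine ⟨fun j => 2 * (M * ((b - a) * sgd ((zidx N j : ℝ) * h)) * h), fun j =>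
    mul_nonneg zero_le_two (hcoef j), fun i j _ => ?_, fun i => ?_, ?_⟩
  · refine (H.norm_VnSE_le hh N i j).trans ?_
    simp only [mul_comm (2 : ℝ)]
    exact mul_le_mul_of_nonneg_left (abs_deltaM_le _) (hcoef j)
  · calc _ ≤ ∑ j ∈ Finset.univ.filter (fun j => i ≤ j),
          2 * M * (b - a) * h * (1 / ((zidx N j - zidx N i : ℤ) + 1 : ℝ)) := by
          refine Finset.sum_le_sum fun j hj => (H.norm_VnSE_le hh N i j).trans ?_
          have hj' : (i : ℕ) ≤ j := Fin.le_def.1 (Finset.mem_filter.1 hj).2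
          have hm : 0 ≤ zidx N j - zidx N i := by simp only [zidx]; omega
          have h1 := abs_deltaM_le_div hm
          rw [neg_sub] at h1
          have h2 : M * ((b - a) * sgd ((zidx N j : ℝ) * h)) * h ≤ M * ((b - a) * 1) * h := by
            have := sgd_le_one ((zidx N j : ℝ) * h)
            gcongr
          refine (mul_le_mul h2 h1 (abs_nonneg _) (by positivity)).trans (le_of_eq ?_)
          ring
      _ ≤ _ := by
          rw [← Finset.mul_sum, ← mul_assoc _ h]
          exact mul_le_mul_of_nonneg_left (harmonic_tail_le N i) (by positivity)
  · rw [sum_fin_zidx N fun j : ℤ => 2 * (M * ((b - a) * sgd ((j : ℝ) * h)) * h)]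
    calc _ ≤ ∑ j ∈ Finset.Icc (-(N : ℤ)) N, 2 * M * (b - a) * h * Real.exp (-h * |(j : ℝ)|) := by
          refine Finset.sum_le_sum fun j _ => ?_
          have h1 := sgd_le_exp ((j : ℝ) * h)
          rw [abs_mul, abs_of_pos hh, mul_comm |(j : ℝ)|, ← neg_mul] at h1
          calc _ = 2 * M * (b - a) * h * sgd ((j : ℝ) * h) := by ring
            _ ≤ _ := mul_le_mul_of_nonneg_left h1 (by positivity)
      _ ≤ 2 * M * (b - a) * h * (1 + 2 / h) := by
          rw [← Finset.mul_sum]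
          exact mul_le_mul_of_nonneg_left (sum_exp_neg_abs_le hh N) (by positivity)
      _ = 2 * M * (b - a) * (h + 2) := by field_simp
      _ ≤ 6 * M * (b - a) := by
          have : 0 ≤ M * (b - a) := by positivity
          nlinarith

/-- The Lebesgue constant of truncated Sinc interpolation grows at most like `√N`
(Cauchy–Schwarz, since `∑ S(j,h)(x)²` is bounded uniformly in `x`). -/
lemma exists_sum_abs_sincF_le : ∃ C : ℝ, 0 ≤ C ∧ ∀ (h x : ℝ) (N : ℕ), 0 < h → 1 ≤ N →
    ∑ j ∈ Finset.Icc (-(N : ℤ)) N, |sincF j h x| ≤ C * Real.sqrt N := by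
  have hs : Summable fun j : ℤ => 1 / (1 + |(j : ℝ)|) ^ 2 := by
    simpa using summable_one_div_sq one_pos
  set Z := ∑' j : ℤ, 1 / (1 + |(j : ℝ)|) ^ 2 with hZ
  have hZ0 : 0 ≤ Z := tsum_nonneg fun j => by positivity
  refine ⟨Real.sqrt (27 * Z), Real.sqrt_nonneg _, fun h x N hh hN => ?_⟩
  have hS : ∀ j : ℤ, |sincF j h x| ^ 2 ≤ 9 * (1 / (1 + |((j - round (x / h) : ℤ) : ℝ)|) ^ 2) := by
    intro j
    have h1 := abs_sincF_le_one j hh x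
    have h2 := abs_sub_mul_abs_sincF_le j hh x
    have h3 : |x - j * h| = h * |x / h - j| := by
      rw [← abs_of_pos hh, ← abs_mul, abs_of_pos hh]
      congr 1
      field_simp
    rw [h3, mul_assoc] at h2
    have h4 : |x / h - j| * |sincF j h x| ≤ 1 := by
      by_contra hcon
      push Not at hcon
      nlinarith
    have h5 := abs_sub_round (x / h)
    have h6 : |((j - round (x / h) : ℤ) : ℝ)| ≤ |x / h - j| + 1 / 2 := by
      push_cast
      calc |(j : ℝ) - round (x / h)| = |-(x / h - j) + (x / h - round (x / h))| := by
            congr 1; ring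
        _ ≤ |-(x / h - j)| + |x / h - round (x / h)| := abs_add_le _ _
        _ ≤ _ := by rw [abs_neg]; gcongr
    have h7 : (1 + |((j - round (x / h) : ℤ) : ℝ)|) * |sincF j h x| ≤ 3 := by
      have := abs_nonneg (sincF j h x)
      nlinarith
    have h8 : 0 < 1 + |((j - round (x / h) : ℤ) : ℝ)| := by positivity
    rw [mul_one_div, le_div_iff₀ (by positivity), ← mul_pow]
    calc _ ≤ (3 : ℝ) ^ 2 := by
          refine pow_le_pow_left₀ (by positivity) ?_ 2
          rw [mul_comm]; exact h7
      _ = 9 := by norm_num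
  have hs' : Summable fun j : ℤ => 1 / (1 + |((j - round (x / h) : ℤ) : ℝ)|) ^ 2 :=
    hs.comp_injective (Equiv.subRight (round (x / h))).injective
  have hsum : ∑ j ∈ Finset.Icc (-(N : ℤ)) N, |sincF j h x| ^ 2 ≤ 9 * Z := by
    calc _ ≤ ∑ j ∈ Finset.Icc (-(N : ℤ)) N,
          9 * (1 / (1 + |((j - round (x / h) : ℤ) : ℝ)|) ^ 2) := Finset.sum_le_sum fun j _ => hS j
      _ = 9 * ∑ j ∈ Finset.Icc (-(N : ℤ)) N,
          1 / (1 + |((j - round (x / h) : ℤ) : ℝ)|) ^ 2 := by rw [Finset.mul_sum]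
      _ ≤ 9 * ∑' j : ℤ, 1 / (1 + |((j - round (x / h) : ℤ) : ℝ)|) ^ 2 := by
          gcongr
          exact hs'.sum_le_tsum _ fun j _ => by positivity
      _ = 9 * Z := by
          rw [hZ]
          congr 1
          exact (Equiv.subRight (round (x / h))).tsum_eq fun j : ℤ => 1 / (1 + |(j : ℝ)|) ^ 2
  have hcs := sq_sum_le_card_mul_sum_sq (s := Finset.Icc (-(N : ℤ)) N)
    (f := fun j => |sincF j h x|)
  have hN1 : (1 : ℝ) ≤ N := by exact_mod_cast hN
  have hcard : ((Finset.Icc (-(N : ℤ)) N).card : ℝ) ≤ 3 * N := by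
    rw [Int.card_Icc, show ((N : ℤ) + 1 - -(N : ℤ)).toNat = 2 * N + 1 by omega]
    push_cast
    linarith
  rw [← Real.sqrt_mul (by positivity)]
  refine Real.le_sqrt_of_sq_le (hcs.trans ?_)
  calc _ ≤ (3 * N : ℝ) * (9 * Z) := by gcongr
    _ = 27 * Z * N := by ring

lemma inv_sinh_le {t : ℝ} (ht : 1 ≤ t) : 1 / Real.sinh t ≤ 4 * Real.exp (-t) := by
  have h1 : Real.exp (-t) ≤ Real.exp t / 2 := by
    have h2 := Real.add_one_le_exp t
    have h3 : Real.exp (-t) ≤ 1 := Real.exp_le_one_iff.2 (by linarith)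
    linarith
  have hpos : 0 < Real.exp t := Real.exp_pos t
  have h4 : Real.exp t / 4 ≤ Real.sinh t := by rw [Real.sinh_eq]; linarith
  have h5 : Real.exp t * Real.exp (-t) = 1 := by rw [← Real.exp_add]; simp
  rw [div_le_iff₀ (by linarith)]
  nlinarith [mul_le_mul_of_nonneg_left h4 (Real.exp_pos (-t)).le]

/-! ### Asymptotics of the mesh size -/

lemma hstepSE_pos {α d : ℝ} (hα : 0 < α) (hd : 0 < d) {N : ℕ} (hN : 1 ≤ N) :
    0 < hstepSE α d N := by
  have : (1 : ℝ) ≤ N := by exact_mod_cast hN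
  have := Real.pi_pos
  exact Real.sqrt_pos.2 (by positivity)

lemma hstepSE_eq {α d : ℝ} (hα : 0 < α) (hd : 0 < d) (N : ℕ) :
    hstepSE α d N = Real.sqrt (Real.pi * d / α) / Real.sqrt N := by
  have := Real.pi_pos
  rw [hstepSE, ← div_div, Real.sqrt_div (by positivity)]

/-- With `pi_mul_div_hstepSE`: the mesh size balances the truncation rate `α N h` against the
discretization rate `π d / h`. -/
lemma mul_hstepSE {α d : ℝ} (hα : 0 < α) (hd : 0 < d) {N : ℕ} (hN : 1 ≤ N) :
    α * N * hstepSE α d N = Real.sqrt (Real.pi * d * α * N) := by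
  have hN' : (1 : ℝ) ≤ N := by exact_mod_cast hN
  have hp := Real.pi_pos
  have hn : 0 ≤ α * N := by positivity
  conv_lhs => rw [← Real.sqrt_sq hn]
  rw [hstepSE, ← Real.sqrt_mul (by positivity)]
  congr 1
  field_simp

lemma pi_mul_div_hstepSE {α d : ℝ} (hα : 0 < α) (hd : 0 < d) {N : ℕ} (hN : 1 ≤ N) :
    Real.pi * d / hstepSE α d N = Real.sqrt (Real.pi * d * α * N) := by
  rw [← mul_hstepSE hα hd hN, div_eq_iff (hstepSE_pos hα hd hN).ne', mul_assoc]
  have hN' : (1 : ℝ) ≤ N := by exact_mod_cast hN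
  have hp := Real.pi_pos
  rw [hstepSE, Real.mul_self_sqrt (by positivity)]
  field_simp

/-- The upper triangular part of `V_n` vanishes in the limit. -/
lemma tendsto_hstepSE_log {α d : ℝ} (hα : 0 < α) (hd : 0 < d) :
    Tendsto (fun N : ℕ => hstepSE α d N * (1 + Real.log (2 * N + 1 : ℕ))) atTop (𝓝 0) := by
  set c := Real.sqrt (Real.pi * d / α)
  have hc : 0 ≤ c := Real.sqrt_nonneg _
  have h1 : Tendsto (fun N : ℕ => c * ((N : ℝ) ^ (-(1 / 4) : ℝ) * 9)) atTop (𝓝 0) := by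
    have := ((tendsto_rpow_neg_atTop (by norm_num : (0 : ℝ) < 1 / 4)).comp
      tendsto_natCast_atTop_atTop).mul_const 9
    simpa using this.const_mul c
  refine squeeze_zero' ?_ ?_ h1
  · filter_upwards [eventually_ge_atTop 1] with N hN
    have h0 : 0 ≤ Real.log (2 * N + 1 : ℕ) := Real.log_natCast_nonneg _
    have := (hstepSE_pos hα hd hN).le
    positivity
  · filter_upwards [eventually_ge_atTop 1] with N hN
    have hN' : (1 : ℝ) ≤ N := by exact_mod_cast hN
    have hN0 : (0 : ℝ) < N := by linarith
    rw [hstepSE_eq hα hd, div_mul_eq_mul_div, mul_div_assoc]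
    refine mul_le_mul_of_nonneg_left ?_ hc
    have h3 : Real.log (2 * N + 1 : ℕ) ≤ 2 + 4 * (N : ℝ) ^ (1 / 4 : ℝ) := by
      have h4 : Real.log (2 * N + 1 : ℕ) ≤ Real.log (3 * N) := by
        refine Real.log_le_log (by positivity) ?_
        push_cast
        linarith
      have h5 : Real.log 3 ≤ 2 := by
        have := Real.log_le_sub_one_of_pos (by norm_num : (0 : ℝ) < 3)
        linarith
      have h6 := Real.log_le_rpow_div hN0.le (by norm_num : (0 : ℝ) < 1 / 4)
      rw [Real.log_mul (by norm_num) hN0.ne'] at h4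
      have h7 : (N : ℝ) ^ (1 / 4 : ℝ) / (1 / 4) = 4 * (N : ℝ) ^ (1 / 4 : ℝ) := by ring
      linarith
    have h8 : (1 : ℝ) ≤ (N : ℝ) ^ (1 / 4 : ℝ) := Real.one_le_rpow hN' (by norm_num)
    have h9 : Real.sqrt N = (N : ℝ) ^ (1 / 4 : ℝ) * (N : ℝ) ^ (1 / 4 : ℝ) := by
      rw [← Real.rpow_add hN0, Real.sqrt_eq_rpow]; norm_num
    rw [Real.rpow_neg hN0.le, h9, div_le_iff₀ (by positivity)]
    have : ((N : ℝ) ^ (1 / 4 : ℝ))⁻¹ * 9 * ((N : ℝ) ^ (1 / 4 : ℝ) * (N : ℝ) ^ (1 / 4 : ℝ))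
      = 9 * (N : ℝ) ^ (1 / 4 : ℝ) := by field_simp
    rw [this]
    linarith

end

section

/-! ### Consistency, interpolation error and convergence -/

open MeasureTheory Filter Topology

lemma Jfun_grid {h : ℝ} (hh : 0 < h) (i j : ℤ) : Jfun j h ((i : ℝ) * h) = h * deltaM (i - j) := by
  rw [Jfun, deltaM]
  congr 4
  push_cast
  field_simp

lemma JSEext_psiSE {a b : ℝ} (hab : a < b) (h : ℝ) (j : ℤ) (x : ℝ) :
    JSEext a b h j (psiSE a b x) = Jfun j h x := by
  have := psiSE_mem_Ioo hab x
  rw [JSEext, if_neg (not_le.2 this.1), if_neg (not_le.2 this.2), phiSE_psiSE hab]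

/-- The Nyström solution takes the values of the solution vector at the collocation points. -/
lemma uNSEf_grid {a b h : ℝ} (hab : a < b) (hh : 0 < h) {N : ℕ} {k : ℝ → ℝ → ℂ} {g : ℝ → ℂ}
    {v : Fin (2 * N + 1) → ℂ} (hv : Matrix.mulVec (1 - VnSE a b h N k) v = gnSE a b h N g)
    (i : Fin (2 * N + 1)) : uNSEf a b h N k g v (tSE a b h (zidx N i)) = v i := by
  have h1 := congrFun hv i
  rw [Matrix.sub_mulVec, Matrix.one_mulVec, Pi.sub_apply, gnSE] at h1
  rw [uNSEf, ← h1]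
  have h2 : ∀ j : Fin (2 * N + 1), k (tSE a b h (zidx N i)) (tSE a b h (zidx N j)) * v j
      * ((deriv (psiSE a b) ((zidx N j : ℝ) * h) : ℝ) : ℂ)
      * ((JSEext a b h (zidx N j) (tSE a b h (zidx N i)) : ℝ) : ℂ)
      = VnSE a b h N k i j * v j := by
    intro j
    conv_lhs => rw [tSE, JSEext_psiSE hab, Jfun_grid hh]
    simp only [VnSE, Matrix.of_apply, tSE]
    push_cast
    ring
  rw [Finset.sum_congr rfl fun j _ => h2 j]
  simp [Matrix.mulVec, dotProduct]

variable {a b α d : ℝ} {k : ℂ → ℂ → ℂ} {g : ℂ → ℂ} {u : ℝ → ℂ} {L M : ℝ}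

/-- The residual of the exact solution in the collocation equations: the error of Sinc indefinite
integration on the strip plus the truncation error. -/
lemma SEData.norm_residual_le (H : SEData a b α d k g u L M) {U : ℂ → ℂ} {A : ℝ} (hA : 0 ≤ A)
    (hU : ∀ x : ℝ, U x = u (psiSE a b x))
    (hI : ∀ z ∈ DSE a b d, StripDecay d (fun ω => k z (psiSEC a b ω) * dpsi a b ω * U ω) A 1)
    {h : ℝ} (hh : 0 < h) (hh1 : h ≤ 1) {N : ℕ} (hq : Real.pi * d / h = α * N * h)
    (hq1 : 1 ≤ Real.pi * d / h) (i : Fin (2 * N + 1)) :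
    ‖Matrix.mulVec (1 - VnSE a b h N (fun t s => k (t : ℂ) (s : ℂ)))
        (fun j => u (tSE a b h (zidx N j))) i - g (tSE a b h (zidx N i) : ℝ)‖
      ≤ (8 * A * (2 + Real.pi) / (Real.pi ^ 2 * d) + 4 * A) * Real.exp (-(α * N * h)) := by
  have hπ := Real.pi_pos
  have hd := H.hd
  set x : ℝ := (zidx N i : ℝ) * h with hx
  set F : ℂ → ℂ := fun ω => k (psiSE a b x : ℝ) (psiSEC a b ω) * dpsi a b ω * U ω with hF
  have hFd : StripDecay d F A 1 := hI _ (ofReal_psiSE_mem_DSE H.hd a b x)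
  have hV : ∀ j : Fin (2 * N + 1),
      VnSE a b h N (fun t s => k (t : ℂ) (s : ℂ)) i j * u (tSE a b h (zidx N j))
        = F (((zidx N j : ℝ) * h : ℝ) : ℂ) * ((Jfun (zidx N j) h x : ℝ) : ℂ) := by
    intro j
    rw [hx, Jfun_grid hh]
    simp only [VnSE, Matrix.of_apply, tSE, hF, hU, dpsi_ofReal, psiSEC_ofReal, deriv_psiSE, hx]
    push_cast
    ring
  have hintg : u (psiSE a b x) = g (psiSE a b x : ℝ) + ∫ y in Set.Iic x, F (y : ℝ) := by
    rw [H.u_psi x, psiSEC_ofReal]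
    congr 1
    have h1 := (measurePreserving_add_left volume x).setIntegral_preimage_emb
      (measurableEmbedding_addLeft x) (fun y : ℝ => F (y : ℂ)) (Set.Iic x)
    rw [← h1]
    have h2 : (fun s => x + s) ⁻¹' Set.Iic x = Set.Iic 0 := by
      ext s; simp
    rw [h2]
    refine integral_congr_ae (ae_of_all _ fun s => ?_)
    simp only [hF, Kstrip, hU, psiSEC_ofReal]
  have hres : Matrix.mulVec (1 - VnSE a b h N (fun t s => k (t : ℂ) (s : ℂ)))
        (fun j => u (tSE a b h (zidx N j))) i - g (tSE a b h (zidx N i) : ℝ)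
      = (∫ y in Set.Iic x, F (y : ℝ))
        - ∑ j ∈ Finset.Icc (-(N : ℤ)) N, F (((j : ℝ) * h : ℝ) : ℂ) * ((Jfun j h x : ℝ) : ℂ) := by
    rw [← sum_fin_zidx N fun j : ℤ => F (((j : ℝ) * h : ℝ) : ℂ) * ((Jfun j h x : ℝ) : ℂ),
      Matrix.sub_mulVec, Matrix.one_mulVec, Pi.sub_apply]
    rw [Matrix.mulVec, dotProduct, Finset.sum_congr rfl fun j _ => hV j]
    have : u (tSE a b h (zidx N i)) = u (psiSE a b x) := rfl
    rw [this, hintg, show tSE a b h (zidx N i) = psiSE a b x from rfl]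
    ring
  rw [hres]
  have hquad := hFd.norm_integral_sub_tsum_le H.hd one_pos hh x
  have htrunc := norm_tsum_sub_sum_le (A := A * (2 * h))
    (f := fun j : ℤ => F (((j : ℝ) * h : ℝ) : ℂ) * ((Jfun j h x : ℝ) : ℂ)) hh (by positivity)
    (fun j => by
      rw [norm_mul, Complex.norm_real, Real.norm_eq_abs]
      have h1 := hFd.norm_grid H.hd hh j
      have h2 : |Jfun j h x| ≤ 2 * h := by
        rw [hx, Jfun_grid hh, abs_mul, abs_of_pos hh]
        nlinarith [abs_deltaM_le (zidx N i - j)]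
      rw [one_mul] at h1
      calc _ ≤ A * Real.exp (-h * |(j : ℝ)|) * (2 * h) := by gcongr
        _ = _ := by ring) N
  have hE : Real.exp (-h * N) ≤ Real.exp (-(α * N * h)) := by
    refine Real.exp_le_exp.2 ?_
    have : 0 ≤ (N : ℝ) * h := by positivity
    nlinarith [H.hα1]
  have hs := inv_sinh_le hq1
  rw [hq] at hs
  rw [hq] at hquad
  have hsp : 0 < Real.sinh (α * N * h) := by
    rw [← hq]; exact Real.sinh_pos_iff.2 (by linarith)
  have hquad' : 2 * A * h * (2 + Real.pi) / (1 * Real.pi ^ 2) / (d * Real.sinh (α * N * h))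
      ≤ 8 * A * (2 + Real.pi) / (Real.pi ^ 2 * d) * Real.exp (-(α * N * h)) := by
    calc _ = 2 * A * (2 + Real.pi) / (Real.pi ^ 2 * d) * (h * (1 / Real.sinh (α * N * h))) := by
          field_simp
      _ ≤ 2 * A * (2 + Real.pi) / (Real.pi ^ 2 * d) * (1 * (4 * Real.exp (-(α * N * h)))) := by
          gcongr
      _ = _ := by ring
  have htrunc' : 2 * (A * (2 * h)) / h * Real.exp (-h * N) ≤ 4 * A * Real.exp (-(α * N * h)) := by
    calc _ = 4 * A * Real.exp (-h * N) := by field_simp; ring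
      _ ≤ _ := by gcongr
  calc _ ≤ _ + _ := norm_sub_le_norm_sub_add_norm_sub _ _ _
    _ ≤ _ := add_le_add (hquad.trans hquad') (htrunc.trans htrunc')
    _ = _ := by ring

lemma omA_mem {t : ℝ} (hab : a < b) (ht : t ∈ Set.Icc a b) : |omA a b t| ≤ 1 := by
  have : 0 < b - a := sub_pos.2 hab
  rw [omA, abs_of_nonneg (div_nonneg (by linarith [ht.2]) this.le), div_le_one this]
  linarith [ht.1]

lemma omB_mem {t : ℝ} (hab : a < b) (ht : t ∈ Set.Icc a b) : |omB a b t| ≤ 1 := by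
  have : 0 < b - a := sub_pos.2 hab
  rw [omB, abs_of_nonneg (div_nonneg (by linarith [ht.1]) this.le), div_le_one this]
  linarith [ht.2]

/-- Error of `P_N f` as an approximation of `u` when `f` is within `η` of `u` at the collocation
points. The interpolation error of `u - u(a) ω_a - u(b) ω_b` is controlled on the strip; the
perturbations `u(t_j) - f(t_j)`, `u(a) - f(t_{-N})`, `u(b) - f(t_N)` are multiplied by the Lebesgue
constant `T`. -/
lemma SEData.norm_sub_PNSE_le (H : SEData a b α d k g u L M) {U : ℂ → ℂ} {A : ℝ} (hA : 0 ≤ A)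
    (hU : ∀ x : ℝ, U x = u (psiSE a b x))
    (hD : StripDecay d (fun ζ => U ζ - u a * ((b - psiSEC a b ζ) / (b - a))
      - u b * ((psiSEC a b ζ - a) / (b - a))) A α)
    (hend : ∀ x : ℝ, ‖u (psiSE a b x) - u a‖ ≤ A * Real.exp (α * x) ∧
      ‖u (psiSE a b x) - u b‖ ≤ A * Real.exp (-(α * x)))
    {h : ℝ} (hh : 0 < h) {N : ℕ} (hq : Real.pi * d / h = α * N * h)
    (hq1 : 1 ≤ Real.pi * d / h) {T η : ℝ} (hT : 0 ≤ T) (hη : 0 ≤ η)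
    (hS : ∀ x, ∑ j ∈ Finset.Icc (-(N : ℤ)) N, |sincF j h x| ≤ T) {f : ℝ → ℂ}
    (hf : ∀ j ∈ Finset.Icc (-(N : ℤ)) N, ‖u (tSE a b h j) - f (tSE a b h j)‖ ≤ η)
    {t : ℝ} (ht : t ∈ Set.Icc a b) :
    ‖u t - PNSE a b h N f t‖
      ≤ (8 * A / (Real.pi * α * d) + 2 * A / (α * h)) * Real.exp (-(α * N * h))
        + 2 * (A * Real.exp (-(α * N * h)) + η)
        + (η + 2 * (A * Real.exp (-(α * N * h)) + η)) * T := by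
  have hab := H.hab
  have hα := H.hα
  have hd := H.hd
  have hπ := Real.pi_pos
  set E := Real.exp (-(α * N * h)) with hEdef
  have hE0 : 0 < E := Real.exp_pos _
  have hfa : ‖u a - f (tSE a b h (-(N : ℤ)))‖ ≤ A * E + η := by
    have h1 := (hend ((-(N : ℤ) : ℤ) * h)).1
    have h2 := hf (-(N : ℤ)) (by simp)
    rw [norm_sub_rev] at h1
    refine (norm_sub_le_norm_sub_add_norm_sub _ (u (tSE a b h (-(N : ℤ)))) _).trans
      (add_le_add (h1.trans (le_of_eq ?_)) h2)
    rw [hEdef]; push_cast; congr 2; ring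
  have hfb : ‖u b - f (tSE a b h N)‖ ≤ A * E + η := by
    have h1 := (hend ((N : ℤ) * h)).2
    have h2 := hf N (by simp)
    rw [norm_sub_rev] at h1
    refine (norm_sub_le_norm_sub_add_norm_sub _ (u (tSE a b h N)) _).trans
      (add_le_add (h1.trans (le_of_eq ?_)) h2)
    rw [hEdef]; push_cast; congr 2; ring
  have hρ : 0 ≤ A * E + η := by positivity
  have hx1 : 0 ≤ (8 * A / (Real.pi * α * d) + 2 * A / (α * h)) * E := by positivity
  have hx2 : 0 ≤ (η + 2 * (A * E + η)) * T := by positivity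
  rcases ht.1.eq_or_lt with rfl | hat
  · rw [PNSE, if_pos le_rfl]; linarith
  rcases ht.2.eq_or_lt with rfl | htb
  · rw [PNSE, if_neg (not_le.2 hab), if_pos le_rfl]; linarith
  obtain ⟨x, rfl⟩ := exists_psiSE_eq hab ⟨hat, htb⟩
  rw [PNSE, if_neg (not_le.2 hat), if_neg (not_le.2 htb), phiSE_psiSE hab]
  set F : ℂ → ℂ := fun ζ => U ζ - u a * ((b - psiSEC a b ζ) / (b - a))
      - u b * ((psiSEC a b ζ - a) / (b - a)) with hF
  have hFx : ∀ y : ℝ, F y = u (psiSE a b y) - u a * (omA a b (psiSE a b y) : ℝ)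
      - u b * (omB a b (psiSE a b y) : ℝ) := by
    intro y
    simp only [hF, hU, psiSEC_ofReal, omA, omB]
    push_cast
    rfl
  have hmem : ∀ y, psiSE a b y ∈ Set.Icc a b := fun y => Set.Ioo_subset_Icc_self (psiSE_mem_Ioo hab y)
  have h1 : ‖F x - ∑ j ∈ Finset.Icc (-(N : ℤ)) N, F (((j : ℝ) * h : ℝ) : ℂ) * (sincF j h x : ℝ)‖
      ≤ (8 * A / (Real.pi * α * d) + 2 * A / (α * h)) * E := by
    have hsinc := hD.norm_sub_tsum_sinc_le H.hd hα hh x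
    have htrunc := norm_tsum_sub_sum_le (A := A) (t := α * h)
      (f := fun j : ℤ => F (((j : ℝ) * h : ℝ) : ℂ) * ((sincF j h x : ℝ) : ℂ)) (by positivity) hA
      (fun j => by
        rw [norm_mul, Complex.norm_real, Real.norm_eq_abs]
        have h1 := hD.norm_grid H.hd hh j
        have h2 := abs_sincF_le_one j hh x
        calc _ ≤ A * Real.exp (-(α * h) * |(j : ℝ)|) * 1 :=
              mul_le_mul h1 h2 (abs_nonneg _) (by positivity)
          _ = _ := by ring) N
    have hs := inv_sinh_le hq1
    rw [hq] at hs hsinc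
    have hsp : 0 < Real.sinh (α * N * h) := by
      rw [← hq]; exact Real.sinh_pos_iff.2 (by linarith)
    have hsinc' : 2 * A / (Real.pi * α) / (d * Real.sinh (α * N * h))
        ≤ 8 * A / (Real.pi * α * d) * E := by
      calc _ = 2 * A / (Real.pi * α * d) * (1 / Real.sinh (α * N * h)) := by field_simp
        _ ≤ 2 * A / (Real.pi * α * d) * (4 * E) := by gcongr
        _ = _ := by ring
    have htr : Real.exp (-(α * h) * N) = E := by rw [hEdef]; congr 1; ring
    rw [htr] at htrunc
    calc _ ≤ _ + _ := norm_sub_le_norm_sub_add_norm_sub _ _ _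
      _ ≤ _ := add_le_add (hsinc.trans hsinc') htrunc
      _ = _ := by ring
  set fa := f (tSE a b h (-(N : ℤ)))
  set fb := f (tSE a b h N)
  set G : ℤ → ℂ := fun j => (u (tSE a b h j) - f (tSE a b h j))
    - (u a - fa) * (omA a b (tSE a b h j) : ℝ) - (u b - fb) * (omB a b (tSE a b h j) : ℝ) with hG
  have hGle : ∀ j ∈ Finset.Icc (-(N : ℤ)) N, ‖G j‖ ≤ η + 2 * (A * E + η) := by
    intro j hj
    have h2 : ‖(u a - fa) * ((omA a b (tSE a b h j) : ℝ) : ℂ)‖ ≤ (A * E + η) * 1 := by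
      rw [norm_mul, Complex.norm_real]
      exact mul_le_mul hfa (omA_mem hab (hmem _)) (norm_nonneg _) hρ
    have h3 : ‖(u b - fb) * ((omB a b (tSE a b h j) : ℝ) : ℂ)‖ ≤ (A * E + η) * 1 := by
      rw [norm_mul, Complex.norm_real]
      exact mul_le_mul hfb (omB_mem hab (hmem _)) (norm_nonneg _) hρ
    have h4 := hf j hj
    calc ‖G j‖ ≤ _ := norm_sub_le _ _
      _ ≤ _ := add_le_add (norm_sub_le _ _) le_rfl
      _ ≤ _ := by linarith
  have h2 : ‖(u a - fa) * ((omA a b (psiSE a b x) : ℝ) : ℂ)‖ ≤ (A * E + η) * 1 := by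
    rw [norm_mul, Complex.norm_real]
    exact mul_le_mul hfa (omA_mem hab (hmem _)) (norm_nonneg _) hρ
  have h3 : ‖(u b - fb) * ((omB a b (psiSE a b x) : ℝ) : ℂ)‖ ≤ (A * E + η) * 1 := by
    rw [norm_mul, Complex.norm_real]
    exact mul_le_mul hfb (omB_mem hab (hmem _)) (norm_nonneg _) hρ
  have h4 : ‖∑ j ∈ Finset.Icc (-(N : ℤ)) N, G j * (sincF j h x : ℝ)‖
      ≤ (η + 2 * (A * E + η)) * T := by
    refine (norm_sum_le _ _).trans ?_
    calc _ ≤ ∑ j ∈ Finset.Icc (-(N : ℤ)) N, (η + 2 * (A * E + η)) * |sincF j h x| := by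
          refine Finset.sum_le_sum fun j hj => ?_
          rw [norm_mul, Complex.norm_real, Real.norm_eq_abs]
          exact mul_le_mul_of_nonneg_right (hGle j hj) (abs_nonneg _)
      _ ≤ _ := by
          rw [← Finset.mul_sum]
          exact mul_le_mul_of_nonneg_left (hS x) (by positivity)
  have hsplit : ∑ j ∈ Finset.Icc (-(N : ℤ)) N, (f (tSE a b h j)
        - fa * ((omA a b (tSE a b h j) : ℝ) : ℂ) - fb * ((omB a b (tSE a b h j) : ℝ) : ℂ))
          * ((sincF j h x : ℝ) : ℂ)
      = ∑ j ∈ Finset.Icc (-(N : ℤ)) N, F (((j : ℝ) * h : ℝ) : ℂ) * (sincF j h x : ℝ)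
        - ∑ j ∈ Finset.Icc (-(N : ℤ)) N, G j * (sincF j h x : ℝ) := by
    rw [← Finset.sum_sub_distrib]
    refine Finset.sum_congr rfl fun j _ => ?_
    rw [hFx]
    simp only [hG, tSE]
    ring
  rw [hsplit]
  set S1 := ∑ j ∈ Finset.Icc (-(N : ℤ)) N, F (((j : ℝ) * h : ℝ) : ℂ) * (sincF j h x : ℝ)
  set S2 := ∑ j ∈ Finset.Icc (-(N : ℤ)) N, G j * (sincF j h x : ℝ)
  have hfin : u (psiSE a b x) - (fa * ((omA a b (psiSE a b x) : ℝ) : ℂ)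
      + fb * ((omB a b (psiSE a b x) : ℝ) : ℂ) + (S1 - S2))
      = (F x - S1) + (u a - fa) * ((omA a b (psiSE a b x) : ℝ) : ℂ)
        + (u b - fb) * ((omB a b (psiSE a b x) : ℝ) : ℂ) + S2 := by
    rw [hFx]; ring
  rw [hfin]
  calc _ ≤ _ := norm_add₄_le
    _ ≤ _ := by linarith

end

section

open MeasureTheory Filter Topology

variable {a b α d : ℝ} {k : ℂ → ℂ → ℂ} {g : ℂ → ℂ} {u : ℝ → ℂ} {L M : ℝ}

/-- Invertibility and the error bound under the working hypotheses: stability turns the residual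
bound into a bound on the nodal errors, which `P_N` amplifies by at most `O(√N)`. -/
lemma SEData.convergence (H : SEData a b α d k g u L M) :
    ∃ N₀ : ℕ, 0 < N₀ ∧
      (∀ N : ℕ, N₀ ≤ N →
        IsUnit (1 - VnSE a b (hstepSE α d N) N (fun t s => k (t : ℂ) (s : ℂ)))) ∧
      ∃ C : ℝ, ∀ N : ℕ, N₀ ≤ N → ∀ uvec : Fin (2*N+1) → ℂ,
        Matrix.mulVec (1 - VnSE a b (hstepSE α d N) N (fun t s => k (t : ℂ) (s : ℂ))) uvec
            = gnSE a b (hstepSE α d N) N (fun t => g (t : ℂ)) →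
        ∀ t ∈ Set.Icc a b,
          ‖u t - PNSE a b (hstepSE α d N) N
              (uNSEf a b (hstepSE α d N) N (fun t s => k (t : ℂ) (s : ℂ))
                (fun t => g (t : ℂ)) uvec) t‖
            ≤ C * Real.sqrt N * Real.exp (-Real.sqrt (Real.pi * d * α * N)) := by
  have hα := H.hα
  have hd := H.hd
  have hπ := Real.pi_pos
  have hba : 0 < b - a := sub_pos.2 H.hab
  have hM := H.hM
  obtain ⟨U, A, hA, hU, hD, hI, hend⟩ := H.exists_decay
  obtain ⟨CS, hCS, hS⟩ := exists_sum_abs_sincF_le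
  set W := 6 * M * (b - a) with hW
  set K := 2 * M * (b - a) * Real.exp W with hK
  have hlim := tendsto_hstepSE_log hα hd
  have hlimK : Tendsto (fun N : ℕ => K * (hstepSE α d N * (1 + Real.log (2 * N + 1 : ℕ)))) atTop
      (𝓝 0) := by simpa using hlim.const_mul K
  have hlimh : ∀ᶠ N : ℕ in atTop, hstepSE α d N ≤ 1 ∧ 1 ≤ Real.pi * d / hstepSE α d N := by
    have hc : (0 : ℝ) < min 1 (Real.pi * d) := lt_min one_pos (by positivity)
    filter_upwards [hlim.eventually_lt_const hc, eventually_ge_atTop 1] with N hN hN1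
    have hpos := hstepSE_pos hα hd hN1
    have h0 : 0 ≤ Real.log (2 * N + 1 : ℕ) := Real.log_natCast_nonneg _
    have h1 : hstepSE α d N ≤ min 1 (Real.pi * d) := by nlinarith
    refine ⟨h1.trans (min_le_left _ _), ?_⟩
    rw [le_div_iff₀ hpos, one_mul]
    exact h1.trans (min_le_right _ _)
  obtain ⟨N₁, hN₁⟩ := eventually_atTop.1
    (hlimh.and (hlimK.eventually_le_const (by norm_num : (0 : ℝ) < 1 / 2)))
  have hsmall : ∀ N, N₁ ≤ N →
      2 * M * (b - a) * (hstepSE α d N * (1 + Real.log (2 * N + 1 : ℕ))) * Real.exp W ≤ 1 / 2 := by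
    intro N hN
    refine le_trans (le_of_eq ?_) (hN₁ N hN).2
    rw [hK]; ring
  set Cr := 8 * A * (2 + Real.pi) / (Real.pi ^ 2 * d) + 4 * A with hCr
  set Cη := 2 * Real.exp W * Cr with hCη
  have hCr0 : 0 ≤ Cr := by positivity
  have hCη0 : 0 ≤ Cη := by positivity
  set c := Real.sqrt (Real.pi * d / α) with hc
  have hc0 : 0 < c := Real.sqrt_pos.2 (by positivity)
  refine ⟨max N₁ 1, by positivity, fun N hN => ?_,
    8 * A / (Real.pi * α * d) + 2 * A / (α * c) + 2 * (A + Cη) + (Cη + 2 * (A + Cη)) * CS,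
    fun N hN uvec huvec t ht => ?_⟩
  · have hN1 : 1 ≤ N := (le_max_right _ _).trans hN
    have hNN := (le_max_left _ _).trans hN
    obtain ⟨w, hw, hV, hε, hWs⟩ := H.VnSE_almost_triangular (hstepSE_pos hα hd hN1)
      (hN₁ N hNN).1.1 N
    exact isUnit_of_almost_triangular hw hV hε hWs (hsmall N hNN)
  · have hN1 : 1 ≤ N := (le_max_right _ _).trans hN
    have hNN := (le_max_left _ _).trans hN
    have hsm := hsmall N hNN
    have hN1' : (1 : ℝ) ≤ N := by exact_mod_cast hN1
    have hh := hstepSE_pos hα hd hN1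
    have hstep := hstepSE_eq hα hd N
    have hmul := mul_hstepSE hα hd hN1
    have hq : Real.pi * d / hstepSE α d N = α * N * hstepSE α d N := by
      rw [hmul, pi_mul_div_hstepSE hα hd hN1]
    obtain ⟨hh1, hq1⟩ := (hN₁ N hNN).1
    rw [← hmul]
    set h := hstepSE α d N with hhdef
    obtain ⟨w, hw, hV, hε, hWs⟩ := H.VnSE_almost_triangular hh hh1 N
    set E := Real.exp (-(α * N * h)) with hE
    have hE0 : 0 < E := Real.exp_pos _
    have hsq1 : 1 ≤ Real.sqrt N := Real.one_le_sqrt.2 hN1'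
    have hnode : ∀ i : Fin (2 * N + 1), ‖u (tSE a b h (zidx N i)) - uvec i‖ ≤ Cη * E := by
      intro i
      have h1 := norm_le_of_almost_triangular (R := Cr * E) hw hV hε hWs hsm
        (e := (fun j => u (tSE a b h (zidx N j))) - uvec) rfl (fun i => by
          rw [Matrix.mulVec_sub, huvec, Pi.sub_apply]
          exact H.norm_residual_le hA hU hI hh hh1 hq hq1 i) i
      rw [Pi.sub_apply] at h1
      exact h1.trans (le_of_eq (by rw [hCη]; ring))
    have hf : ∀ j ∈ Finset.Icc (-(N : ℤ)) N, ‖u (tSE a b h j)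
        - uNSEf a b h N (fun t s => k (t : ℂ) (s : ℂ)) (fun t => g (t : ℂ)) uvec (tSE a b h j)‖
          ≤ Cη * E := by
      intro j hj
      rw [Finset.mem_Icc] at hj
      have hi : zidx N ⟨(j + N).toNat, by omega⟩ = j := by simp only [zidx]; omega
      have h1 := hnode ⟨(j + N).toNat, by omega⟩
      rw [← uNSEf_grid H.hab hh huvec ⟨(j + N).toNat, by omega⟩, hi] at h1
      exact h1
    have hfin := H.norm_sub_PNSE_le hA hU hD hend hh hq hq1 (T := CS * Real.sqrt N) (η := Cη * E)
      (by positivity) (by positivity) (fun x => hS h x N hh hN1) hf ht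
    refine hfin.trans ?_
    have hinv : 2 * A / (α * h) = 2 * A / (α * c) * Real.sqrt N := by
      rw [hstep, ← hc]; field_simp
    have hx1 : 8 * A / (Real.pi * α * d) ≤ 8 * A / (Real.pi * α * d) * Real.sqrt N :=
      le_mul_of_one_le_right (by positivity) hsq1
    have hx2 : 2 * (A + Cη) ≤ 2 * (A + Cη) * Real.sqrt N :=
      le_mul_of_one_le_right (by positivity) hsq1
    rw [hinv]
    calc _ = (8 * A / (Real.pi * α * d) + 2 * A / (α * c) * Real.sqrt N + 2 * (A + Cη)
          + (Cη + 2 * (A + Cη)) * CS * Real.sqrt N) * E := by ring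
      _ ≤ (8 * A / (Real.pi * α * d) * Real.sqrt N + 2 * A / (α * c) * Real.sqrt N
          + 2 * (A + Cη) * Real.sqrt N + (Cη + 2 * (A + Cη)) * CS * Real.sqrt N) * E := by
          gcongr
      _ = _ := by ring

end

/-- convergence of Stenger's SE-Sinc-collocation method. -/
theorem SE_Sinc_collocation_convergence
    (a b α d : ℝ) (hab : a < b) (hα : 0 < α) (hα1 : α ≤ 1)
    (hd : 0 < d) (hdpi : d < Real.pi)
    (k : ℂ → ℂ → ℂ) (g : ℂ → ℂ) (u : ℝ → ℂ)
    (hg_an : DifferentiableOn ℂ g (DSE a b d))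
    (hg_bd : ∃ M : ℝ, ∀ z ∈ DSE a b d, ‖g z‖ ≤ M)
    (hk_an1 : ∀ w ∈ DSE a b d ∪ ((fun x : ℝ => (x : ℂ)) '' Set.Icc a b),
      DifferentiableOn ℂ (fun z => k z w) (DSE a b d))
    (hk_bd1 : ∀ w ∈ DSE a b d ∪ ((fun x : ℝ => (x : ℂ)) '' Set.Icc a b),
      ∃ M : ℝ, ∀ z ∈ DSE a b d, ‖k z w‖ ≤ M)
    (hk_an2 : ∀ z ∈ DSE a b d ∪ ((fun x : ℝ => (x : ℂ)) '' Set.Icc a b),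
      DifferentiableOn ℂ (fun w => k z w) (DSE a b d))
    (hk_bd2 : ∀ z ∈ DSE a b d ∪ ((fun x : ℝ => (x : ℂ)) '' Set.Icc a b),
      ∃ M : ℝ, ∀ w ∈ DSE a b d, ‖k z w‖ ≤ M)
    (hg_cont : ContinuousOn (fun t : ℝ => g (t : ℂ)) (Set.Icc a b))
    (hk_cont1 : ∀ s ∈ Set.Icc a b, ContinuousOn (fun t : ℝ => k (t : ℂ) ((s : ℝ) : ℂ)) (Set.Icc a b))
    (hk_cont2 : ∀ t ∈ Set.Icc a b, ContinuousOn (fun s : ℝ => k ((t : ℝ) : ℂ) (s : ℂ)) (Set.Icc a b))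
    (hHolder : ∃ L : ℝ, ∀ z ∈ DSE a b d,
      ‖g z - g (a : ℂ)‖ ≤ L * ‖z - (a : ℂ)‖ ^ α ∧
      ‖g (b : ℂ) - g z‖ ≤ L * ‖(b : ℂ) - z‖ ^ α ∧
      ∀ w ∈ DSE a b d,
        ‖k z w - k (a : ℂ) w‖ ≤ L * ‖z - (a : ℂ)‖ ^ α ∧
        ‖k (b : ℂ) w - k z w‖ ≤ L * ‖(b : ℂ) - z‖ ^ α)
    (hu_cont : ContinuousOn u (Set.Icc a b))
    (hu_eq : ∀ t ∈ Set.Icc a b, u t = g (t : ℂ) + ∫ s in a..t, k (t : ℂ) (s : ℂ) * u s) :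
    ∃ N₀ : ℕ, 0 < N₀ ∧
      (∀ N : ℕ, N₀ ≤ N →
        IsUnit (1 - VnSE a b (hstepSE α d N) N (fun t s => k (t : ℂ) (s : ℂ)))) ∧
      ∃ C : ℝ, ∀ N : ℕ, N₀ ≤ N → ∀ uvec : Fin (2*N+1) → ℂ,
        Matrix.mulVec (1 - VnSE a b (hstepSE α d N) N (fun t s => k (t : ℂ) (s : ℂ))) uvec
            = gnSE a b (hstepSE α d N) N (fun t => g (t : ℂ)) →
        ∀ t ∈ Set.Icc a b,
          ‖u t - PNSE a b (hstepSE α d N) N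
              (uNSEf a b (hstepSE α d N) N (fun t s => k (t : ℂ) (s : ℂ))
                (fun t => g (t : ℂ)) uvec) t‖
            ≤ C * Real.sqrt N * Real.exp (-Real.sqrt (Real.pi * d * α * N)) := by
  obtain ⟨L, hL⟩ := hHolder
  obtain ⟨Mg, hMg⟩ := hg_bd
  obtain ⟨Ma, hMa⟩ := hk_bd2 a (Or.inr ⟨a, Set.left_mem_Icc.2 hab.le, rfl⟩)
  obtain ⟨Mb, hMb⟩ := hk_bd2 b (Or.inr ⟨b, Set.right_mem_Icc.2 hab.le, rfl⟩)
  have hq := cos_half_pos hd hdpi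
  have hba : 0 < b - a := sub_pos.2 hab
  have hL0 : (0 : ℝ) ≤ max L 0 := le_max_right _ _
  have hLz : ∀ z : ℂ, L * ‖z‖ ^ α ≤ max L 0 * ‖z‖ ^ α := fun z => by
    gcongr
    exact le_max_left _ _
  -- `D` is bounded, so the Hölder condition at `a` makes `k` bounded on `D × D`
  have hdiam : ∀ z ∈ DSE a b d, ‖z - (a : ℂ)‖ ≤ (b - a) / Real.cos (d / 2) := by
    rintro _ ⟨ζ, hζ, rfl⟩
    refine (norm_psiSEC_sub_le hab hd hdpi hζ).trans ?_
    exact mul_le_of_le_one_right (by positivity) (Real.sigmoid_le_one _)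
  set B := max L 0 * ((b - a) / Real.cos (d / 2)) ^ α with hB
  have hB0 : 0 ≤ B := by positivity
  have hg0 := abs_nonneg Mg
  have ha0 := abs_nonneg Ma
  have hb0 := abs_nonneg Mb
  have hg1 := le_abs_self Mg
  have ha1 := le_abs_self Ma
  have hb1 := le_abs_self Mb
  have H : SEData a b α d k g u (max L 0) (|Mg| + |Ma| + |Mb| + B) :=
    { hab := hab
      hα := hα
      hα1 := hα1
      hd := hd
      hdpi := hdpi
      hL := hL0
      hM := by positivity
      g_an := hg_an
      g_bd := fun z hz => (hMg z hz).trans (by linarith)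
      k_an1 := fun w hw => hk_an1 w (Or.inl hw)
      k_an2 := fun z hz => hk_an2 z (Or.inl hz)
      k_bd := by
        intro z hz w hw
        have h1 := ((hL z hz).2.2 w hw).1.trans (hLz _)
        have h2 : max L 0 * ‖z - (a : ℂ)‖ ^ α ≤ B := by
          have := hdiam z hz
          rw [hB]
          gcongr
        have h3 := hMa w hw
        have h4 : ‖k z w‖ ≤ ‖k z w - k a w‖ + ‖k a w‖ := by
          simpa using norm_add_le (k z w - k a w) (k a w)
        linarith
      kb_an := hk_an2 b (Or.inr ⟨b, Set.right_mem_Icc.2 hab.le, rfl⟩)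
      kb_bd := fun w hw => (hMb w hw).trans (by linarith)
      g_a := fun z hz => (hL z hz).1.trans (hLz _)
      g_b := fun z hz => (hL z hz).2.1.trans (hLz _)
      k_b := fun z hz w hw => ((hL z hz).2.2 w hw).2.trans (hLz _)
      u_cont := hu_cont
      u_eq := hu_eq }
  exact H.convergence

end

end SincVolterra
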